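/- arXiv:2409.12552 — 2 statements merged into one kernel-verified Lean document; each statement's English description precedes it below -/
import Mathlib

section
/- Let n ≥ 5 and let Ā = A[B_n]/Z(A[B_n]) with canonical projection π : A[B_n] → Ā. For every group endomorphism φ̄ of Ā there exists a group endomorphism φ of A[B_n] such that π ∘ φ = φ̄ ∘ π (i.e., every endomorphism of Ā lifts to an endomorphism of A[B_n]). -/
/-- The defining relators of the Artin group of type `Bₙ`, as elements of the free
group on `n` generators (0-indexed: generator `i` corresponds to `r_{i+1}`). -/
def BnRels (n : ℕ) : Set (FreeGroup (Fin n)) :=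
  {w | (∃ i j : Fin n, (i : ℕ) + 1 = (j : ℕ) ∧ (j : ℕ) + 1 < n ∧
          w = FreeGroup.of i * FreeGroup.of j * FreeGroup.of i *
              (FreeGroup.of j * FreeGroup.of i * FreeGroup.of j)⁻¹) ∨
       (∃ i j : Fin n, (i : ℕ) + 2 = n ∧ (j : ℕ) + 1 = n ∧
          w = FreeGroup.of i * FreeGroup.of j * FreeGroup.of i * FreeGroup.of j *
              (FreeGroup.of j * FreeGroup.of i * FreeGroup.of j * FreeGroup.of i)⁻¹) ∨
       (∃ i j : Fin n, (i : ℕ) + 2 ≤ (j : ℕ) ∧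
          w = FreeGroup.of i * FreeGroup.of j * (FreeGroup.of j * FreeGroup.of i)⁻¹)}

/-- The Artin group `A[Bₙ]` of type `Bₙ`. -/
abbrev ArtinB (n : ℕ) := PresentedGroup (BnRels n)

/-- The standard generator `r_i` (1-indexed, `1 ≤ i ≤ n`). -/
def rB (n i : ℕ) : ArtinB n :=
  if h : i - 1 < n then PresentedGroup.of ⟨i - 1, h⟩ else 1

/-- `ρ_B = r_1 r_2 ⋯ r_n`. -/
def ρB (n : ℕ) : ArtinB n := ((List.range n).map fun i => rB n (i + 1)).prod

/-- `Δ_B = ρ_B ^ n`, the generator of the center. -/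
def ΔB (n : ℕ) : ArtinB n := ρB n ^ n

/-- `t_i` for `i` read modulo `n`: `t_i = r_i` for `1 ≤ i ≤ n-1`,
and `t_0 = ρ_B r_{n-1} ρ_B⁻¹`. -/
def tB (n i : ℕ) : ArtinB n :=
  if i % n = 0 then ρB n * rB n (n - 1) * (ρB n)⁻¹ else rB n (i % n)

/-- `Δ_Y = (t_1⋯t_{n-1})(t_1⋯t_{n-2})⋯(t_1t_2)t_1`, the Garside element of the
parabolic subgroup of type `A_{n-1}`. -/
def ΔY (n : ℕ) : ArtinB n :=
  ((List.range (n - 1)).map fun k =>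
    ((List.range (n - 1 - k)).map fun i => rB n (i + 1)).prod).prod

/-- `ρ_0 = t_1 t_2 ⋯ t_{n-1}`. -/
def ρ₀B (n : ℕ) : ArtinB n := ((List.range (n - 1)).map fun i => rB n (i + 1)).prod

/-- `ρ_1 = t_1⁻¹ t_2⁻¹ ⋯ t_{n-1}⁻¹`. -/
def ρ₁B (n : ℕ) : ArtinB n := ((List.range (n - 1)).map fun i => (rB n (i + 1))⁻¹).prod

/-- `ρ_k` for `k ∈ {0,1}`. -/
def ρkB (n k : ℕ) : ArtinB n := if k = 0 then ρ₀B n else ρ₁B n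

/-- `v_k = ρ_k t_{n-1} ρ_k⁻¹` for `k ∈ {0,1}`. -/
def vB (n k : ℕ) : ArtinB n := ρkB n k * rB n (n - 1) * (ρkB n k)⁻¹

/-- `δ = r_{n-1} r_{n-2} ⋯ r_2 r_1² r_2 ⋯ r_{n-2} r_{n-1}`. -/
def δB (n : ℕ) : ArtinB n :=
  ((List.range (n - 2)).map fun i => rB n (n - 1 - i)).prod * rB n 1 ^ 2 *
  ((List.range (n - 2)).map fun i => rB n (i + 2)).prod

/-- The quotient `Ā = A[Bₙ]/Z(A[Bₙ])`. -/
abbrev AbarB (n : ℕ) := ArtinB n ⧸ Subgroup.center (ArtinB n)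

/-- The canonical projection `π : A[Bₙ] → Ā`. -/
def πB (n : ℕ) : ArtinB n →* AbarB n := QuotientGroup.mk' (Subgroup.center (ArtinB n))

/-- `t̄_i = π(t_i)`. -/
def tbar (n i : ℕ) : AbarB n := πB n (tB n i)

/-- `ρ̄_B = π(ρ_B)`. -/
def ρbar (n : ℕ) : AbarB n := πB n (ρB n)

/-- The composition `conj_x ∘ φ` of an endomorphism with an inner automorphism. -/
def conjComp {G : Type*} [Group G] (x : G) (φ : G →* G) : G →* G :=
  (MulAut.conj x).toMonoidHom.comp φ

/-- Type (1): there are commuting `g, h` with `φ(t_i) = g` for all `0 ≤ i ≤ n-1`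
and `φ(ρ_B) = h`. -/
def IsType1 (n : ℕ) (φ : ArtinB n →* ArtinB n) : Prop :=
  ∃ g h : ArtinB n, g * h = h * g ∧ (∀ i < n, φ (tB n i) = g) ∧ φ (ρB n) = h

/-- Type (2a) with parameters `ε ∈ {1,-1}`, `p q : ℤ`. -/
def IsType2a (n : ℕ) (ε p q : ℤ) (φ : ArtinB n →* ArtinB n) : Prop :=
  (ε = 1 ∨ ε = -1) ∧ (∀ i < n, φ (tB n i) = tB n i ^ ε * ΔB n ^ p) ∧
    φ (ρB n) = ρB n * ΔB n ^ q

/-- Type (2b) with parameters `ε ∈ {1,-1}`, `p q : ℤ`. -/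
def IsType2b (n : ℕ) (ε p q : ℤ) (φ : ArtinB n →* ArtinB n) : Prop :=
  (ε = 1 ∨ ε = -1) ∧ (∀ i < n, φ (tB n i) = tB n (n - i) ^ ε * ΔB n ^ p) ∧
    φ (ρB n) = (ρB n)⁻¹ * ΔB n ^ q

/-- Type (3) with parameters `ε ∈ {1,-1}`, `k ∈ {0,1}`, `p q r s : ℤ`. -/
def IsType3 (n : ℕ) (ε : ℤ) (k : ℕ) (p q r s : ℤ) (φ : ArtinB n →* ArtinB n) : Prop :=
  (ε = 1 ∨ ε = -1) ∧ (k = 0 ∨ k = 1) ∧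
    (∀ i, 1 ≤ i → i ≤ n - 1 → φ (tB n i) = tB n i ^ ε * ΔY n ^ (2 * p) * ΔB n ^ q) ∧
    φ (tB n 0) = vB n k ^ ε * ΔY n ^ (2 * p) * ΔB n ^ q ∧
    φ (ρB n) = ρkB n k * ΔY n ^ (2 * r) * ΔB n ^ s

/-- Commuting elements of a free group are powers of a common element. -/
theorem FreeGroup.exists_zpow_of_commute {α : Type*} {u v : FreeGroup α} (h : Commute u v) :
    ∃ (d : FreeGroup α) (a b : ℤ), u = d ^ a ∧ v = d ^ b := by
  let H : Subgroup (FreeGroup α) := Subgroup.closure {u, v}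
  have hcomm : ∀ x y : H, x * y = y * x := by
    have := Subgroup.isMulCommutative_closure (k := {u, v}) (by
      rintro x (rfl | rfl) y (rfl | rfl)
      exacts [rfl, h, h.symm, rfl])
    exact fun x y => this.is_comm.comm x y
  let e := (IsFreeGroup.toFreeGroup H)
  have hsub : Subsingleton (IsFreeGroup.Generators H) := by
    refine ⟨fun a b => by_contra fun hab => ?_⟩
    classical
    have h1 : (FreeGroup.of a * FreeGroup.of b : FreeGroup (IsFreeGroup.Generators H)) =
        FreeGroup.of b * FreeGroup.of a := by
      have := congrArg e (hcomm (e.symm (.of a)) (e.symm (.of b)))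
      simpa using this
    have h2 := congrArg (FreeGroup.lift fun x => if x = a then Equiv.swap (0 : Fin 3) 1
      else Equiv.swap 1 2) h1
    simp [Ne.symm hab] at h2
    exact absurd h2 (by decide)
  have hcyc : ∃ d : FreeGroup (IsFreeGroup.Generators H), ∀ x, x ∈ Subgroup.zpowers d := by
    rcases isEmpty_or_nonempty (IsFreeGroup.Generators H) with hE | ⟨⟨a⟩⟩
    · exact ⟨1, fun x => by rw [Subsingleton.elim x 1]; exact one_mem _⟩
    · have : Unique (IsFreeGroup.Generators H) := ⟨⟨a⟩, fun b => Subsingleton.elim _ _⟩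
      exact IsCyclic.exists_generator
  obtain ⟨d, hd⟩ := hcyc
  have key : ∀ x (hx : x ∈ H), ∃ a : ℤ, x = ((e.symm d : H) : FreeGroup α) ^ a := by
    intro x hx
    obtain ⟨a, ha⟩ := hd (e ⟨x, hx⟩)
    refine ⟨a, ?_⟩
    have : (⟨x, hx⟩ : H) = e.symm d ^ a := by
      apply e.injective
      simpa using ha.symm
    simpa using congrArg Subtype.val this
  obtain ⟨a, ha⟩ := key u (Subgroup.subset_closure (by simp))
  obtain ⟨b, hb⟩ := key v (Subgroup.subset_closure (by simp))
  exact ⟨_, a, b, ha, hb⟩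

/-- If `v ≠ 1` dies in a torsion-free group, then so does everything commuting with `v`. -/
theorem FreeGroup.map_eq_one_of_commute {α T : Type*} [Group T] [IsMulTorsionFree T]
    (ψ : FreeGroup α →* T) {u v : FreeGroup α} (h : Commute u v) (hv : v ≠ 1) (hψ : ψ v = 1) :
    ψ u = 1 := by
  obtain ⟨d, a, b, rfl, rfl⟩ := FreeGroup.exists_zpow_of_commute h
  have hb : b ≠ 0 := by
    rintro rfl
    simp at hv
  have hd : ψ d = 1 := by
    rw [map_zpow] at hψ
    exact (IsMulTorsionFree.zpow_eq_one_iff_left hb).1 hψ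
  simp [hd]

section BraidAut

open FreeGroup (of)

theorem FreeGroup.mulAut_ext {α : Type*} {f g : MulAut (FreeGroup α)}
    (h : ∀ k, f (of k) = g (of k)) : f = g := by
  have : f.toMonoidHom = g.toMonoidHom := FreeGroup.ext_hom _ _ h
  exact MulEquiv.ext fun x => DFunLike.congr_fun this x

/-- The Artin automorphism `x_{i+1} ↦ x_i`, `x_i ↦ x_i⁻¹ x_{i+1} x_i` of the free group. -/
def braidAut (i : ℕ) : MulAut (FreeGroup ℕ) :=
  MonoidHom.toMulEquiv
    (FreeGroup.lift fun k => if k = i then (of i)⁻¹ * of (i + 1) * of i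
      else if k = i + 1 then of i else of k)
    (FreeGroup.lift fun k => if k = i then of (i + 1)
      else if k = i + 1 then of (i + 1) * of i * (of (i + 1))⁻¹ else of k)
    (by
      ext k
      by_cases h : k = i
      · subst h; simp [mul_assoc]
      · by_cases h' : k = i + 1
        · subst h'; simp
        · simp [h, h'])
    (by
      ext k
      by_cases h : k = i
      · subst h; simp
      · by_cases h' : k = i + 1
        · subst h'; simp [mul_assoc]
        · simp [h, h'])

@[simp] theorem braidAut_of_self (i : ℕ) :
    braidAut i (of i) = (of i)⁻¹ * of (i + 1) * of i := by
  simp [braidAut]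

@[simp] theorem braidAut_of_succ (i : ℕ) : braidAut i (of (i + 1)) = of i := by
  simp [braidAut]

theorem braidAut_of_of_ne {i k : ℕ} (h : k ≠ i) (h' : k ≠ i + 1) :
    braidAut i (of k) = of k := by
  simp [braidAut, h, h']

theorem braidAut_braid (i : ℕ) :
    braidAut i * braidAut (i + 1) * braidAut i =
      braidAut (i + 1) * braidAut i * braidAut (i + 1) := by
  refine FreeGroup.mulAut_ext fun k => ?_
  have h1 : braidAut (i + 1) (of i) = of i := braidAut_of_of_ne (by lia) (by lia)
  have h2 : braidAut i (of (i + 1 + 1)) = of (i + 1 + 1) := braidAut_of_of_ne (by lia) (by lia)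
  by_cases ha : k = i
  · subst ha; simp [h1, h2, mul_assoc]
  by_cases hb : k = i + 1
  · subst hb; simp [h1, h2, mul_assoc]
  by_cases hc : k = i + 1 + 1
  · subst hc; simp [h1, h2]
  simp [braidAut_of_of_ne ha hb, braidAut_of_of_ne hb hc]

theorem braidAut_commute {i j : ℕ} (h : i + 2 ≤ j) : Commute (braidAut i) (braidAut j) := by
  refine FreeGroup.mulAut_ext fun k => ?_
  have h1 : braidAut j (of i) = of i := braidAut_of_of_ne (by lia) (by lia)
  have h2 : braidAut j (of (i + 1)) = of (i + 1) := braidAut_of_of_ne (by lia) (by lia)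
  have h3 : braidAut i (of j) = of j := braidAut_of_of_ne (by lia) (by lia)
  have h4 : braidAut i (of (j + 1)) = of (j + 1) := braidAut_of_of_ne (by lia) (by lia)
  by_cases ha : k = i
  · subst ha; simp [h1, h2]
  by_cases hb : k = i + 1
  · subst hb; simp [h1, h2]
  by_cases hc : k = j
  · subst hc; simp [h3, h4]
  by_cases hd : k = j + 1
  · subst hd; simp [h3, h4]
  simp [braidAut_of_of_ne ha hb, braidAut_of_of_ne hc hd]

/-- The endomorphism of the free group killing the generators `x_i` with `i > m`. -/
def truncHom (m : ℕ) : FreeGroup ℕ →* FreeGroup ℕ :=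
  FreeGroup.lift fun k => if k ≤ m then of k else 1

theorem truncHom_of_le {m k : ℕ} (h : k ≤ m) : truncHom m (of k) = of k := by
  simp [truncHom, h]

theorem truncHom_of_lt {m k : ℕ} (h : m < k) : truncHom m (of k) = 1 := by
  simp [truncHom, h]

theorem truncHom_braidAut {m j : ℕ} (h : j < m) (x : FreeGroup ℕ) :
    truncHom m (braidAut j x) = braidAut j (truncHom m x) := by
  suffices (truncHom m).comp (braidAut j).toMonoidHom =
      (braidAut j).toMonoidHom.comp (truncHom m) from DFunLike.congr_fun this x
  refine FreeGroup.ext_hom _ _ fun k => ?_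
  have h1 := truncHom_of_le h.le
  have h2 := truncHom_of_le (show j + 1 ≤ m from h)
  by_cases ha : k = j
  · subst ha; simp [h1, h2]
  by_cases hb : k = j + 1
  · subst hb; simp [h1, h2]
  rcases le_or_gt k m with hk | hk
  · simp [braidAut_of_of_ne ha hb, truncHom_of_le hk]
  · simp [braidAut_of_of_ne ha hb, truncHom_of_lt hk]

theorem truncHom_braidAut_sq (m : ℕ) (x : FreeGroup ℕ) :
    truncHom m ((braidAut m ^ 2) x) = truncHom m x := by
  suffices (truncHom m).comp (braidAut m ^ 2).toMonoidHom = truncHom m from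
    DFunLike.congr_fun this x
  refine FreeGroup.ext_hom _ _ fun k => ?_
  have h1 := truncHom_of_le le_rfl (m := m)
  have h2 := truncHom_of_lt (Nat.lt_succ_self m)
  by_cases ha : k = m
  · subst ha; simp [h1, h2, pow_two]
  by_cases hb : k = m + 1
  · subst hb; simp [h2, pow_two]
  simp [braidAut_of_of_ne ha hb, pow_two]

/-- The product `x_{k-1} ⋯ x_1 x_0`. -/
def descProd : ℕ → FreeGroup ℕ
  | 0 => 1
  | k + 1 => of k * descProd k

theorem braidAut_descProd_of_le {j k : ℕ} (h : k ≤ j) :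
    braidAut j (descProd k) = descProd k := by
  induction k with
  | zero => simp [descProd]
  | succ k ih =>
    rw [descProd, map_mul, ih (by lia), braidAut_of_of_ne (by lia) (by lia)]

theorem braidAut_descProd {j k : ℕ} (h : j + 1 < k) :
    braidAut j (descProd k) = descProd k := by
  induction k with
  | zero => simp at h
  | succ k ih =>
    rcases (show j + 1 < k ∨ k = j + 1 by lia) with h' | rfl
    · rw [descProd, map_mul, ih h', braidAut_of_of_ne (by lia) (by lia)]
    · simp [descProd, braidAut_descProd_of_le, mul_assoc]

theorem truncHom_descProd {m k : ℕ} (h : k ≤ m + 1) :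
    truncHom m (descProd k) = descProd k := by
  induction k with
  | zero => simp [descProd]
  | succ k ih => rw [descProd, map_mul, ih (by lia), truncHom_of_le (by lia)]

end BraidAut

section BraidSystem

open FreeGroup (of)

variable {G : Type*} [Group G]

/-- `σ_0, …, σ_{m-1}` satisfy the braid relations. -/
structure IsBraidSystem (m : ℕ) (σ : ℕ → G) : Prop where
  braid : ∀ i, i + 1 < m → σ i * σ (i + 1) * σ i = σ (i + 1) * σ i * σ (i + 1)
  commute : ∀ i j, i + 2 ≤ j → j < m → Commute (σ i) (σ j)

/-- `σ_0, …, σ_{m-1}, ρ` satisfy the relations of the Artin group of type `B`. -/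
structure IsTypeBSystem (m : ℕ) (σ : ℕ → G) (ρ : G) : Prop extends IsBraidSystem m σ where
  commute_last : ∀ i, i + 1 < m → Commute (σ i) ρ
  four : ∀ i, i + 1 = m → σ i * ρ * σ i * ρ = ρ * σ i * ρ * σ i

theorem IsBraidSystem.mono {m k : ℕ} {σ : ℕ → G} (h : IsBraidSystem m σ) (hk : k ≤ m) :
    IsBraidSystem k σ :=
  ⟨fun i hi => h.braid i (by lia), fun i j hij hj => h.commute i j hij (by lia)⟩

theorem IsBraidSystem.isTypeBSystem_sq {m : ℕ} {σ : ℕ → G} (h : IsBraidSystem (m + 1) σ) :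
    IsTypeBSystem m σ (σ m ^ 2) where
  toIsBraidSystem := h.mono m.le_succ
  commute_last i hi := (h.commute i m hi m.lt_succ_self).pow_right 2
  four := by
    rintro i rfl
    have hb := h.braid i (by lia)
    generalize σ i = s at *
    generalize σ (i + 1) = t at *
    have h1 : s * (t * t) * s * t = t * (s * (t * t) * s) := by
      calc s * (t * t) * s * t = s * t * (t * s * t) := by group
        _ = s * t * s * t * s := by rw [← hb]; group
        _ = t * (s * (t * t) * s) := by rw [hb]; simp only [mul_assoc]
    rw [pow_two]
    calc s * (t * t) * s * (t * t) = (s * (t * t) * s * t) * t := by simp only [mul_assoc]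
      _ = t * (s * (t * t) * s * t) := (congrArg (· * t) h1).trans (by simp only [mul_assoc])
      _ = t * t * s * (t * t) * s := by rw [h1]; simp only [mul_assoc]

/-- The product `σ_i σ_{i+1} ⋯ σ_{m-1}`. -/
def ascProd (σ : ℕ → G) (m i : ℕ) : G := ((List.range' i (m - i)).map σ).prod

@[simp] theorem ascProd_self (σ : ℕ → G) (m : ℕ) : ascProd σ m m = 1 := by simp [ascProd]

theorem ascProd_of_lt (σ : ℕ → G) {m i : ℕ} (h : i < m) :
    ascProd σ m i = σ i * ascProd σ m (i + 1) := by
  obtain ⟨d, rfl⟩ : ∃ d, m = i + 1 + d := ⟨m - (i + 1), by lia⟩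
  rw [ascProd, ascProd, show i + 1 + d - i = d + 1 by lia, List.range'_succ]
  simp

theorem ascProd_induction {m : ℕ} {p : ℕ → Prop} (self : p m)
    (step : ∀ i, i < m → p (i + 1) → p i) {i : ℕ} (hi : i ≤ m) : p i :=
  Nat.decreasingInduction (motive := fun k _ => p k) (fun k hk => step k hk) self hi

theorem ascProd_mem {σ : ℕ → G} {m i : ℕ} (hi : i ≤ m) :
    ascProd σ m i ∈ Subgroup.closure (σ '' Set.Iio m) := by
  refine ascProd_induction (p := fun i => ascProd σ m i ∈ Subgroup.closure (σ '' Set.Iio m))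
    (by simp) (fun i hi ih => ?_) hi
  rw [ascProd_of_lt σ hi]
  exact mul_mem (Subgroup.subset_closure ⟨i, hi, rfl⟩) ih

theorem IsBraidSystem.commute_ascProd {m : ℕ} {σ : ℕ → G} (h : IsBraidSystem m σ) {j i : ℕ}
    (hj : j + 1 < i) (hi : i ≤ m) : Commute (σ j) (ascProd σ m i) := by
  refine ascProd_induction (p := fun i => j + 1 < i → Commute (σ j) (ascProd σ m i))
    (by simp) (fun i hi ih hj => ?_) hi hj
  rw [ascProd_of_lt σ hi]
  exact (h.commute j i (by lia) hi).mul_right (ih (by lia))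

theorem IsBraidSystem.mul_ascProd {m : ℕ} {σ : ℕ → G} (h : IsBraidSystem m σ) {j i : ℕ}
    (hj : i ≤ j) (hm : j + 1 < m) : σ (j + 1) * ascProd σ m i = ascProd σ m i * σ j := by
  refine ascProd_induction
    (p := fun i => i ≤ j → σ (j + 1) * ascProd σ m i = ascProd σ m i * σ j)
    (by lia) (fun i hi ih hj => ?_) (show i ≤ m by lia) hj
  rcases hj.lt_or_eq with hj | rfl
  · rw [ascProd_of_lt σ hi, ← mul_assoc, ← (h.commute i (j + 1) (by lia) hm).eq, mul_assoc,
      ih hj, mul_assoc]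
  · have hc := h.commute_ascProd (show i + 1 < i + 2 by lia) hm
    rw [ascProd_of_lt σ hi, ascProd_of_lt σ hm]
    calc _ = (σ (i + 1) * σ i * σ (i + 1)) * ascProd σ m (i + 1 + 1) := by group
      _ = σ i * σ (i + 1) * (σ i * ascProd σ m (i + 1 + 1)) := by rw [← h.braid i hm]; group
      _ = _ := by rw [hc.eq]; group

/-- The elements `a_i = (σ_i ⋯ σ_{m-1}) ρ (σ_i ⋯ σ_{m-1})⁻¹` for `i ≤ m`, extended by `1`. -/
def conjPt (σ : ℕ → G) (ρ : G) (m i : ℕ) : G :=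
  if i ≤ m then ascProd σ m i * ρ * (ascProd σ m i)⁻¹ else 1

theorem conjPt_self (σ : ℕ → G) (ρ : G) (m : ℕ) : conjPt σ ρ m m = ρ := by simp [conjPt]

theorem conjPt_of_lt (σ : ℕ → G) (ρ : G) {m i : ℕ} (h : i < m) :
    conjPt σ ρ m i = σ i * conjPt σ ρ m (i + 1) * (σ i)⁻¹ := by
  rw [conjPt, conjPt, if_pos h.le, if_pos (Nat.succ_le_of_lt h), ascProd_of_lt σ h]
  group

theorem conjPt_of_gt (σ : ℕ → G) (ρ : G) {m i : ℕ} (h : m < i) : conjPt σ ρ m i = 1 := by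
  simp [conjPt, h]

variable {m : ℕ} {σ : ℕ → G} {ρ : G}

theorem IsTypeBSystem.commute_conjPt_gt (h : IsTypeBSystem m σ ρ) {j i : ℕ} (hj : j + 1 < i) :
    Commute (σ j) (conjPt σ ρ m i) := by
  rcases le_or_gt i m with hi | hi
  · have h1 := h.commute_ascProd hj hi
    have h2 := h.commute_last j (by lia)
    rw [conjPt, if_pos hi]
    exact (h1.mul_right h2).mul_right h1.inv_right
  · rw [conjPt_of_gt σ ρ hi]
    exact Commute.one_right _

theorem IsTypeBSystem.commute_conjPt_lt (h : IsTypeBSystem m σ ρ) {j i : ℕ} (hi : i < j)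
    (hj : j < m) : Commute (σ j) (conjPt σ ρ m i) := by
  obtain ⟨j, rfl⟩ : ∃ k, j = k + 1 := ⟨j - 1, by lia⟩
  have h1 : SemiconjBy (ascProd σ m i) (σ j) (σ (j + 1)) := (h.mul_ascProd (by lia) hj).symm
  have h2 : SemiconjBy ρ (σ j) (σ j) := (h.commute_last j hj).symm
  rw [conjPt, if_pos (by lia)]
  exact ((h1.mul_left h2).mul_left h1.inv_symm_left).symm

theorem IsTypeBSystem.four_conjPt (h : IsTypeBSystem m σ ρ) {j : ℕ} (hj : j < m) :
    σ j * conjPt σ ρ m (j + 1) * σ j * conjPt σ ρ m (j + 1) =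
      conjPt σ ρ m (j + 1) * σ j * conjPt σ ρ m (j + 1) * σ j := by
  obtain ⟨m, rfl⟩ : ∃ k, m = k + 1 := ⟨m - 1, by lia⟩
  refine ascProd_induction (m := m) (p := fun j =>
    σ j * conjPt σ ρ (m + 1) (j + 1) * σ j * conjPt σ ρ (m + 1) (j + 1) =
      conjPt σ ρ (m + 1) (j + 1) * σ j * conjPt σ ρ (m + 1) (j + 1) * σ j) ?_ ?_ (by lia)
  · rw [conjPt_self]
    exact h.four m rfl
  · intro i hi ih
    have hb := h.braid i (by lia)
    have hc := h.commute_conjPt_gt (show i + 1 < i + 1 + 1 by lia)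
    rw [conjPt_of_lt σ ρ (show i + 1 < m + 1 by lia)]
    generalize conjPt σ ρ (m + 1) (i + 1 + 1) = b at *
    generalize σ (i + 1) = t at *
    generalize σ i = s at *
    have h1 : s = (t * s) * t * (t * s)⁻¹ := by
      rw [eq_mul_inv_iff_mul_eq, ← mul_assoc, hb]
    have h2 : t * b * t⁻¹ = (t * s) * b * (t * s)⁻¹ := by
      rw [mul_assoc t s b, hc.eq]; group
    rw [h2]
    generalize t * s = g at *
    subst h1
    calc _ = g * (t * b * t * b) * g⁻¹ := by group
      _ = _ := by rw [ih]; group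

/-- The homomorphism `x_i ↦ a_i`, where `a_i = 1` for `i > m`. -/
def pointHom (σ : ℕ → G) (ρ : G) (m : ℕ) : FreeGroup ℕ →* G :=
  FreeGroup.lift (conjPt σ ρ m)

theorem pointHom_of (σ : ℕ → G) (ρ : G) (m i : ℕ) :
    pointHom σ ρ m (of i) = conjPt σ ρ m i := by simp [pointHom]

theorem pointHom_truncHom (σ : ℕ → G) (ρ : G) (m : ℕ) (x : FreeGroup ℕ) :
    pointHom σ ρ m (truncHom m x) = pointHom σ ρ m x := by
  suffices (pointHom σ ρ m).comp (truncHom m) = pointHom σ ρ m from DFunLike.congr_fun this x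
  refine FreeGroup.ext_hom _ _ fun k => ?_
  rcases le_or_gt k m with hk | hk
  · simp [truncHom_of_le hk]
  · simp [truncHom_of_lt hk, pointHom_of, conjPt_of_gt σ ρ hk]

theorem IsTypeBSystem.pointHom_braidAut (h : IsTypeBSystem m σ ρ) {j : ℕ} (hj : j < m)
    (x : FreeGroup ℕ) : pointHom σ ρ m (braidAut j x) = σ j * pointHom σ ρ m x * (σ j)⁻¹ := by
  suffices (pointHom σ ρ m).comp (braidAut j).toMonoidHom =
      (MulAut.conj (σ j)).toMonoidHom.comp (pointHom σ ρ m) by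
    simpa using DFunLike.congr_fun this x
  refine FreeGroup.ext_hom _ _ fun k => ?_
  by_cases ha : k = j
  · subst ha
    have h4 := h.four_conjPt hj
    simp only [MonoidHom.comp_apply, MulEquiv.coe_toMonoidHom, braidAut_of_self, map_mul, map_inv,
      pointHom_of, MulAut.conj_apply, conjPt_of_lt σ ρ hj]
    rw [eq_mul_inv_iff_mul_eq, mul_assoc, mul_assoc, inv_mul_eq_iff_eq_mul]
    generalize conjPt σ ρ m (k + 1) = b at *
    calc _ = b * σ k * b * σ k * (σ k)⁻¹ := by group
      _ = _ := by rw [← h4]; group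
  by_cases hb : k = j + 1
  · subst hb
    simp [pointHom_of, conjPt_of_lt σ ρ hj]
  have hc : Commute (σ j) (conjPt σ ρ m k) := by
    rcases lt_or_gt_of_ne ha with hk | hk
    · exact h.commute_conjPt_lt hk hj
    · exact h.commute_conjPt_gt (by lia)
  simp [braidAut_of_of_ne ha hb, pointHom_of, hc.eq]

section Faithful

variable {f : G →* MulAut (FreeGroup ℕ)}

theorem IsTypeBSystem.pointHom_map (h : IsTypeBSystem m σ ρ)
    (hf : ∀ i < m, f (σ i) = braidAut i) {g : G}
    (hg : g ∈ Subgroup.closure (σ '' Set.Iio m)) (x : FreeGroup ℕ) :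
    pointHom σ ρ m (f g x) = g * pointHom σ ρ m x * g⁻¹ := by
  induction hg using Subgroup.closure_induction generalizing x with
  | mem g hg =>
    obtain ⟨j, hj, rfl⟩ := hg
    rw [hf j hj, h.pointHom_braidAut hj]
  | one => simp
  | mul g k _ _ hg hk => simp [hg, hk, mul_assoc]
  | inv g _ hg =>
    have := hg ((f g)⁻¹ x)
    rw [MulAut.apply_inv_self] at this
    rw [map_inv, this]
    group

theorem truncHom_map {m : ℕ} (hf : ∀ i < m, f (σ i) = braidAut i) {g : G}
    (hg : g ∈ Subgroup.closure (σ '' Set.Iio m)) (x : FreeGroup ℕ) :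
    truncHom m (f g x) = f g (truncHom m x) := by
  induction hg using Subgroup.closure_induction generalizing x with
  | mem g hg =>
    obtain ⟨j, hj, rfl⟩ := hg
    rw [hf j hj, truncHom_braidAut hj]
  | one => simp
  | mul g k _ _ hg hk => simp [hg, hk]
  | inv g _ hg =>
    apply (f g).injective
    rw [← hg, map_inv, MulAut.apply_inv_self, MulAut.apply_inv_self]

theorem map_closure_fixed {m : ℕ} (hf : ∀ i < m, f (σ i) = braidAut i) {g : G}
    (hg : g ∈ Subgroup.closure (σ '' Set.Iio m)) {x : FreeGroup ℕ}
    (hx : ∀ i < m, braidAut i x = x) : f g x = x := by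
  induction hg using Subgroup.closure_induction with
  | mem g hg =>
    obtain ⟨j, hj, rfl⟩ := hg
    rw [hf j hj, hx j hj]
  | one => simp
  | mul g k _ _ hg hk => simp [hg, hk]
  | inv g _ hg =>
    apply (f g).injective
    rw [map_inv, MulAut.apply_inv_self, hg]

theorem map_closure_of_gt {m : ℕ} (hf : ∀ i < m, f (σ i) = braidAut i) {g : G}
    (hg : g ∈ Subgroup.closure (σ '' Set.Iio m)) {k : ℕ} (hk : m < k) :
    f g (of k) = of k :=
  map_closure_fixed hf hg fun _ _ => braidAut_of_of_ne (by lia) (by lia)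

theorem map_ascProd_of_last {m : ℕ} (hf : ∀ i < m, f (σ i) = braidAut i) {i : ℕ}
    (hi : i ≤ m) : f (ascProd σ m i) (of m) = of i := by
  refine ascProd_induction (p := fun i => f (ascProd σ m i) (of m) = of i)
    (by simp) (fun i hi ih => ?_) hi
  simp [ascProd_of_lt σ hi, ih, hf i hi]

/-- Elements of the subgroup generated by `σ_0, …, σ_{m-1}, ρ` split as a product of point pushes
and an element of the subgroup generated by `σ_0, …, σ_{m-1}`. -/
theorem IsTypeBSystem.exists_decomp (h : IsTypeBSystem m σ ρ)
    (hf : ∀ i < m, f (σ i) = braidAut i) {g : G}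
    (hg : g ∈ Subgroup.closure (insert ρ (σ '' Set.Iio m))) :
    ∃ (w : FreeGroup ℕ) (b : G), b ∈ Subgroup.closure (σ '' Set.Iio m) ∧
      g = pointHom σ ρ m w * b := by
  induction hg using Subgroup.closure_induction with
  | mem g hg =>
    rcases hg with rfl | hg
    · exact ⟨of m, 1, one_mem _, by simp [pointHom_of, conjPt_self]⟩
    · exact ⟨1, g, Subgroup.subset_closure hg, by simp⟩
  | one => exact ⟨1, 1, one_mem _, by simp⟩
  | mul g k _ _ hg hk =>
    obtain ⟨w, b, hb, rfl⟩ := hg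
    obtain ⟨v, c, hc, rfl⟩ := hk
    refine ⟨w * f b v, b * c, mul_mem hb hc, ?_⟩
    rw [map_mul, h.pointHom_map hf hb]
    group
  | inv g _ hg =>
    obtain ⟨w, b, hb, rfl⟩ := hg
    refine ⟨f b⁻¹ w⁻¹, b⁻¹, inv_mem hb, ?_⟩
    rw [h.pointHom_map hf (inv_mem hb), map_inv]
    group

theorem truncHom_map_pointHom (hf : ∀ i < m, f (σ i) = braidAut i)
    (hρ : f ρ = braidAut m ^ 2) (w x : FreeGroup ℕ) :
    truncHom m (f (pointHom σ ρ m w) x) = truncHom m x := by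
  induction w using FreeGroup.induction_on generalizing x with
  | C1 => simp
  | of i =>
    rcases le_or_gt i m with hi | hi
    · have hmem := ascProd_mem (σ := σ) hi
      rw [pointHom_of, conjPt, if_pos hi, map_mul, map_mul, hρ, MulAut.mul_apply, MulAut.mul_apply,
        truncHom_map hf hmem, truncHom_braidAut_sq, truncHom_map hf (inv_mem hmem), map_inv,
        MulAut.apply_inv_self]
    · simp [pointHom_of, conjPt_of_gt σ ρ hi]
  | inv_of i hi =>
    rw [map_inv, map_inv, ← hi, MulAut.apply_inv_self]
  | mul v w hv hw => rw [map_mul, map_mul, MulAut.mul_apply, hv, hw]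

theorem exists_map_pointHom_eq (hf : ∀ i < m, f (σ i) = braidAut i)
    (hρ : f ρ = braidAut m ^ 2) (w : FreeGroup ℕ) :
    ∃ c, f (pointHom σ ρ m w) (of (m + 1)) = c * of (m + 1) * c⁻¹ ∧
      truncHom m c = (truncHom m w)⁻¹ := by
  induction w using FreeGroup.induction_on with
  | C1 => exact ⟨1, by simp⟩
  | of i =>
    rcases le_or_gt i m with hi | hi
    · refine ⟨(of i)⁻¹, ?_, by simp⟩
      have hmem := ascProd_mem (σ := σ) hi
      have h1 : f (ascProd σ m i)⁻¹ (of (m + 1)) = of (m + 1) :=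
        map_closure_of_gt hf (inv_mem hmem) m.lt_succ_self
      rw [pointHom_of, conjPt, if_pos hi, map_mul, map_mul, hρ, MulAut.mul_apply, MulAut.mul_apply,
        h1]
      simp [pow_two, map_ascProd_of_last hf hi, map_closure_of_gt hf hmem]
    · exact ⟨1, by simp [pointHom_of, conjPt_of_gt σ ρ hi, truncHom_of_lt hi]⟩
  | inv_of i hi =>
    obtain ⟨c, hc, hc'⟩ := hi
    have hq := truncHom_map_pointHom hf hρ (of i)⁻¹ c
    refine ⟨(f (pointHom σ ρ m (of i)⁻¹) c)⁻¹, ?_, by rw [map_inv, hq, hc', map_inv]⟩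
    rw [map_inv, map_inv] at *
    apply (f (pointHom σ ρ m (of i))).injective
    simp [hc, mul_assoc]
  | mul v w hv hw =>
    obtain ⟨c, hc, hc'⟩ := hv
    obtain ⟨d, hd, hd'⟩ := hw
    refine ⟨f (pointHom σ ρ m v) d * c, ?_, ?_⟩
    · simp [hc, hd, mul_assoc]
    · rw [map_mul, truncHom_map_pointHom hf hρ, hc', hd', map_mul, mul_inv_rev]

theorem truncHom_eq_one_of_map_pointHom (hf : ∀ i < m, f (σ i) = braidAut i)
    (hρ : f ρ = braidAut m ^ 2) {w : FreeGroup ℕ}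
    (hw : f (pointHom σ ρ m w) (of (m + 1)) = of (m + 1)) : truncHom m w = 1 := by
  obtain ⟨c, hc, hc'⟩ := exists_map_pointHom_eq hf hρ w
  have h2 : truncHom m c = 1 :=
    FreeGroup.map_eq_one_of_commute _ (mul_inv_eq_iff_eq_mul.1 (hc.symm.trans hw))
      (FreeGroup.of_ne_one _) (truncHom_of_lt m.lt_succ_self)
  exact inv_eq_one.1 (hc'.symm.trans h2)

/-- If `f` is faithful on the subgroup generated by `σ_0, …, σ_{m-1}`, then it is faithful on
the subgroup generated by `σ_0, …, σ_{m-1}, ρ`. -/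
theorem IsTypeBSystem.eq_one_of_map_eq_one (h : IsTypeBSystem m σ ρ)
    (hf : ∀ i < m, f (σ i) = braidAut i)
    (hρ : f ρ = braidAut m ^ 2)
    (hfaith : ∀ g ∈ Subgroup.closure (σ '' Set.Iio m), f g = 1 → g = 1) {g : G}
    (hg : g ∈ Subgroup.closure (insert ρ (σ '' Set.Iio m))) (hfg : f g = 1) : g = 1 := by
  obtain ⟨w, b, hb, rfl⟩ := h.exists_decomp hf hg
  have h1 : f (pointHom σ ρ m w) (of (m + 1)) = of (m + 1) := by
    have := DFunLike.congr_fun hfg (of (m + 1))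
    rwa [map_mul, MulAut.mul_apply, map_closure_of_gt hf hb m.lt_succ_self] at this
  have h3 : pointHom σ ρ m w = 1 := by
    rw [← pointHom_truncHom, truncHom_eq_one_of_map_pointHom hf hρ h1, map_one]
  rw [h3, one_mul] at hfg ⊢
  exact hfaith b hb hfg

end Faithful

end BraidSystem

section BraidFaithful

open FreeGroup (of)

variable {G : Type*} [Group G] {m : ℕ} {σ : ℕ → G} {f : G →* MulAut (FreeGroup ℕ)}

theorem FreeGroup.eq_of_isConj_of {α : Type*} {i j : α}
    (h : IsConj (of i : FreeGroup α) (of j)) : i = j := by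
  classical
  have h1 := (FreeGroup.lift fun k =>
    Multiplicative.ofAdd (if k = i then (1 : ℤ) else 0)).map_isConj h
  rw [isConj_iff_eq] at h1
  by_contra hne
  simp [Ne.symm hne] at h1

theorem IsBraidSystem.ascProd_inv_mul_mul_ascProd (h : IsBraidSystem (m + 1) σ) {i : ℕ}
    (hi : i ≤ m) : (ascProd σ (m + 1) (i + 1))⁻¹ * σ i * ascProd σ (m + 1) (i + 1) =
      ascProd σ m i * σ m * (ascProd σ m i)⁻¹ := by
  refine ascProd_induction (m := m) (p := fun i =>
    (ascProd σ (m + 1) (i + 1))⁻¹ * σ i * ascProd σ (m + 1) (i + 1) =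
      ascProd σ m i * σ m * (ascProd σ m i)⁻¹) (by simp) (fun i hi ih => ?_) hi
  have hb := h.braid i (by lia)
  have hc := h.commute_ascProd (show i + 1 < i + 1 + 1 by lia) (show i + 1 + 1 ≤ m + 1 by lia)
  have h1 : (σ (i + 1))⁻¹ * σ i * σ (i + 1) = σ i * σ (i + 1) * (σ i)⁻¹ := by
    rw [eq_mul_inv_iff_mul_eq, mul_assoc, mul_assoc, inv_mul_eq_iff_eq_mul, ← mul_assoc, hb]
    simp only [mul_assoc]
  rw [ascProd_of_lt σ (show i + 1 < m + 1 by lia), ascProd_of_lt σ hi]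
  generalize ascProd σ (m + 1) (i + 1 + 1) = e at *
  calc _ = e⁻¹ * ((σ (i + 1))⁻¹ * σ i * σ (i + 1)) * e := by group
    _ = (e⁻¹ * σ i) * σ (i + 1) * ((σ i)⁻¹ * e) := by rw [h1]; group
    _ = σ i * (e⁻¹ * σ (i + 1) * e) * (σ i)⁻¹ := by
      rw [hc.inv_right.eq.symm, hc.inv_left.eq]; group
    _ = _ := by rw [ih]; group

/-- The relation "`g` moves the strand `k` to the strand `l`" together with the corresponding
membership of a Schreier generator in the subgroup `H`. -/
def StrandRel (σ : ℕ → G) (f : G →* MulAut (FreeGroup ℕ)) (H : Subgroup G) (m : ℕ) (g : G)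
    (k l : ℕ) : Prop :=
  IsConj (f g (of k)) (of l) ∧ (ascProd σ m l)⁻¹ * g * ascProd σ m k ∈ H

theorem StrandRel.mul {H : Subgroup G} {g g' : G} {k l p : ℕ}
    (h : StrandRel σ f H m g l p) (h' : StrandRel σ f H m g' k l) :
    StrandRel σ f H m (g * g') k p := by
  refine ⟨?_, ?_⟩
  · rw [map_mul, MulAut.mul_apply]
    exact ((f g).toMonoidHom.map_isConj h'.1).trans h.1
  · convert mul_mem h.2 h'.2 using 1
    group

theorem StrandRel.inv {H : Subgroup G} {g : G} {k l : ℕ}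
    (h : StrandRel σ f H m g k l) : StrandRel σ f H m g⁻¹ l k := by
  refine ⟨?_, ?_⟩
  · have := (f g)⁻¹.toMonoidHom.map_isConj h.1.symm
    simpa using this
  · convert inv_mem h.2 using 1
    group

theorem StrandRel.one {H : Subgroup G} {k : ℕ} : StrandRel σ f H m 1 k k := by
  exact ⟨by rw [map_one, MulAut.one_apply], by simp⟩

theorem IsBraidSystem.strandRel_swap (h : IsBraidSystem (m + 1) σ)
    (hf : ∀ i < m + 1, f (σ i) = braidAut i) {i k : ℕ} (hi : i ≤ m) (hk : k ≤ m + 1) :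
    StrandRel σ f (Subgroup.closure (insert (σ m ^ 2) (σ '' Set.Iio m))) (m + 1) (σ i) k
      (Equiv.swap i (i + 1) k) := by
  have hle : Subgroup.closure (σ '' Set.Iio m) ≤
      Subgroup.closure (insert (σ m ^ 2) (σ '' Set.Iio m)) :=
    Subgroup.closure_mono (Set.subset_insert _ _)
  have hgen : ∀ j < m, σ j ∈ Subgroup.closure (insert (σ m ^ 2) (σ '' Set.Iio m)) :=
    fun j hj => hle (Subgroup.subset_closure ⟨j, hj, rfl⟩)
  rw [StrandRel, hf i (by lia)]
  by_cases ha : k = i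
  · subst ha
    rw [Equiv.swap_apply_left]
    refine ⟨?_, ?_⟩
    · rw [braidAut_of_self]
      exact isConj_iff.2 ⟨of k, by group⟩
    · rw [ascProd_of_lt σ (Nat.lt_succ_of_le hi)]
      have h1 : (ascProd σ (m + 1) (k + 1))⁻¹ * σ k * (σ k * ascProd σ (m + 1) (k + 1)) =
          ascProd σ m k * σ m ^ 2 * (ascProd σ m k)⁻¹ := by
        rw [← conj_pow, ← h.ascProd_inv_mul_mul_ascProd hi, pow_two]
        group
      rw [h1]
      have h2 := hle (ascProd_mem (σ := σ) hi)
      exact mul_mem (mul_mem h2 (Subgroup.subset_closure (Set.mem_insert _ _))) (inv_mem h2)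
  by_cases hb : k = i + 1
  · subst hb
    rw [Equiv.swap_apply_right, braidAut_of_succ, ascProd_of_lt σ (show i < m + 1 by lia)]
    refine ⟨IsConj.refl _, ?_⟩
    simp
  rw [Equiv.swap_apply_of_ne_of_ne ha hb, braidAut_of_of_ne ha hb]
  refine ⟨IsConj.refl _, ?_⟩
  rcases lt_or_gt_of_ne ha with hk' | hk'
  · obtain ⟨i, rfl⟩ : ∃ j, i = j + 1 := ⟨i - 1, by lia⟩
    rw [mul_assoc, h.mul_ascProd (by lia) (by lia), inv_mul_cancel_left]
    exact hgen i (by lia)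
  · rw [mul_assoc, (h.commute_ascProd (show i + 1 < k by lia) hk).eq, inv_mul_cancel_left]
    exact hgen i (by lia)

theorem IsBraidSystem.exists_strandRel (h : IsBraidSystem (m + 1) σ)
    (hf : ∀ i < m + 1, f (σ i) = braidAut i) {g : G}
    (hg : g ∈ Subgroup.closure (σ '' Set.Iio (m + 1))) :
    (∀ k ≤ m + 1, ∃ l ≤ m + 1,
      StrandRel σ f (Subgroup.closure (insert (σ m ^ 2) (σ '' Set.Iio m))) (m + 1) g k l) ∧
    (∀ l ≤ m + 1, ∃ k ≤ m + 1,
      StrandRel σ f (Subgroup.closure (insert (σ m ^ 2) (σ '' Set.Iio m))) (m + 1) g k l) := by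
  induction hg using Subgroup.closure_induction with
  | mem g hg =>
    obtain ⟨i, hi, rfl⟩ := hg
    have hi : i ≤ m := Nat.lt_succ_iff.1 hi
    have hle : ∀ k ≤ m + 1, Equiv.swap i (i + 1) k ≤ m + 1 := by
      intro k hk
      rw [Equiv.swap_apply_def]
      split_ifs <;> lia
    refine ⟨fun k hk => ⟨_, hle k hk, h.strandRel_swap hf hi hk⟩,
      fun l hl => ⟨_, hle l hl, ?_⟩⟩
    have := h.strandRel_swap hf hi (hle l hl)
    rwa [Equiv.swap_apply_self] at this
  | one => exact ⟨fun k hk => ⟨k, hk, .one⟩, fun k hk => ⟨k, hk, .one⟩⟩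
  | mul g g' _ _ hg hg' =>
    refine ⟨fun k hk => ?_, fun p hp => ?_⟩
    · obtain ⟨l, hl, h1⟩ := hg'.1 k hk
      obtain ⟨p, hp, h2⟩ := hg.1 l hl
      exact ⟨p, hp, h2.mul h1⟩
    · obtain ⟨l, hl, h1⟩ := hg.2 p hp
      obtain ⟨k, hk, h2⟩ := hg'.2 l hl
      exact ⟨k, hk, h1.mul h2⟩
  | inv g _ hg =>
    refine ⟨fun k hk => ?_, fun k hk => ?_⟩
    · obtain ⟨l, hl, h1⟩ := hg.2 k hk
      exact ⟨l, hl, h1.inv⟩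
    · obtain ⟨l, hl, h1⟩ := hg.1 k hk
      exact ⟨l, hl, h1.inv⟩

/-- Artin's theorem: the action of the braid group on the free group is faithful. -/
theorem IsBraidSystem.eq_one_of_map_eq_one (h : IsBraidSystem m σ)
    (hf : ∀ i < m, f (σ i) = braidAut i) {g : G}
    (hg : g ∈ Subgroup.closure (σ '' Set.Iio m)) (hfg : f g = 1) : g = 1 := by
  induction m generalizing g with
  | zero => simpa using hg
  | succ m ih =>
    have hf' : ∀ i < m, f (σ i) = braidAut i := fun i hi => hf i (by lia)
    obtain ⟨l, -, hl, hmem⟩ := (h.exists_strandRel hf hg).1 (m + 1) le_rfl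
    rw [hfg, MulAut.one_apply] at hl
    obtain rfl := FreeGroup.eq_of_isConj_of hl
    have hgH : g ∈ Subgroup.closure (insert (σ m ^ 2) (σ '' Set.Iio m)) := by
      simpa using hmem
    exact h.isTypeBSystem_sq.eq_one_of_map_eq_one hf' (by rw [map_pow, hf m m.lt_succ_self])
      (fun g hg => ih (h.mono m.le_succ) hf' hg) hgH hfg

/-- A central element of a group generated by a type `B` system is trivial if it is killed by the
abelian character detecting `ρ`. -/
theorem IsTypeBSystem.eq_one_of_mem_center {ρ : G} (h : IsTypeBSystem m σ ρ)
    (hf : ∀ i < m, f (σ i) = braidAut i) (hρ : f ρ = braidAut m ^ 2)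
    (htop : Subgroup.closure (insert ρ (σ '' Set.Iio m)) = ⊤)
    (χ : G →* Multiplicative ℤ) (hχ : ∀ i < m, χ (σ i) = 1)
    (hχρ : χ ρ = Multiplicative.ofAdd 1) {z : G} (hz : z ∈ Subgroup.center G) (hχz : χ z = 1) :
    z = 1 := by
  have hK : ∀ g ∈ Subgroup.closure (σ '' Set.Iio m), f g = 1 → g = 1 :=
    fun g hg => h.toIsBraidSystem.eq_one_of_map_eq_one hf hg
  have hχK : ∀ g ∈ Subgroup.closure (σ '' Set.Iio m), χ g = 1 := by
    intro g hg
    have : Subgroup.closure (σ '' Set.Iio m) ≤ χ.ker := by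
      rw [Subgroup.closure_le]
      rintro _ ⟨i, hi, rfl⟩
      exact hχ i hi
    exact this hg
  obtain ⟨w, b, hb, hzw⟩ := h.exists_decomp hf (htop ▸ Subgroup.mem_top z)
  have hact : ∀ x, truncHom m w * f b (truncHom m x) * (truncHom m w)⁻¹ = truncHom m x := by
    intro x
    have h1 : pointHom σ ρ m (w * f b x * w⁻¹ * x⁻¹) = 1 := by
      have := Subgroup.mem_center_iff.1 hz (pointHom σ ρ m x)
      simp only [map_mul, map_inv, h.pointHom_map hf hb]
      rw [mul_inv_eq_one, mul_inv_eq_iff_eq_mul, ← mul_assoc, ← mul_assoc, ← hzw,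
        mul_inv_eq_iff_eq_mul, mul_assoc, ← hzw, this]
    have h2 := truncHom_eq_one_of_map_pointHom (σ := σ) (ρ := ρ) hf hρ (by rw [h1]; simp)
    rwa [map_mul, map_mul, map_mul, map_inv, map_inv, mul_inv_eq_one, truncHom_map hf hb] at h2
  have hw : truncHom m w = 1 := by
    by_contra hne
    have hcomm : Commute (descProd (m + 1)) (truncHom m w) := by
      have := hact (descProd (m + 1))
      rw [truncHom_descProd le_rfl, map_closure_fixed hf hb
        (fun i hi => braidAut_descProd (by lia))] at this
      exact (mul_inv_eq_iff_eq_mul.1 this).symm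
    have hexp := FreeGroup.map_eq_one_of_commute (χ.comp (pointHom σ ρ m)) hcomm hne (by
      rw [MonoidHom.comp_apply, pointHom_truncHom]
      rwa [hzw, map_mul, hχK b hb, mul_one] at hχz)
    have hpow : ∀ k ≤ m + 1, χ (pointHom σ ρ m (descProd k)) = Multiplicative.ofAdd (k : ℤ) := by
      intro k hk
      induction k with
      | zero => simp [descProd]
      | succ k ih =>
        have hmem := hχK _ (ascProd_mem (σ := σ) (show k ≤ m by lia))
        rw [descProd, map_mul, map_mul, ih (by lia), pointHom_of, conjPt, if_pos (by lia),
          map_mul, map_mul, map_inv, hmem, hχρ, one_mul, inv_one, mul_one, ← ofAdd_add]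
        push_cast
        rw [add_comm]
    rw [MonoidHom.comp_apply, hpow (m + 1) le_rfl, ofAdd_eq_one] at hexp
    lia
  have hzb : z = b := by
    rw [hzw, ← pointHom_truncHom, hw, map_one, one_mul]
  rw [hzb]
  refine hK b hb (FreeGroup.mulAut_ext fun k => ?_)
  rcases le_or_gt k m with hk | hk
  · simpa [hw, truncHom_of_le hk] using hact (of k)
  · simpa using map_closure_of_gt hf hb hk

end BraidFaithful

section ArtinB

/-- The generator `r_{i+1}` of `A[B_n]`, indexed from `0`. -/
def artinGen (n i : ℕ) : ArtinB n := rB n (i + 1)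

theorem artinGen_of_lt {n i : ℕ} (h : i < n) :
    artinGen n i = PresentedGroup.of ⟨i, h⟩ := by
  simp [artinGen, rB, h]

theorem isTypeBSystem_artinGen (m : ℕ) :
    IsTypeBSystem m (artinGen (m + 1)) (artinGen (m + 1) m) := by
  have hcomm : ∀ i j, i + 2 ≤ j → j < m + 1 →
      Commute (artinGen (m + 1) i) (artinGen (m + 1) j) := by
    intro i j hij hj
    rw [artinGen_of_lt (show i < m + 1 by lia), artinGen_of_lt hj]
    have := PresentedGroup.one_of_mem (rels := BnRels (m + 1))
      (Or.inr (Or.inr ⟨⟨i, by lia⟩, ⟨j, hj⟩, hij, rfl⟩))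
    simp only [map_mul, map_inv, mul_inv_eq_one] at this
    exact this
  refine ⟨⟨fun i hi => ?_, fun i j hij hj => hcomm i j hij (by lia)⟩,
    fun i hi => hcomm i m (by lia) m.lt_succ_self, ?_⟩
  · rw [artinGen_of_lt (show i < m + 1 by lia), artinGen_of_lt (show i + 1 < m + 1 by lia)]
    have := PresentedGroup.one_of_mem (rels := BnRels (m + 1))
      (Or.inl ⟨⟨i, by lia⟩, ⟨i + 1, by lia⟩, rfl, by simpa using hi, rfl⟩)
    simp only [map_mul, map_inv, mul_inv_eq_one] at this
    exact this
  · rintro i rfl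
    rw [artinGen_of_lt (show i < i + 1 + 1 by lia), artinGen_of_lt (show i + 1 < i + 1 + 1 by lia)]
    have := PresentedGroup.one_of_mem (rels := BnRels (i + 1 + 1))
      (Or.inr (Or.inl ⟨⟨i, by lia⟩, ⟨i + 1, by lia⟩, rfl, rfl, rfl⟩))
    simp only [map_mul, map_inv, mul_inv_eq_one] at this
    exact this

theorem ArtinB.exists_hom {G : Type*} [Group G] {m : ℕ} {τ : ℕ → G}
    (h : IsTypeBSystem m τ (τ m)) :
    ∃ φ : ArtinB (m + 1) →* G, ∀ i ≤ m, φ (artinGen (m + 1) i) = τ i := by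
  have hrel : ∀ r ∈ BnRels (m + 1), FreeGroup.lift (fun i : Fin (m + 1) => τ i) r = 1 := by
    rintro r (⟨⟨i, hi⟩, ⟨j, hj⟩, hij, hlt, rfl⟩ | ⟨⟨i, hi⟩, ⟨j, hj⟩, hi', hj', rfl⟩ |
      ⟨⟨i, hi⟩, ⟨j, hj⟩, hij, rfl⟩)
    · obtain rfl : i + 1 = j := hij
      simp only [map_mul, map_inv, FreeGroup.lift_apply_of, mul_inv_eq_one]
      exact h.braid i (by simpa using hlt)
    · obtain rfl : i + 1 = m := by simpa using hi'
      obtain rfl : j = i + 1 := by simpa using hj'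
      simp only [map_mul, map_inv, FreeGroup.lift_apply_of, mul_inv_eq_one]
      exact h.four i rfl
    · replace hij : i + 2 ≤ j := hij
      simp only [map_mul, map_inv, FreeGroup.lift_apply_of, mul_inv_eq_one]
      rcases (Nat.lt_succ_iff.1 hj).lt_or_eq with hj' | rfl
      · exact (h.commute i j hij hj').eq
      · exact (h.commute_last i (by lia)).eq
  refine ⟨PresentedGroup.toGroup hrel, fun i hi => ?_⟩
  rw [artinGen_of_lt (Nat.lt_succ_of_le hi), PresentedGroup.toGroup.of]

theorem ArtinB.hom_ext {G : Type*} [Group G] {m : ℕ} {φ ψ : ArtinB (m + 1) →* G}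
    (h : ∀ i ≤ m, φ (artinGen (m + 1) i) = ψ (artinGen (m + 1) i)) : φ = ψ := by
  refine PresentedGroup.ext fun ⟨i, hi⟩ => ?_
  rw [← artinGen_of_lt hi]
  exact h i (by lia)

theorem closure_artinGen (m : ℕ) :
    Subgroup.closure (insert (artinGen (m + 1) m) (artinGen (m + 1) '' Set.Iio m)) = ⊤ := by
  rw [eq_top_iff, ← PresentedGroup.closure_range_of, Subgroup.closure_le]
  rintro _ ⟨⟨i, hi⟩, rfl⟩
  rw [← artinGen_of_lt hi]
  apply Subgroup.subset_closure
  rcases (Nat.lt_succ_iff.1 hi).lt_or_eq with hi | rfl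
  · exact Or.inr ⟨i, hi, rfl⟩
  · exact Or.inl rfl

theorem IsTypeBSystem.map {G H : Type*} [Group G] [Group H] {m : ℕ} {σ : ℕ → G} {ρ : G}
    (h : IsTypeBSystem m σ ρ) (φ : G →* H) : IsTypeBSystem m (fun i => φ (σ i)) (φ ρ) where
  braid i hi := by simpa only [map_mul] using congrArg φ (h.braid i hi)
  commute i j hij hj := (h.commute i j hij hj).map φ
  commute_last i hi := (h.commute_last i hi).map φ
  four i hi := by simpa only [map_mul] using congrArg φ (h.four i hi)

/-- The center of `A[B_n]` meets the commutator subgroup trivially. -/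
theorem ArtinB.eq_one_of_mem_center {m : ℕ} {z : ArtinB (m + 1)}
    (hz : z ∈ Subgroup.center (ArtinB (m + 1)))
    (hab : ∀ χ : ArtinB (m + 1) →* Multiplicative ℤ, χ z = 1) : z = 1 := by
  have hbr : IsBraidSystem (m + 1) braidAut :=
    ⟨fun i _ => braidAut_braid i, fun i j hij _ => braidAut_commute hij⟩
  have hB : IsTypeBSystem m (fun i => if i = m then braidAut m ^ 2 else braidAut i)
      (if m = m then braidAut m ^ 2 else braidAut m) := by
    have h := hbr.isTypeBSystem_sq
    refine ⟨⟨fun i hi => ?_, fun i j hij hj => ?_⟩, fun i hi => ?_, fun i hi => ?_⟩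
    · simpa [show i ≠ m by lia, show i + 1 ≠ m by lia] using h.braid i hi
    · simpa [show i ≠ m by lia, show j ≠ m by lia] using h.commute i j hij hj
    · simpa [show i ≠ m by lia] using h.commute_last i hi
    · simpa [show i ≠ m by lia] using h.four i hi
  obtain ⟨f, hf⟩ := ArtinB.exists_hom hB
  have hX : IsTypeBSystem m (fun i => if i = m then Multiplicative.ofAdd (1 : ℤ) else 1)
      (if m = m then Multiplicative.ofAdd (1 : ℤ) else 1) := by
    refine ⟨⟨fun i hi => ?_, fun i j hij hj => ?_⟩, fun i hi => ?_, fun i hi => ?_⟩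
    · simp [show i ≠ m by lia, show i + 1 ≠ m by lia]
    · exact Commute.all _ _
    · exact Commute.all _ _
    · simp [show i ≠ m by lia]
  obtain ⟨χ, hχ⟩ := ArtinB.exists_hom hX
  refine (isTypeBSystem_artinGen m).eq_one_of_mem_center (f := f) (fun i hi => ?_) ?_
    (closure_artinGen m) χ (fun i hi => ?_) ?_ hz (hab χ)
  · rw [hf i hi.le, if_neg hi.ne]
  · rw [hf m le_rfl, if_pos rfl]
  · rw [hχ i hi.le, if_neg hi.ne]
  · rw [hχ m le_rfl, if_pos rfl]

theorem ArtinB.eq_of_πB_eq {m : ℕ} {x y : ArtinB (m + 1)} (h : πB (m + 1) x = πB (m + 1) y)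
    (hab : ∀ χ : ArtinB (m + 1) →* Multiplicative ℤ, χ x = χ y) : x = y := by
  refine inv_mul_eq_one.1 (ArtinB.eq_one_of_mem_center (QuotientGroup.eq.1 h) fun χ => ?_)
  rw [map_mul, map_inv, hab, inv_mul_cancel]

/-- A braid relation that holds up to a central factor can be corrected. -/
theorem braid_mul_central {G : Type*} [Group G] {g g' c z : G} (hc : c ∈ Subgroup.center G)
    (hz : z ∈ Subgroup.center G) (h : g * g' * g = g' * g * g' * z) :
    g * c * (g' * (c * z)) * (g * c) = g' * (c * z) * (g * c) * (g' * (c * z)) := by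
  rw [Subgroup.mem_center_iff] at hc hz
  have hc' (x y : G) : x * (c * y) = c * (x * y) := by rw [← mul_assoc, hc, mul_assoc]
  have hz' (x y : G) : x * (z * y) = z * (x * y) := by rw [← mul_assoc, hz, mul_assoc]
  have h' : g * (g' * g) = z * (g' * (g * g')) := by
    rw [← hz, ← mul_assoc, h]
    simp only [mul_assoc]
  simp only [mul_assoc, hc g, hc' g, hc' g', hz' g, hz g', hz' g', hc' z, h']

end ArtinB

/-- every endomorphism of `Ā = A[Bₙ]/Z(A[Bₙ])` lifts to an endomorphism
of `A[Bₙ]`, for `n ≥ 5`. -/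
theorem endomorphism_lifts (n : ℕ) (hn : 5 ≤ n) (φbar : AbarB n →* AbarB n) :
    ∃ φ : ArtinB n →* ArtinB n, (πB n).comp φ = φbar.comp (πB n) := by
  obtain ⟨m, rfl⟩ : ∃ m, n = m + 1 := ⟨n - 1, by lia⟩
  have hsurj : Function.Surjective (πB (m + 1)) := QuotientGroup.mk'_surjective _
  choose g hg using fun i => hsurj (φbar (πB (m + 1) (artinGen (m + 1) i)))
  have hbar := (isTypeBSystem_artinGen m).map (φbar.comp (πB (m + 1)))
  simp only [MonoidHom.comp_apply, ← hg] at hbar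
  let z : ℕ → ArtinB (m + 1) := fun i =>
    if i + 1 < m then (g (i + 1) * g i * g (i + 1))⁻¹ * (g i * g (i + 1) * g i) else 1
  have hz : ∀ i, z i ∈ Subgroup.center (ArtinB (m + 1)) := by
    intro i
    by_cases hi : i + 1 < m
    · simp only [z, if_pos hi]
      refine QuotientGroup.eq.1 (?_ : πB (m + 1) _ = πB (m + 1) _)
      simpa only [map_mul] using (hbar.braid i hi).symm
    · simp only [z, if_neg hi]
      exact one_mem _
  let c : ℕ → ArtinB (m + 1) := fun i => ((List.range i).map z).prod
  have hc_succ : ∀ i, c (i + 1) = c i * z i := fun i => by simp [c, List.range_succ]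
  have hc : ∀ i, c i ∈ Subgroup.center (ArtinB (m + 1)) := by
    intro i
    refine list_prod_mem fun x hx => ?_
    obtain ⟨j, -, rfl⟩ := List.mem_map.1 hx
    exact hz j
  have hπ : ∀ i, πB (m + 1) (g i * c i) = πB (m + 1) (g i) := fun i =>
    (QuotientGroup.eq.2 (by simpa using hc i)).symm
  have hτ : IsTypeBSystem m (fun i => g i * c i) (g m * c m) := by
    have hcomm : ∀ i j, Commute (πB (m + 1) (g i)) (πB (m + 1) (g j)) →
        Commute (g i * c i) (g j * c j) := by
      intro i j hij
      refine ArtinB.eq_of_πB_eq ?_ fun χ => ?_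
      · rw [map_mul _ (g i * c i), map_mul _ (g j * c j), hπ, hπ, hij.eq]
      · rw [map_mul _ (g i * c i), map_mul _ (g j * c j), mul_comm]
    refine ⟨⟨fun i hi => ?_, fun i j hij hj => hcomm i j (hbar.commute i j hij hj)⟩,
      fun i hi => hcomm i m (hbar.commute_last i hi), fun i hi => ?_⟩
    · simp only [hc_succ]
      refine braid_mul_central (hc i) (hz i) ?_
      simp only [z, if_pos hi]
      group
    · refine ArtinB.eq_of_πB_eq ?_ fun χ => ?_
      · simpa only [map_mul _ (_ * _) (_ * _), hπ] using hbar.four i hi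
      · simp only [map_mul]
        ac_rfl
  obtain ⟨φ, hφ⟩ := ArtinB.exists_hom hτ
  refine ⟨φ, ArtinB.hom_ext fun i hi => ?_⟩
  rw [MonoidHom.comp_apply, MonoidHom.comp_apply, hφ i hi, hπ, hg]
end

section
/- Let n ≥ 5, Ā = A[B_n]/Z(A[B_n]), and let H be the subgroup of Ā generated by t̄_0, t̄_1, …, t̄_{n−1}. Then H is characteristic in Ā (for every automorphism φ of Ā one has φ(H) = H), but H is not fully characteristic in Ā (there exists a group endomorphism ψ of Ā with ψ(H) not contained in H). -/
/-- A sequence `c 0, …, c (m - 1)` satisfying the braid relations. -/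
structure IsBraidSeq {G : Type*} [Group G] (m : ℕ) (c : ℕ → G) : Prop where
  braid : ∀ i, i + 1 < m → c i * c (i + 1) * c i = c (i + 1) * c i * c (i + 1)
  comm : ∀ i j, i + 2 ≤ j → j < m → Commute (c i) (c j)

theorem Commute.eq_of_braid {G : Type*} [Group G] {a b : G} (h : Commute a b)
    (hb : a * b * a = b * a * b) : a = b := by
  have h1 : b * a * a = b * a * b := by rw [← hb, h.eq]
  exact mul_left_cancel h1

theorem conj_eq_of_braid {G : Type*} [Group G] {a b : G} (hb : a * b * a = b * a * b) :
    (a * b) * a * (a * b)⁻¹ = b := by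
  rw [hb]; group

theorem eq_of_braid_of_commute_mul_inv {G : Type*} [Group G] {a b b' : G}
    (hb : Commute a b) (hb' : Commute a b') (h : Commute (b * a⁻¹) (b' * a⁻¹))
    (hbr : b * b' * b = b' * b * b') : b = b' := by
  have h1 : Commute b b' := by
    have h2 : Commute (b * a⁻¹) a := hb.symm.mul_left (Commute.refl a).inv_left
    have h3 : Commute (b' * a⁻¹) a := hb'.symm.mul_left (Commute.refl a).inv_left
    have h4 : Commute (b * a⁻¹ * a) (b' * a⁻¹ * a) :=
      (h.mul_left h3.symm).mul_right (h2.mul_left (Commute.refl a))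
    simpa using h4
  exact h1.eq_of_braid hbr

namespace IsBraidSeq

variable {G H : Type*} [Group G] [Group H] {m : ℕ} {c : ℕ → G}

theorem map (h : IsBraidSeq m c) (f : G →* H) : IsBraidSeq m fun i => f (c i) where
  braid i hi := by simpa using congrArg f (h.braid i hi)
  comm i j hij hj := (h.comm i j hij hj).map f

theorem shift (h : IsBraidSeq m c) (k : ℕ) : IsBraidSeq (m - k) fun i => c (i + k) where
  braid i hi := by
    have := h.braid (i + k) (by omega)
    rwa [show i + k + 1 = i + 1 + k by omega] at this
  comm i j hij hj := h.comm _ _ (by omega) (by omega)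

theorem reverse (h : IsBraidSeq m c) : IsBraidSeq m fun i => c (m - 1 - i) where
  braid i hi := by
    have := h.braid (m - 1 - (i + 1)) (by omega)
    rw [show m - 1 - (i + 1) + 1 = m - 1 - i by omega] at this
    exact this.symm
  comm i j hij hj := (h.comm _ _ (by omega) (by omega)).symm

theorem isConj (h : IsBraidSeq m c) {i j : ℕ} (hi : i < m) (hj : j < m) :
    IsConj (c i) (c j) := by
  suffices H : ∀ k, k < m → IsConj (c 0) (c k) from (H i hi).symm.trans (H j hj)
  intro k
  induction k with
  | zero => exact fun _ => IsConj.refl _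
  | succ k ih =>
    intro hk
    exact (ih (by omega)).trans (isConj_iff.2 ⟨_, conj_eq_of_braid (h.braid k hk)⟩)

theorem eq_succ_of_eq (h : IsBraidSeq m c) {i : ℕ} (hi : i + 2 < m)
    (he : c i = c (i + 1)) : c (i + 1) = c (i + 2) := by
  refine Commute.eq_of_braid ?_ (h.braid (i + 1) hi)
  rw [← he]; exact h.comm _ _ le_rfl hi

theorem eq_pred_of_eq (h : IsBraidSeq m c) {i : ℕ} (hi : i + 2 < m)
    (he : c (i + 1) = c (i + 2)) : c i = c (i + 1) := by
  refine Commute.eq_of_braid ?_ (h.braid i (by omega))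
  rw [he]; exact h.comm _ _ le_rfl hi

theorem eq_of_eq_succ (h : IsBraidSeq m c) {i j : ℕ} (hi : i + 1 < m) (hj : j < m)
    (he : c i = c (i + 1)) : c j = c 0 := by
  have h0 : c 0 = c 1 := by
    clear hj
    induction i with
    | zero => exact he
    | succ i ih => exact ih (by omega) (h.eq_pred_of_eq hi he)
  have hs : ∀ k, k + 1 < m → c k = c (k + 1) := by
    intro k
    induction k with
    | zero => exact fun _ => h0
    | succ k ih => exact fun hk => h.eq_succ_of_eq hk (ih (by omega))
  induction j with
  | zero => rfl
  | succ j ih => rw [← hs j hj]; exact ih (by omega)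

end IsBraidSeq

/-- The product `c 0 * c 1 * ⋯ * c (k - 1)`. -/
def prefixProd {G : Type*} [Group G] (c : ℕ → G) : ℕ → G
  | 0 => 1
  | k + 1 => prefixProd c k * c k

theorem IsBraidSeq.prefixProd_commute {G : Type*} [Group G] {m : ℕ} {c : ℕ → G}
    (h : IsBraidSeq m c) {k j : ℕ} (hkj : k < j) (hj : j < m) :
    Commute (prefixProd c k) (c j) := by
  induction k with
  | zero => exact Commute.one_left _
  | succ k ih => exact (ih (by omega)).mul_left (h.comm _ _ (by omega) hj)

theorem IsBraidSeq.prefixProd_mul {G : Type*} [Group G] {m : ℕ} {c : ℕ → G}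
    (h : IsBraidSeq m c) {k i : ℕ} (hik : i + 1 < k) (hk : k ≤ m) :
    prefixProd c k * c i = c (i + 1) * prefixProd c k := by
  induction k with
  | zero => omega
  | succ k ih =>
    rcases Nat.lt_or_ge (i + 1) k with h1 | h1
    · have h2 := ih h1 (by omega)
      have h3 := (h.comm i k (by omega) (by omega)).eq
      calc prefixProd c k * c k * c i = prefixProd c k * c i * c k := by
            rw [mul_assoc, ← h3, mul_assoc]
        _ = _ := by rw [h2, mul_assoc]; rfl
    · obtain rfl : k = i + 1 := by omega
      have h2 := (h.prefixProd_commute (k := i) (j := i + 1) (by omega) (by omega)).eq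
      have h3 := h.braid i (by omega)
      calc prefixProd c i * c i * c (i + 1) * c i
          = prefixProd c i * (c i * c (i + 1) * c i) := by group
        _ = prefixProd c i * c (i + 1) * c i * c (i + 1) := by rw [h3]; group
        _ = _ := by rw [h2]; simp only [prefixProd]; group

namespace Equiv.Perm

/-- The restriction of a permutation to a subtype, or `1` if the subtype is not invariant. -/
noncomputable def restrictTo {X : Type*} (p : X → Prop) (f : Perm X) : Perm {x // p x} := by
  classical exact if h : ∀ x, p (f x) ↔ p x then f.subtypePerm h else 1

variable {X : Type*} {p : X → Prop}

theorem restrictTo_apply {f : Perm X} (h : ∀ x, p (f x) ↔ p x) (x : {x // p x}) :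
    (restrictTo p f x : X) = f x := by
  simp [restrictTo, h]

theorem restrictTo_mul {f g : Perm X} (hf : ∀ x, p (f x) ↔ p x) (hg : ∀ x, p (g x) ↔ p x) :
    restrictTo p (f * g) = restrictTo p f * restrictTo p g := by
  ext x
  have hfg : ∀ x, p ((f * g) x) ↔ p x := fun x => by simp [hf, hg]
  rw [restrictTo_apply hfg, mul_apply, mul_apply, restrictTo_apply hf, restrictTo_apply hg]

theorem restrictTo_inv {f : Perm X} (hf : ∀ x, p (f x) ↔ p x) :
    restrictTo p f⁻¹ = (restrictTo p f)⁻¹ := by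
  have hf' : ∀ x, p (f⁻¹ x) ↔ p x := fun x => by rw [← hf (f⁻¹ x)]; simp
  refine eq_inv_of_mul_eq_one_left ?_
  rw [← restrictTo_mul hf' hf, inv_mul_cancel]
  ext x
  exact restrictTo_apply (fun _ => Iff.rfl) x

theorem restrictTo_commute {f g : Perm X} (hf : ∀ x, p (f x) ↔ p x)
    (hg : ∀ x, p (g x) ↔ p x) (h : Commute f g) :
    Commute (restrictTo p f) (restrictTo p g) := by
  rw [Commute, SemiconjBy, ← restrictTo_mul hf hg, ← restrictTo_mul hg hf, h.eq]

theorem restrictTo_braid {f g : Perm X} (hf : ∀ x, p (f x) ↔ p x)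
    (hg : ∀ x, p (g x) ↔ p x) (h : f * g * f = g * f * g) :
    restrictTo p f * restrictTo p g * restrictTo p f =
      restrictTo p g * restrictTo p f * restrictTo p g := by
  have hfg : ∀ x, p ((f * g) x) ↔ p x := fun x => by simp [hf, hg]
  have hgf : ∀ x, p ((g * f) x) ↔ p x := fun x => by simp [hf, hg]
  rw [← restrictTo_mul hf hg, ← restrictTo_mul hfg hf, h, restrictTo_mul hgf hg,
    restrictTo_mul hg hf]

theorem restrictTo_eq_iff {f g : Perm X} (hf : ∀ x, p (f x) ↔ p x)
    (hg : ∀ x, p (g x) ↔ p x) :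
    restrictTo p f = restrictTo p g ↔ ∀ x, p x → f x = g x := by
  constructor
  · intro h x hx
    have := congrArg Subtype.val (DFunLike.congr_fun h ⟨x, hx⟩)
    rwa [restrictTo_apply hf, restrictTo_apply hg] at this
  · intro h
    ext x
    rw [restrictTo_apply hf, restrictTo_apply hg, h x x.2]

theorem mem_iff_of_imp [Finite X] {f : Perm X} (h : ∀ x, p x → p (f x)) (x : X) :
    p (f x) ↔ p x := by
  refine ⟨fun hx => ?_, h x⟩
  have h1 : ∀ k : ℕ, p ((f ^ (k + 1)) x) := by
    intro k
    induction k with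
    | zero => simpa using hx
    | succ k ih => rw [pow_succ', mul_apply]; exact h _ ih
  have h2 := h1 (orderOf f - 1)
  rw [Nat.sub_add_cancel (orderOf_pos f), pow_orderOf_eq_one] at h2
  exact h2

theorem apply_ne_iff_of_commute {f g : Perm X} (h : Commute f g) (x : X) :
    g (f x) ≠ f x ↔ g x ≠ x := by
  rw [← mul_apply, ← h.eq, mul_apply, f.injective.ne_iff]

theorem mul_apply_eq_of_sameCycle {a b c : Perm X} (ha : Commute c a) (hb : Commute c b) {x : X}
    (hax : c.SameCycle x (a x)) (hbx : c.SameCycle x (b x)) : a (b x) = b (a x) := by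
  obtain ⟨k, hk⟩ := hax
  obtain ⟨l, hl⟩ := hbx
  have h1 : a ((c ^ l) x) = (c ^ l) (a x) := by
    rw [← mul_apply, ← (ha.zpow_left l).eq, mul_apply]
  have h2 : b ((c ^ k) x) = (c ^ k) (b x) := by
    rw [← mul_apply, ← (hb.zpow_left k).eq, mul_apply]
  rw [← hl, h1, ← hk, h2, ← hl, ← mul_apply, ← mul_apply, ← zpow_add, ← zpow_add, add_comm]

end Equiv.Perm

open Equiv.Perm in
theorem IsBraidSeq.restrictTo {X : Type*} {p : X → Prop} {m : ℕ} {c : ℕ → Equiv.Perm X}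
    (h : IsBraidSeq m c) (hp : ∀ i < m, ∀ x, p (c i x) ↔ p x) :
    IsBraidSeq m fun i => restrictTo p (c i) where
  braid i hi := restrictTo_braid (hp i (by omega)) (hp _ hi) (h.braid i hi)
  comm i j hij hj := restrictTo_commute (hp i (by omega)) (hp j hj) (h.comm i j hij hj)

namespace Equiv.Perm

theorem fin_three_braid : ∀ a b : Perm (Fin 3), a * b * a = b * a * b → a ≠ b →
    a ^ 3 ≠ 1 ∧ ∀ c : Perm (Fin 3), c * a = a * c → c * b = b * c → c = 1 := by
  decide +kernel

theorem braid_of_card_le_three {T : Type*} [Fintype T] (hT : Fintype.card T ≤ 3)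
    {a b : Perm T} (hb : a * b * a = b * a * b) (hab : a ≠ b) :
    Fintype.card T = 3 ∧ a ^ 3 ≠ 1 ∧ ∀ c : Perm T, Commute c a → Commute c b → c = 1 := by
  have key : Fintype.card T = 3 := by
    by_contra h
    have h2 : Fintype.card T ≤ 2 := by omega
    classical
    have : Fintype.card (Perm T) ≤ 2 := by
      rw [Fintype.card_perm]
      exact (Nat.factorial_le h2).trans (by simp)
    have hcomm : Commute a b := by
      by_cases ha : a = 1
      · rw [ha]; exact Commute.one_left _
      by_cases hb1 : b = 1
      · rw [hb1]; exact Commute.one_right _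
      have : ({1, a, b} : Finset (Perm T)).card ≤ 2 := (Finset.card_le_univ _).trans this
      rw [Finset.card_eq_three.2 ⟨1, a, b, Ne.symm ha, Ne.symm hb1, hab, rfl⟩] at this
      omega
    exact hab (hcomm.eq_of_braid hb)
  refine ⟨key, ?_⟩
  let e : Perm T ≃* Perm (Fin 3) := (Fintype.equivFinOfCardEq key).permCongrHom
  have h := fin_three_braid (e a) (e b) (by simp only [← map_mul, hb])
    (e.injective.ne hab)
  refine ⟨fun h3 => h.1 (by rw [← map_pow, h3, map_one]), fun c hca hcb => ?_⟩
  have := h.2 (e c) (by simp only [← map_mul, hca.eq]) (by simp only [← map_mul, hcb.eq])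
  exact e.injective (by rw [this, map_one])

theorem mem_of_nodup_of_card_le {X : Type*} [Fintype X] {l : List X} (hl : l.Nodup)
    (hc : Fintype.card X ≤ l.length) (x : X) : x ∈ l := by
  classical
  have : l.toFinset = Finset.univ := by
    refine Finset.eq_univ_of_card _ (le_antisymm (Finset.card_le_univ _) ?_)
    rwa [List.toFinset_card_of_nodup hl]
  rw [← List.mem_toFinset, this]
  exact Finset.mem_univ x

theorem pow_eq_one_of_isConj {G : Type*} [Group G] {a b : G} (h : IsConj a b) {k : ℕ}
    (ha : a ^ k = 1) : b ^ k = 1 := by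
  obtain ⟨g, rfl⟩ := isConj_iff.1 h
  rw [conj_pow, ha]; simp

theorem sameCycle_of_sq_apply_ne {X : Type*} [Fintype X] (hX : Fintype.card X ≤ 6)
    {a c : Perm X} (hca : Commute c a) (hconj : IsConj c a) {y : X} (hy : c (c y) ≠ y) :
    c.SameCycle y (a y) := by
  by_contra hn
  have hac : ∀ x, a (c x) = c (a x) := fun x => by rw [← mul_apply, ← hca.eq, mul_apply]
  have hy1 : c y ≠ y := fun h => hy (by rw [h, h])
  have hne : ∀ i j : ℕ, (c ^ i) y ≠ (c ^ j) (a y) := by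
    intro i j h
    refine hn ?_
    have h1 : c.SameCycle y ((c ^ i) y) := ⟨i, by simp⟩
    have h2 : c.SameCycle (a y) ((c ^ j) (a y)) := ⟨j, by simp⟩
    rw [h] at h1
    exact h1.trans h2.symm
  have hz : c (c (a y)) ≠ a y := by rw [← hac, ← hac]; exact a.injective.ne hy
  have hz1 : c (a y) ≠ a y := by rw [← hac]; exact a.injective.ne hy1
  have h00 := hne 0 0; have h01 := hne 0 1; have h02 := hne 0 2
  have h10 := hne 1 0; have h11 := hne 1 1; have h12 := hne 1 2
  have h20 := hne 2 0; have h21 := hne 2 1; have h22 := hne 2 2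
  have h30 := hne 3 0; have h31 := hne 3 1; have h32 := hne 3 2
  have h03 := hne 0 3; have h13 := hne 1 3; have h23 := hne 2 3
  simp only [pow_succ, pow_zero, one_mul, mul_apply, one_apply]
    at h00 h01 h02 h10 h11 h12 h20 h21 h22 h30 h31 h32 h03 h13 h23
  have hall : ∀ x, x ∈ [y, c y, c (c y), a y, c (a y), c (c (a y))] := by
    refine mem_of_nodup_of_card_le ?_ (by simpa using hX)
    simp only [List.nodup_cons, List.mem_cons, List.not_mem_nil, or_false, not_or,
      not_false_eq_true, List.nodup_nil, and_true]
    refine ⟨⟨hy1.symm, hy.symm, h00, h01, h02⟩, ⟨(c.injective.ne hy1).symm, h10, h11, h12⟩,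
      ⟨h20, h21, h22⟩, ⟨hz1.symm, hz.symm⟩, (c.injective.ne hz1).symm⟩
  simp only [List.mem_cons, List.not_mem_nil, or_false] at hall
  have h3y : c (c (c y)) = y := by
    rcases hall (c (c (c y))) with h | h | h | h | h | h
    · exact h
    · exact absurd (c.injective h) hy
    · exact absurd (c.injective (c.injective h)) hy1
    · exact absurd h h30
    · exact absurd h h31
    · exact absurd h h32
  have h3z : c (c (c (a y))) = a y := by rw [← hac, ← hac, ← hac, h3y]
  have hc3 : c ^ 3 = 1 := by
    ext x
    simp only [pow_succ, pow_zero, one_mul, mul_apply, one_apply]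
    rcases hall x with h | h | h | h | h | h <;> rw [h] <;> simp only [h3y, h3z]
  have ha3 := pow_eq_one_of_isConj hconj hc3
  have ha3y : a (a (a y)) = y := by
    simpa [pow_succ] using DFunLike.congr_fun ha3 y
  rcases hall (a (a y)) with h | h | h | h | h | h
  · rw [h] at ha3y; exact h00 ha3y.symm
  · rw [h, hac] at ha3y; exact h01 ha3y.symm
  · rw [h, hac, hac] at ha3y; exact h02 ha3y.symm
  · exact h00 (a.injective h).symm
  · rw [← hac] at h; exact h10 (a.injective h).symm
  · rw [← hac, ← hac] at h; exact h20 (a.injective h).symm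

theorem sq_eq_one_of_braid {X : Type*} [Fintype X] (hX : Fintype.card X ≤ 6)
    {a b c : Perm X} (hca : Commute c a) (hcb : Commute c b) (hb : a * b * a = b * a * b)
    (hconja : IsConj c a) (hconjb : IsConj c b) (hab : a ≠ b) (x : X) : c (c x) = x := by
  classical
  by_contra hx
  have hac : ∀ x, a (c x) = c (a x) := fun x => by rw [← mul_apply, ← hca.eq, mul_apply]
  have hbc : ∀ x, b (c x) = c (b x) := fun x => by rw [← mul_apply, ← hcb.eq, mul_apply]
  have hpa : ∀ x, c (c (a x)) ≠ a x ↔ c (c x) ≠ x := fun x => by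
    rw [← hac, ← hac, a.injective.ne_iff]
  have hpb : ∀ x, c (c (b x)) ≠ b x ↔ c (c x) ≠ x := fun x => by
    rw [← hbc, ← hbc, b.injective.ne_iff]
  have hS : ∀ x, c (c x) ≠ x → a x = b x := by
    rw [← restrictTo_eq_iff hpa hpb]
    refine Commute.eq_of_braid ?_ (restrictTo_braid hpa hpb hb)
    ext y
    rw [mul_apply, mul_apply, restrictTo_apply (p := fun x => c (c x) ≠ x) hpa,
      restrictTo_apply (p := fun x => c (c x) ≠ x) hpb,
      restrictTo_apply (p := fun x => c (c x) ≠ x) hpb,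
      restrictTo_apply (p := fun x => c (c x) ≠ x) hpa]
    exact mul_apply_eq_of_sameCycle hca hcb (sameCycle_of_sq_apply_ne hX hca hconja y.2)
      (sameCycle_of_sq_apply_ne hX hcb hconjb y.2)
  let T := {x // c (c x) = x}
  have hta : ∀ x, c (c (a x)) = a x ↔ c (c x) = x := fun x => not_iff_not.1 (hpa x)
  have htb : ∀ x, c (c (b x)) = b x ↔ c (c x) = x := fun x => not_iff_not.1 (hpb x)
  have htc : ∀ x, c (c (c x)) = c x ↔ c (c x) = x := fun x => c.injective.eq_iff
  have hx1 : c x ≠ x := fun h => hx (by rw [h, h])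
  have hcard3 : ({x, c x, c (c x)} : Finset X).card = 3 :=
    Finset.card_eq_three.2 ⟨_, _, _, hx1.symm, Ne.symm hx, (c.injective.ne hx1).symm, rfl⟩
  have hsub : ({x, c x, c (c x)} : Finset X) ⊆ Finset.univ.filter fun x => ¬ c (c x) = x := by
    intro y hy
    simp only [Finset.mem_insert, Finset.mem_singleton] at hy
    rcases hy with rfl | rfl | rfl <;> simpa using hx
  have hsplit := Finset.card_filter_add_card_filter_not (s := (Finset.univ : Finset X))
    (fun x => c (c x) = x)
  rw [Finset.card_univ] at hsplit
  have hcT : Fintype.card T = (Finset.univ.filter fun x => c (c x) = x).card :=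
    Fintype.card_subtype _
  have hle := Finset.card_le_card hsub
  have habT : restrictTo (fun x => c (c x) = x) a ≠ restrictTo (fun x => c (c x) = x) b := by
    rw [Ne, restrictTo_eq_iff hta htb]
    intro h
    refine hab (Equiv.ext fun y => ?_)
    by_cases hy : c (c y) = y
    · exact h y hy
    · exact hS y hy
  obtain ⟨hT3, ha3, hcen⟩ := braid_of_card_le_three (T := T) (by omega)
    (restrictTo_braid hta htb hb) habT
  have hcT1 := hcen _ (restrictTo_commute htc hta hca) (restrictTo_commute htc htb hcb)
  have heq := Finset.eq_of_subset_of_card_le hsub (by omega)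
  have hxm : ∀ y, c (c y) ≠ y → y = x ∨ y = c x ∨ y = c (c x) := by
    intro y hy
    have : y ∈ Finset.univ.filter fun x => ¬ c (c x) = x := by simpa using hy
    rw [← heq] at this
    simpa using this
  have h3x : c (c (c x)) = x := by
    rcases hxm (c (c (c x))) (by simpa using hx) with h | h | h
    · exact h
    · exact absurd (c.injective h) hx
    · exact absurd (c.injective (c.injective h)) hx1
  have hc3 : c ^ 3 = 1 := by
    ext y
    simp only [pow_succ, pow_zero, one_mul, mul_apply, one_apply]
    by_cases hy : c (c y) = y
    · have := congrArg Subtype.val (DFunLike.congr_fun hcT1 ⟨y, hy⟩)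
      rw [restrictTo_apply htc] at this
      rw [hy]; exact this
    · rcases hxm y hy with h | h | h <;> rw [h] <;> simp only [h3x]
  refine ha3 ?_
  have h3 := pow_eq_one_of_isConj hconja hc3
  ext y
  have := DFunLike.congr_fun h3 (y : X)
  simpa only [pow_succ, pow_zero, one_mul, mul_apply, one_apply,
    restrictTo_apply (p := fun x => c (c x) = x) hta] using this

/-- A permutation `c` of six points generating, with some `d` of order three, a regular group. -/
def IsExotic {X : Type*} [Fintype X] (c d : Perm X) : Prop :=
  Fintype.card X = 6 ∧ c * c = 1 ∧ (∀ y, c y ≠ y) ∧ d * d * d = 1 ∧ Commute c d ∧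
    ∃ x, ∀ y, y ∈ [x, d x, d (d x), c x, c (d x), c (d (d x))]

theorem isSwap_or_isExotic_of_braid {X : Type*} [Fintype X] [DecidableEq X]
    (hX : Fintype.card X ≤ 6)
    {a b c : Perm X} (hca : Commute c a) (hcb : Commute c b) (hb : a * b * a = b * a * b)
    (hconja : IsConj c a) (hconjb : IsConj c b) (hab : a ≠ b) :
    (c.IsSwap ∧ 5 ≤ Fintype.card X) ∨ IsExotic c (a * b) := by
  have hcc := sq_eq_one_of_braid hX hca hcb hb hconja hconjb hab
  have hc2 : c ^ 2 = 1 := by ext x; simp [pow_two, hcc]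
  have ha2 := pow_eq_one_of_isConj hconja hc2
  have hb2 := pow_eq_one_of_isConj hconjb hc2
  rw [pow_two] at ha2 hb2
  obtain ⟨d, hd⟩ : ∃ d, d = a * b := ⟨_, rfl⟩
  rw [← hd]
  have hcd : Commute c d := hd ▸ hca.mul_right hcb
  have hd3 : d * d * d = 1 := by
    calc d * d * d = (a * b * a) * (b * a * b) := by rw [hd]; group
      _ = a * b * (a * a) * b * a := by rw [← hb]; group
      _ = a * (b * b) * a := by rw [ha2]; group
      _ = 1 := by rw [hb2, mul_one, ha2]
  have hd1 : d ≠ 1 := by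
    intro h
    refine hab ?_
    calc a = a * (b * b) := by rw [hb2, mul_one]
      _ = b := by rw [← mul_assoc, ← hd, h, one_mul]
  have hcd' : ∀ x, c (d x) = d (c x) := fun x => by rw [← mul_apply, hcd.eq, mul_apply]
  have hddd : ∀ x, d (d (d x)) = x := fun x => DFunLike.congr_fun hd3 x
  obtain ⟨x, hx⟩ : ∃ x, d x ≠ x := by
    by_contra! h
    exact hd1 (Equiv.ext h)
  have hx2 : d (d x) ≠ x := fun h => hx (by conv_rhs => rw [← hddd x, h])
  have hx12 : d (d x) ≠ d x := d.injective.ne hx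
  by_cases hcx : c x = x
  · left
    have hfix : ({x, d x, d (d x)} : Finset X) ⊆ c.supportᶜ := by
      intro y hy
      simp only [Finset.mem_insert, Finset.mem_singleton] at hy
      rcases hy with rfl | rfl | rfl <;> simp [hcd', hcx]
    have hcard3 : ({x, d x, d (d x)} : Finset X).card = 3 :=
      Finset.card_eq_three.2 ⟨_, _, _, hx.symm, hx2.symm, hx12.symm, rfl⟩
    have h1 := Finset.card_le_card hfix
    rw [hcard3, Finset.card_compl] at h1
    have h2 := two_dvd_card_support hc2
    have h3 : c.support.card ≠ 0 := by
      rw [Ne, card_support_eq_zero]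
      intro h
      rw [h] at hconja hconjb
      exact hab ((isConj_one_right.1 hconja).trans (isConj_one_right.1 hconjb).symm)
    exact ⟨card_support_eq_two.1 (by omega), by omega⟩
  · right
    have h1 : c x ≠ d x := by
      intro h
      have := hcc x
      rw [h, hcd', h] at this
      exact hx2 this
    have h2 : c x ≠ d (d x) := by
      intro h
      have := hcc x
      rw [h, hcd', hcd', h, hddd] at this
      exact hx this
    have hnodup : [x, d x, d (d x), c x, c (d x), c (d (d x))].Nodup := by
      simp only [List.nodup_cons, List.mem_cons, List.not_mem_nil, or_false, not_or,
        not_false_eq_true, List.nodup_nil, and_true, hcd']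
      refine ⟨⟨hx.symm, hx2.symm, Ne.symm hcx, ?_, ?_⟩, ⟨hx12.symm, h1.symm, ?_, ?_⟩,
        ⟨h2.symm, ?_, ?_⟩, ⟨?_, ?_⟩, ?_⟩
      · intro h; apply h2; apply d.injective; rw [hddd, ← h]
      · intro h; apply h1; apply d.injective; apply d.injective; rw [hddd, ← h]
      · exact fun h => hcx (d.injective h).symm
      · intro h; apply h2; apply d.injective; rw [hddd, ← d.injective h]
      · exact fun h => h1 (d.injective h).symm
      · exact fun h => hcx (d.injective (d.injective h)).symm
      · rw [← hcd']; exact fun h => hx (c.injective h).symm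
      · rw [← hcd', ← hcd']; exact fun h => hx2 (c.injective h).symm
      · rw [← hcd', ← hcd']; exact fun h => hx12 (c.injective h).symm
    have hall := fun y => mem_of_nodup_of_card_le hnodup (by simpa using hX) y
    refine ⟨le_antisymm hX (by simpa using hnodup.length_le_card), by rw [← pow_two, hc2],
      fun y hy => ?_, hd3, hcd, x, hall⟩
    have := hall y
    simp only [List.mem_cons, List.not_mem_nil, or_false] at this
    refine hcx ?_
    rcases this with h | h | h | h | h | h <;> rw [h] at hy <;>
      simpa only [hcd', EmbeddingLike.apply_eq_iff_eq] using hy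

end Equiv.Perm

section

namespace Equiv.Perm

theorem two_mul_card_cycleFactorsFinset_le {X : Type*} [Fintype X] [DecidableEq X] (f : Perm X) :
    2 * f.cycleFactorsFinset.card ≤ Fintype.card X := by
  have h1 : f.cycleType.card = f.cycleFactorsFinset.card := by
    rw [cycleType_def, Multiset.card_map]; rfl
  have h2 : f.cycleType.card • 2 ≤ f.cycleType.sum :=
    Multiset.card_nsmul_le_sum fun x hx => two_le_of_mem_cycleType hx
  rw [sum_cycleType] at h2
  have h3 := Finset.card_le_univ f.support
  simp only [smul_eq_mul, h1] at h2
  omega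

theorem sameCycle_of_conj_cycleOf_eq {X : Type*} [Fintype X] [DecidableEq X] {c a b : Perm X}
    {x : X} (hx : c x ≠ x)
    (h : b * c.cycleOf x * b⁻¹ = a * c.cycleOf x * a⁻¹) : c.SameCycle x (a⁻¹ (b x)) := by
  have h1 := DFunLike.congr_fun h (b x)
  simp only [mul_apply, coe_inv, symm_apply_apply] at h1
  have h2 : (c.cycleOf x) (a⁻¹ (b x)) ≠ a⁻¹ (b x) := by
    intro h3
    rw [← coe_inv, h3, coe_inv, apply_symm_apply] at h1
    have h4 := b.injective h1
    rw [cycleOf_apply_self] at h4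
    exact hx h4
  by_contra h3
  exact h2 (cycleOf_apply_of_not_sameCycle h3)

end Equiv.Perm

open Equiv Equiv.Perm

/-- Braid sequences of length `m` collapse on sets with at most `k` points. -/
def BraidCollapse.{u} (m k : ℕ) : Prop :=
  ∀ (X : Type u) [Fintype X] (c : ℕ → Perm X), IsBraidSeq m c → Fintype.card X ≤ k → c 0 = c 1

universe u

theorem IsBraidSeq.apply_eq_of_apply_ne {m : ℕ} (hm : 6 ≤ m)
    (hP : BraidCollapse.{u} (m - 2) ((m + 1) / 2)) {X : Type u} [Fintype X] {c : ℕ → Perm X}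
    (h : IsBraidSeq m c) (hX : Fintype.card X ≤ m + 1) {j : ℕ} (hj : 2 ≤ j) (hjm : j < m)
    {x : X} (hx : c 0 x ≠ x) : c j x = c 2 x := by
  classical
  have hcen : ∀ i, 2 ≤ i → i < m → c i ∈ Subgroup.centralizer {c 0} := fun i hi him => by
    rw [Subgroup.mem_centralizer_singleton_iff]; exact (h.comm 0 i hi him).eq.symm
  let g : ℕ → Subgroup.centralizer {c 0} := fun i =>
    if hi : c (i + 2) ∈ Subgroup.centralizer {c 0} then ⟨c (i + 2), hi⟩ else 1
  have hg : ∀ i, i + 2 < m → (g i : Perm X) = c (i + 2) := fun i hi => by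
    simp only [g, hcen (i + 2) (by omega) hi, dif_pos]
  have hgb : IsBraidSeq (m - 2) g :=
    { braid := fun i hi => Subtype.ext (by
        simp only [Subgroup.coe_mul, hg i (by omega), hg (i + 1) (by omega)]
        exact (h.shift 2).braid i hi)
      comm := fun i k hik hk => Subtype.ext (by
        simp only [Subgroup.coe_mul, hg i (by omega), hg k (by omega)]
        exact ((h.shift 2).comm i k hik hk).eq) }
  have hd := hgb.map (OnCycleFactors.toPermHom (c 0))
  have hcard : Fintype.card (c 0).cycleFactorsFinset ≤ (m + 1) / 2 := by
    rw [Fintype.card_coe]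
    have := two_mul_card_cycleFactorsFinset_le (c 0)
    omega
  have h01 := hP _ _ hd hcard
  have hall : ∀ i, i + 2 < m → OnCycleFactors.toPermHom (c 0) (g i) =
      OnCycleFactors.toPermHom (c 0) (g 0) := fun i hi =>
    hd.eq_of_eq_succ (i := 0) (by omega) (by omega) h01
  have hsame : ∀ i, 2 ≤ i → i < m → ∀ x, c 0 x ≠ x →
      (c 0).SameCycle x ((c 2)⁻¹ (c i x)) := by
    intro i hi him x hx
    have hmem : (c 0).cycleOf x ∈ (c 0).cycleFactorsFinset :=
      cycleOf_mem_cycleFactorsFinset_iff.2 (mem_support.2 hx)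
    have h1 := congrArg Subtype.val (DFunLike.congr_fun (hall (i - 2) (by omega)) ⟨_, hmem⟩)
    rw [OnCycleFactors.coe_toPermHom, OnCycleFactors.coe_toPermHom, hg _ (by omega),
      hg _ (by omega), Nat.sub_add_cancel hi] at h1
    exact sameCycle_of_conj_cycleOf_eq hx h1
  have hp : ∀ i, 2 ≤ i → i < m → ∀ x, c 0 (c i x) ≠ c i x ↔ c 0 x ≠ x := fun i hi him x =>
    apply_ne_iff_of_commute (h.comm 0 i hi him).symm x
  set p : X → Prop := fun x => c 0 x ≠ x
  have hr : IsBraidSeq (m - 2) fun i => Perm.restrictTo p (c (i + 2)) :=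
    (h.shift 2).restrictTo fun i hi => hp (i + 2) (by omega) (by omega)
  have h45 : Perm.restrictTo p (c 4) = Perm.restrictTo p (c 5) := by
    refine eq_of_braid_of_commute_mul_inv (a := Perm.restrictTo p (c 2))
      (hr.comm 0 2 (by omega) (by omega)) (hr.comm 0 3 (by omega) (by omega)) ?_
      (hr.braid 2 (by omega))
    have hcom : ∀ i, 4 ≤ i → i < m →
        Perm.restrictTo p (c i) * (Perm.restrictTo p (c 2))⁻¹ =
          Perm.restrictTo p ((c 2)⁻¹ * c i) := by
      intro i hi him
      have h2inv : ∀ x, p ((c 2)⁻¹ x) ↔ p x := fun x =>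
        apply_ne_iff_of_commute (h.comm 0 2 le_rfl (by omega)).symm.inv_left x
      rw [restrictTo_mul h2inv (hp i (by omega) him), restrictTo_inv (hp 2 le_rfl (by omega))]
      have := (hr.comm 0 (i - 2) (by omega) (by omega))
      rw [Nat.sub_add_cancel (by omega)] at this
      exact this.inv_left.eq.symm
    rw [hcom 4 (by omega) (by omega), hcom 5 (by omega) (by omega)]
    have hci : ∀ i, 4 ≤ i → i < m → Commute (c 0) ((c 2)⁻¹ * c i) := fun i hi him =>
      (h.comm 0 2 le_rfl (by omega)).inv_right.mul_right (h.comm 0 i (by omega) him)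
    have hpi : ∀ i, 4 ≤ i → i < m → ∀ x, p (((c 2)⁻¹ * c i) x) ↔ p x := fun i hi him x =>
      apply_ne_iff_of_commute (hci i hi him).symm x
    ext y
    rw [mul_apply, mul_apply, restrictTo_apply (hpi 4 (by omega) (by omega)),
      restrictTo_apply (hpi 5 (by omega) (by omega)),
      restrictTo_apply (hpi 5 (by omega) (by omega)),
      restrictTo_apply (hpi 4 (by omega) (by omega))]
    exact mul_apply_eq_of_sameCycle (hci 4 (by omega) (by omega)) (hci 5 (by omega) (by omega))
      (hsame 4 (by omega) (by omega) _ y.2) (hsame 5 (by omega) (by omega) _ y.2)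
  have hj' := hr.eq_of_eq_succ (i := 2) (j := j - 2) (by omega) (by omega) h45
  simp only [Nat.sub_add_cancel hj] at hj'
  exact (restrictTo_eq_iff (hp j hj hjm) (hp 2 le_rfl (by omega))).1 hj' x hx

theorem IsBraidSeq.apply_eq_apply_zero {m : ℕ} (hm : 6 ≤ m)
    (hP : BraidCollapse.{u} (m - 2) ((m + 1) / 2)) {X : Type u} [Fintype X] {c : ℕ → Perm X}
    (h : IsBraidSeq m c) (hX : Fintype.card X ≤ m + 1) {j : ℕ} (hjm : j < m)
    {x : X} (hx0 : c 0 x ≠ x) (hx2 : c 2 x ≠ x) : c j x = c 0 x := by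
  have h1 : ∀ j, 2 ≤ j → j < m → c j x = c 2 x := fun j hj hjm =>
    h.apply_eq_of_apply_ne hm hP hX hj hjm hx0
  have h2 : ∀ j, j + 2 < m → c j x = c (m - 3) x := by
    intro j hj
    have h3 : c (m - 1 - 0) x ≠ x := by rwa [h1 _ (by omega) (by omega)]
    have := h.reverse.apply_eq_of_apply_ne hm hP hX (j := m - 1 - j) (by omega) (by omega) h3
    rwa [show m - 1 - (m - 1 - j) = j by omega, show m - 1 - 2 = m - 3 by omega] at this
  rcases Nat.lt_or_ge (j + 2) m with hj | hj
  · rw [h2 j hj, h2 0 (by omega)]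
  · rw [h1 j (by omega) hjm, h2 2 (by omega), h2 0 (by omega)]

/-- Shifted supports are pairwise disjoint, so they fit into the set together. -/
theorem card_support_mul_le {X : Type*} [Fintype X] [DecidableEq X] {m : ℕ} {c : ℕ → Perm X}
    {r : Perm X} (hr : ∀ i, i + 1 < m → r * c i = c (i + 1) * r)
    (hdisj : ∀ j, 2 ≤ j → j < m → ∀ x, c 0 x ≠ x → c j x = x) :
    (m + 1) / 2 * (c 0).support.card ≤ Fintype.card X := by
  have hpow : ∀ k i, i + k < m → ∀ x, c (i + k) ((r ^ k) x) = (r ^ k) (c i x) := by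
    intro k
    induction k with
    | zero => simp
    | succ k ih =>
      intro i hi x
      rw [pow_succ', mul_apply, mul_apply, ← ih i (by omega), ← add_assoc,
        ← mul_apply, ← hr (i + k) (by omega), mul_apply]
  have hd : ∀ i j, i + 2 ≤ j → j < m → ∀ x, c i x ≠ x → c j x = x := by
    intro i j hij hj x hx
    obtain ⟨y, rfl⟩ := (r ^ i).surjective x
    have h1 := hpow i 0 (by omega) y
    have h2 := hpow i (j - i) (by omega) y
    rw [zero_add] at h1
    rw [Nat.sub_add_cancel (by omega)] at h2
    rw [h1, Ne, (r ^ i).injective.eq_iff] at hx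
    rw [h2, hdisj _ (by omega) (by omega) y hx]
  have hcard : ∀ i, i < m → (c i).support.card = (c 0).support.card := by
    intro i hi
    have h1 : (r ^ i) * c 0 * (r ^ i)⁻¹ = c i := by
      rw [mul_inv_eq_iff_eq_mul]
      ext x
      have := hpow i 0 (by omega) x
      rw [zero_add] at this
      rw [mul_apply, mul_apply, this]
    rw [← h1, card_support_conj]
  have hU : ((Finset.range ((m + 1) / 2)).biUnion fun i => (c (2 * i)).support).card =
      ∑ i ∈ Finset.range ((m + 1) / 2), (c (2 * i)).support.card := by
    refine Finset.card_biUnion fun i hi j hj hij => ?_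
    rw [Finset.mem_coe, Finset.mem_range] at hi hj
    rw [Function.onFun, Finset.disjoint_left]
    intro x hx hx'
    rw [mem_support] at hx hx'
    rcases lt_or_gt_of_ne hij with h | h
    · exact hx' (hd (2 * i) (2 * j) (by omega) (by omega) x hx)
    · exact hx (hd (2 * j) (2 * i) (by omega) (by omega) x hx')
  rw [Finset.sum_congr rfl fun i hi => hcard (2 * i) (by rw [Finset.mem_range] at hi; omega),
    Finset.sum_const, Finset.card_range, smul_eq_mul] at hU
  rw [← hU]
  exact Finset.card_le_univ _

theorem braidCollapse_of_le_five {m : ℕ} (hm : 4 ≤ m) (hm5 : m ≤ 5) :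
    BraidCollapse.{u} m ((m + 3) / 2) := by
  intro X _ c h hX
  classical
  refine (h.eq_of_eq_succ (i := 2) (j := 1) (by omega) (by omega) ?_).symm
  by_contra h23
  rcases isSwap_or_isExotic_of_braid (by omega) (h.comm 0 2 le_rfl (by omega))
    (h.comm 0 3 (by omega) (by omega)) (h.braid 2 (by omega)) (h.isConj (by omega) (by omega))
    (h.isConj (by omega) (by omega)) h23 with h1 | h1
  · omega
  · have := h1.1; omega

theorem eq_of_commonMoved_invariant {X : Type*} [Fintype X] [DecidableEq X] {c : ℕ → Perm X}
    {m : ℕ} (hall : ∀ x, c 0 x ≠ x → c 2 x ≠ x → ∀ j < m, c j x = c 0 x) {i : ℕ} (hi : i < m)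
    (h2 : 2 < m) (x : X) (hx : c 0 x ≠ x ∧ c 2 x ≠ x) :
    c 0 (c i x) ≠ c i x ∧ c 2 (c i x) ≠ c i x := by
  rw [hall x hx.1 hx.2 i hi]
  refine ⟨(c 0).injective.ne hx.1, ?_⟩
  rw [← hall x hx.1 hx.2 2 h2]
  exact (c 2).injective.ne hx.2

theorem braidCollapse_step {m : ℕ} (hm : 6 ≤ m) (hP : BraidCollapse.{u} (m - 2) ((m + 1) / 2)) :
    BraidCollapse.{u} m ((m + 3) / 2) := by
  intro X _ c h hX
  induction hN : Fintype.card X using Nat.strong_induction_on generalizing X with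
  | _ N ih =>
  subst hN
  classical
  have hX' : Fintype.card X ≤ m + 1 := by omega
  have hall : ∀ x, c 0 x ≠ x → c 2 x ≠ x → ∀ j < m, c j x = c 0 x := fun x hx0 hx2 j hj =>
    h.apply_eq_apply_zero hm hP hX' hj hx0 hx2
  by_cases hY : ∃ x, c 0 x ≠ x ∧ c 2 x ≠ x
  · obtain ⟨y, hy⟩ := hY
    let p : X → Prop := fun x => ¬ (c 0 x ≠ x ∧ c 2 x ≠ x)
    have hp : ∀ i < m, ∀ x, p (c i x) ↔ p x := fun i hi x =>
      not_congr (mem_iff_of_imp (p := fun x => c 0 x ≠ x ∧ c 2 x ≠ x)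
        (eq_of_commonMoved_invariant hall hi (by omega)) x)
    have hlt : Fintype.card {x // p x} < Fintype.card X :=
      Fintype.card_subtype_lt (x := y) (by simpa [p] using hy)
    have := ih _ hlt _ _ (h.restrictTo hp) (by omega) rfl
    rw [restrictTo_eq_iff (hp 0 (by omega)) (hp 1 (by omega))] at this
    ext x
    by_cases hx : p x
    · exact this x hx
    · rw [not_not] at hx
      exact (hall x hx.1 hx.2 1 (by omega)).symm
  · push Not at hY
    have hle := card_support_mul_le (m := m) (c := c) (r := prefixProd c m)
      (fun i hi => h.prefixProd_mul hi le_rfl) (fun j hj hjm x hx => by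
        rw [h.apply_eq_of_apply_ne hm hP hX' hj hjm hx]; exact hY x hx)
    have h0 : c 0 = 1 := by
      by_contra h0
      have h1 := two_le_card_support_of_ne_one h0
      have := Nat.mul_le_mul_left ((m + 1) / 2) h1
      omega
    have := h.isConj (i := 0) (j := 1) (by omega) (by omega)
    rw [h0] at this ⊢
    exact (isConj_one_right.1 this).symm

theorem braidCollapse {m : ℕ} (hm : 4 ≤ m) : BraidCollapse.{u} m ((m + 3) / 2) := by
  induction m using Nat.strong_induction_on with
  | _ m ih =>
  rcases Nat.lt_or_ge m 6 with h | h
  · exact braidCollapse_of_le_five hm (by omega)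
  · refine braidCollapse_step h ?_
    have := ih (m - 2) (by omega) (by omega)
    rwa [show m - 2 + 3 = m + 1 by omega] at this

/-- Braid sequences of length `n - 1` in a transitive group on `n` points, cyclically shifted
by an element of that group. -/
theorem IsBraidSeq.isSwap_or_isExotic {n : ℕ} (hn : 5 ≤ n) {X : Type u} [Fintype X]
    [DecidableEq X] (hX : Fintype.card X = n) {c : ℕ → Perm X} (h : IsBraidSeq (n - 1) c)
    {r : Perm X} (hr : ∀ i, i + 1 < n - 1 → r * c i = c (i + 1) * r) (h01 : c 0 ≠ c 1)
    (htr : ∀ p : X → Prop, (∃ x, p x) → (∀ x, p x → p (r x)) →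
      (∀ i < n - 1, ∀ x, p x → p (c i x)) → ∀ x, p x) :
    (c 0).IsSwap ∨ (n = 6 ∧ IsExotic (c 0) (c 2 * c 3)) := by
  rcases Nat.lt_or_ge n 7 with h7 | h7
  · have h23 : c 2 ≠ c 3 := fun h23 =>
      h01 (h.eq_of_eq_succ (i := 2) (j := 1) (by omega) (by omega) h23).symm
    rcases isSwap_or_isExotic_of_braid (by omega) (h.comm 0 2 le_rfl (by omega))
      (h.comm 0 3 (by omega) (by omega)) (h.braid 2 (by omega)) (h.isConj (by omega) (by omega))
      (h.isConj (by omega) (by omega)) h23 with h1 | h1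
    · exact Or.inl h1.1
    · exact Or.inr ⟨by rw [← hX, h1.1], h1⟩
  · left
    have hP : BraidCollapse.{u} (n - 1 - 2) ((n - 1 + 1) / 2) := by
      have := braidCollapse.{u} (m := n - 1 - 2) (by omega)
      rwa [show n - 1 - 2 + 3 = n - 1 + 1 by omega] at this
    have hX' : Fintype.card X ≤ n - 1 + 1 := by omega
    have hall : ∀ x, c 0 x ≠ x → c 2 x ≠ x → ∀ j < n - 1, c j x = c 0 x :=
      fun x hx0 hx2 j hj => h.apply_eq_apply_zero (by omega) hP hX' hj hx0 hx2
    have hY : ∀ x, c 0 x ≠ x → c 2 x = x := by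
      by_contra! hY
      let p : X → Prop := fun x => c 0 x ≠ x ∧ c 2 x ≠ x
      have hrp : ∀ x, p (r x) ↔ p x := by
        have hinv : ∀ x, p x → p (r⁻¹ x) := by
          intro x hx
          have key : ∀ i, i + 1 < n - 1 → c i (r⁻¹ x) = r⁻¹ (c (i + 1) x) := fun i hi => by
            have : c i * r⁻¹ = r⁻¹ * c (i + 1) := by
              rw [eq_inv_mul_iff_mul_eq, ← mul_assoc, hr i hi, mul_inv_cancel_right]
            rw [← mul_apply, this, mul_apply]
          simp only [p]
          rw [key 0 (by omega), key 2 (by omega), hall x hx.1 hx.2 (0 + 1) (by omega),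
            hall x hx.1 hx.2 (2 + 1) (by omega)]
          exact ⟨(r⁻¹).injective.ne hx.1, (r⁻¹).injective.ne hx.1⟩
        intro x
        have := mem_iff_of_imp (p := p) hinv (r x)
        rw [coe_inv, symm_apply_apply] at this
        exact this.symm
      have huniv := htr p hY (fun x hx => (hrp x).2 hx) fun i hi x hx =>
        eq_of_commonMoved_invariant hall hi (by omega) x hx
      refine h01 (Equiv.ext fun x => ?_)
      exact (hall x (huniv x).1 (huniv x).2 1 (by omega)).symm
    have hle := card_support_mul_le (m := n - 1) hr (fun j hj hjm x hx => by
      rw [h.apply_eq_of_apply_ne (by omega) hP hX' hj hjm hx]; exact hY x hx)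
    have h0 : c 0 ≠ 1 := by
      intro h0
      have := h.isConj (i := 0) (j := 1) (by omega) (by omega)
      rw [h0] at this
      exact h01 (h0.trans (isConj_one_right.1 this).symm)
    have h1 := two_le_card_support_of_ne_one h0
    refine card_support_eq_two.1 (le_antisymm ?_ h1)
    by_contra h3
    have := Nat.mul_le_mul_left ((n - 1 + 1) / 2) (show 3 ≤ (c 0).support.card by omega)
    omega

theorem Equiv.Perm.eq_of_commute_swap {X : Type*} [DecidableEq X] {p q q' : X} (hq : q ≠ p)
    (hq' : q' ≠ p) (h : Commute (swap p q) (swap p q')) : q = q' := by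
  by_contra hne
  have h1 := DFunLike.congr_fun h.eq p
  simp only [mul_apply, swap_apply_left] at h1
  rw [swap_apply_of_ne_of_ne hq' (Ne.symm hne), swap_apply_of_ne_of_ne hq hne] at h1
  exact hne h1.symm

theorem eq_conj_pow_of_shift {G : Type*} [Group G] {m : ℕ} {c : ℕ → G} {r : G}
    (hr : ∀ i, i + 1 < m → r * c i = c (i + 1) * r) {i : ℕ} (hi : i < m) :
    c i = r ^ i * c 0 * (r ^ i)⁻¹ := by
  induction i with
  | zero => simp
  | succ i ih =>
    rw [eq_mul_inv_of_mul_eq (hr i hi).symm, ih (by omega), pow_succ']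
    group

theorem IsBraidSeq.exists_coordinates {n : ℕ} (hn : 5 ≤ n) {X : Type*} [Fintype X]
    [DecidableEq X] (hX : Fintype.card X = n) {c : ℕ → Perm X} (h : IsBraidSeq (n - 1) c)
    {r : Perm X} (hr : ∀ i, i + 1 < n - 1 → r * c i = c (i + 1) * r) (h01 : c 0 ≠ c 1)
    (htr : ∀ p : X → Prop, (∃ x, p x) → (∀ x, p x → p (r x)) →
      (∀ i < n - 1, ∀ x, p x → p (c i x)) → ∀ x, p x)
    (hs : (c 0).IsSwap) :
    ∃ x : ℕ → X, (∀ y, ∃ i < n, x i = y) ∧ (∀ i < n, ∀ j < n, x i = x j → i = j) ∧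
      ∀ i < n - 1, c i = swap (x i) (x (i + 1)) := by
  obtain ⟨a, b, hab, hc0⟩ := hs
  have hci : ∀ p q, c 0 = swap p q → ∀ i < n - 1, c i = swap ((r ^ i) p) ((r ^ i) q) := by
    intro p q hpq i hi
    rw [eq_conj_pow_of_shift hr hi, hpq, mul_swap_eq_swap_mul, mul_inv_cancel_right]
  have hnofix : ∀ p q, p ≠ q → c 0 = swap p q → r p ≠ p := by
    intro p q hpq hc hp
    have h2 := hci p q hc 2 (by omega)
    have hp2 : (r ^ 2) p = p := by rw [pow_two, mul_apply, hp, hp]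
    have hq2 : (r ^ 2) q ≠ p := by
      intro h; exact hpq ((r ^ 2).injective (hp2.trans h.symm))
    rw [hp2] at h2
    have hcomm := h.comm 0 2 le_rfl (by omega)
    rw [hc, h2] at hcomm
    have hqq := eq_of_commute_swap hpq.symm hq2 hcomm
    have h02 : c 0 = c 2 := by rw [hc, h2, ← hqq]
    have h13 : c 1 = c 3 := by
      rw [eq_mul_inv_of_mul_eq (hr 0 (by omega)).symm, h02,
        eq_mul_inv_of_mul_eq (hr 2 (by omega)).symm]
    have hc01 := h.comm 0 3 (by omega) (by omega)
    rw [← h13] at hc01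
    exact h01 (hc01.eq_of_braid (h.braid 0 (by omega)))
  obtain ⟨p, hp0, hp⟩ : ∃ p, p ≠ r p ∧ c 0 = swap p (r p) := by
    by_cases h1 : b = r a
    · exact ⟨a, h1 ▸ hab, h1 ▸ hc0⟩
    by_cases h2 : a = r b
    · exact ⟨b, h2 ▸ hab.symm, by rw [← h2, hc0, swap_comm]⟩
    exfalso
    have hra := hnofix a b hab hc0
    have hrb := hnofix b a hab.symm (by rw [hc0, swap_comm])
    have hc1 := hci a b hc0 1 (by omega)
    rw [pow_one] at hc1
    have hd : Perm.Disjoint (c 0) (c 1) := by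
      rw [hc0, hc1]
      intro y
      by_cases hya : y = a
      · right; rw [hya]; exact swap_apply_of_ne_of_ne hra.symm h2
      by_cases hyb : y = b
      · right; rw [hyb]; exact swap_apply_of_ne_of_ne h1 hrb.symm
      · left; exact swap_apply_of_ne_of_ne hya hyb
    exact h01 (hd.commute.eq_of_braid (h.braid 0 (by omega)))
  have hc : ∀ i < n - 1, c i = swap ((r ^ i) p) ((r ^ (i + 1)) p) := by
    intro i hi
    rw [hci p _ hp i hi, pow_succ, mul_apply]
  have hall : ∀ y, ∃ k : ℕ, (r ^ k) p = y := by
    refine htr _ ⟨p, 0, by simp⟩ ?_ ?_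
    · rintro _ ⟨k, rfl⟩
      exact ⟨k + 1, by rw [pow_succ', mul_apply]⟩
    · rintro i hi _ ⟨k, rfl⟩
      rw [hc i hi, swap_apply_def]
      split_ifs
      · exact ⟨_, rfl⟩
      · exact ⟨_, rfl⟩
      · exact ⟨_, rfl⟩
  have hsurj : ∀ y, ∃ i < n, (r ^ i) p = y := by
    intro y
    obtain ⟨k, hk⟩ := hall y
    have hsc : r.SameCycle p y := ⟨k, by simpa using hk⟩
    obtain ⟨i, hi, hiy⟩ := hsc.exists_pow_eq_of_mem_support (mem_support.2 hp0.symm)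
    exact ⟨i, hi.trans_le (hX ▸ Finset.card_le_univ _), hiy⟩
  refine ⟨fun i => (r ^ i) p, hsurj, ?_, hc⟩
  have hbij : Function.Bijective fun i : Fin n => (r ^ (i : ℕ)) p := by
    rw [Fintype.bijective_iff_surjective_and_card]
    refine ⟨fun y => ?_, by simp [hX]⟩
    obtain ⟨i, hi, h⟩ := hsurj y
    exact ⟨⟨i, hi⟩, h⟩
  intro i hi j hj hij
  exact congrArg Fin.val (hbij.1 (a₁ := ⟨i, hi⟩) (a₂ := ⟨j, hj⟩) hij)

end

/-- A sequence `c 0, …, c (n - 1)` satisfying the Artin relations of type `Bₙ`. -/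
structure IsArtinBSeq {G : Type*} [Group G] (n : ℕ) (c : ℕ → G) : Prop where
  isBraidSeq : IsBraidSeq (n - 1) c
  comm_last : ∀ i, i + 2 < n → Commute (c i) (c (n - 1))
  four : c (n - 2) * c (n - 1) * c (n - 2) * c (n - 1) =
    c (n - 1) * c (n - 2) * c (n - 1) * c (n - 2)

theorem prefixProd_shift {G : Type*} [Group G] {c : ℕ → G} {r : G} {k : ℕ}
    (hr : ∀ i < k, r * c i = c (i + 1) * r) :
    r * prefixProd c k = prefixProd (fun i => c (i + 1)) k * r := by
  induction k with
  | zero => simp [prefixProd]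
  | succ k ih =>
    rw [prefixProd, ← mul_assoc, ih fun i hi => hr i (by omega), mul_assoc, hr k (by omega),
      ← mul_assoc]
    rfl

theorem mul_prefixProd_succ {G : Type*} [Group G] (c : ℕ → G) (k : ℕ) :
    c 0 * prefixProd (fun i => c (i + 1)) k = prefixProd c (k + 1) := by
  induction k with
  | zero => simp [prefixProd]
  | succ k ih => rw [prefixProd, ← mul_assoc, ih]; rfl

namespace IsArtinBSeq

variable {G : Type*} [Group G] {n : ℕ} {c : ℕ → G}

theorem prefixProd_mul (h : IsArtinBSeq n c) {i : ℕ} (hi : i + 1 < n - 1) :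
    prefixProd c n * c i = c (i + 1) * prefixProd c n := by
  obtain ⟨k, rfl⟩ : ∃ k, n = k + 2 := ⟨n - 2, by omega⟩
  have h1 := h.isBraidSeq.prefixProd_mul (k := k + 1) (i := i) (by omega) le_rfl
  have h2 := (h.comm_last i (by omega)).eq
  simp only [Nat.add_succ_sub_one] at h2
  change prefixProd c (k + 1) * c (k + 1) * c i = c (i + 1) * (prefixProd c (k + 1) * c (k + 1))
  rw [mul_assoc, ← h2, ← mul_assoc, h1, mul_assoc]

theorem prefixProd_sq_mul (h : IsArtinBSeq n c) (hn : 2 ≤ n) :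
    prefixProd c n ^ 2 * c (n - 2) = c 0 * prefixProd c n ^ 2 := by
  obtain ⟨k, rfl⟩ : ∃ k, n = k + 2 := ⟨n - 2, by omega⟩
  have hρ : prefixProd c (k + 2) = prefixProd c k * c k * c (k + 1) := rfl
  have hbv : Commute (prefixProd c k) (c (k + 1)) := by
    have : ∀ j ≤ k, Commute (prefixProd c j) (c (k + 1)) := by
      intro j
      induction j with
      | zero => exact fun _ => Commute.one_left _
      | succ j ih => exact fun hj => (ih (by omega)).mul_left (h.comm_last j (by omega))
    exact this k le_rfl
  have hshift := prefixProd_shift (r := prefixProd c (k + 2)) (k := k) (c := c)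
    fun i hi => h.prefixProd_mul (by omega)
  have hfour := h.four
  simp only [Nat.add_sub_cancel, Nat.add_succ_sub_one] at hfour ⊢
  have h1 : c 0 * prefixProd c (k + 2) * prefixProd c k =
      prefixProd c k * c k * prefixProd c (k + 2) := by
    rw [mul_assoc, hshift, ← mul_assoc, mul_prefixProd_succ]; rfl
  symm
  calc c 0 * prefixProd c (k + 2) ^ 2
      = c 0 * prefixProd c (k + 2) * prefixProd c k * (c k * c (k + 1)) := by
        conv_lhs => rw [pow_two]; rw [show prefixProd c (k + 2) * prefixProd c (k + 2) =
          prefixProd c (k + 2) * (prefixProd c k * c k * c (k + 1)) from rfl]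
        group
    _ = prefixProd c k * c k * prefixProd c k * (c k * c (k + 1) * c k * c (k + 1)) := by
        rw [h1, hρ]; group
    _ = prefixProd c k * c k * (prefixProd c k * c (k + 1)) * c k * c (k + 1) * c k := by
        rw [hfour]; group
    _ = prefixProd c (k + 2) ^ 2 * c k := by
        rw [hbv.eq, pow_two, hρ]; group

theorem prefixProd_pow_commute (h : IsArtinBSeq n c) (hn : 2 ≤ n) {i : ℕ} (hi : i < n - 1) :
    Commute (prefixProd c n ^ n) (c i) := by
  have hup : ∀ k i, i + k < n - 1 →
      prefixProd c n ^ k * c i = c (i + k) * prefixProd c n ^ k := by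
    intro k
    induction k with
    | zero => simp
    | succ k ih =>
      intro i hi
      rw [pow_succ', mul_assoc, ih i (by omega), ← mul_assoc, h.prefixProd_mul (by omega),
        mul_assoc, add_assoc]
  have h1 := hup (n - 2 - i) i (by omega)
  have h2 := h.prefixProd_sq_mul hn
  have h3 := hup i 0 (by omega)
  rw [show i + (n - 2 - i) = n - 2 by omega] at h1
  rw [zero_add] at h3
  have hsplit : prefixProd c n ^ n =
      prefixProd c n ^ i * prefixProd c n ^ 2 * prefixProd c n ^ (n - 2 - i) := by
    rw [← pow_add, ← pow_add]; congr 1; omega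
  rw [Commute, SemiconjBy, hsplit, mul_assoc, h1, ← mul_assoc, mul_assoc _ _ (c (n - 2)), h2,
    ← mul_assoc, h3]
  simp only [mul_assoc]

end IsArtinBSeq

section ArtinB

variable {n : ℕ}

theorem rB_succ {i : ℕ} (hi : i < n) : rB n (i + 1) = PresentedGroup.of ⟨i, hi⟩ := by
  simp [rB, hi]

theorem isArtinBSeq_rB (hn : 2 ≤ n) : IsArtinBSeq n fun i => rB n (i + 1) where
  isBraidSeq :=
    { braid := fun i hi => by
        rw [rB_succ (show i < n by omega), rB_succ (show i + 1 < n by omega)]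
        exact PresentedGroup.mk_eq_mk_of_mul_inv_mem
          (Or.inl ⟨⟨i, by omega⟩, ⟨i + 1, by omega⟩, rfl, by simp; omega, rfl⟩)
      comm := fun i j hij hj => by
        rw [rB_succ (show i < n by omega), rB_succ (show j < n by omega)]
        exact PresentedGroup.mk_eq_mk_of_mul_inv_mem
          (Or.inr (Or.inr ⟨⟨i, by omega⟩, ⟨j, by omega⟩, hij, rfl⟩)) }
  comm_last i hi := by
    rw [rB_succ (show i < n by omega), rB_succ (show n - 1 < n by omega)]
    exact PresentedGroup.mk_eq_mk_of_mul_inv_mem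
      (Or.inr (Or.inr ⟨⟨i, by omega⟩, ⟨n - 1, by omega⟩, by simp; omega, rfl⟩))
  four := by
    rw [rB_succ (show n - 2 < n by omega), rB_succ (show n - 1 < n by omega)]
    exact PresentedGroup.mk_eq_mk_of_mul_inv_mem
      (Or.inr (Or.inl ⟨⟨n - 2, by omega⟩, ⟨n - 1, by omega⟩, by simp; omega, by simp; omega, rfl⟩))

theorem ρB_eq_prefixProd : ρB n = prefixProd (fun i => rB n (i + 1)) n := by
  have : ∀ k, ((List.range k).map fun i => rB n (i + 1)).prod =
      prefixProd (fun i => rB n (i + 1)) k := by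
    intro k
    induction k with
    | zero => rfl
    | succ k ih => rw [List.range_succ, List.map_append, List.prod_append, ih]; simp [prefixProd]
  exact this n

/-- The homomorphism out of `A[Bₙ]` defined by a sequence satisfying the relations. -/
def ArtinB.lift {G : Type*} [Group G] (n : ℕ) (c : ℕ → G) (h : IsArtinBSeq n c) :
    ArtinB n →* G :=
  PresentedGroup.toGroup (f := fun i : Fin n => c i) (by
    rintro w (⟨i, j, hij, hj, rfl⟩ | ⟨i, j, hi, hj, rfl⟩ | ⟨i, j, hij, rfl⟩)
    · simp only [map_mul, map_inv, FreeGroup.lift_apply_of]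
      rw [mul_inv_eq_one, ← hij]
      exact h.isBraidSeq.braid i (by omega)
    · simp only [map_mul, map_inv, FreeGroup.lift_apply_of]
      rw [mul_inv_eq_one, show (i : ℕ) = n - 2 by omega, show (j : ℕ) = n - 1 by omega]
      exact h.four
    · simp only [map_mul, map_inv, FreeGroup.lift_apply_of]
      rw [mul_inv_eq_one]
      rcases Nat.lt_or_ge j (n - 1) with h1 | h1
      · exact h.isBraidSeq.comm i j hij h1
      · rw [show (j : ℕ) = n - 1 by omega]
        exact h.comm_last i (by omega))

theorem ArtinB.lift_rB {G : Type*} [Group G] {c : ℕ → G} (h : IsArtinBSeq n c) {i : ℕ}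
    (hi : i < n) : ArtinB.lift n c h (rB n (i + 1)) = c i := by
  rw [rB_succ hi, ArtinB.lift, PresentedGroup.toGroup.of]

theorem ArtinB.eq_top_of_rB_mem {K : Subgroup (ArtinB n)} (h : ∀ i < n, rB n (i + 1) ∈ K) :
    K = ⊤ := by
  rw [eq_top_iff]
  exact fun x _ => PresentedGroup.generated_by _ K (fun j => by
    have := h j j.2
    rwa [rB_succ j.2] at this) x

theorem prefixProd_mem {G : Type*} [Group G] {K : Subgroup G} {c : ℕ → G} {k : ℕ}
    (h : ∀ i < k, c i ∈ K) : prefixProd c k ∈ K := by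
  induction k with
  | zero => exact K.one_mem
  | succ k ih => exact K.mul_mem (ih fun i hi => h i (by omega)) (h k (by omega))

theorem ArtinB.eq_top_of_mem (hn : 2 ≤ n) {K : Subgroup (ArtinB n)}
    (h : ∀ i < n - 1, rB n (i + 1) ∈ K) (hρ : ρB n ∈ K) : K = ⊤ := by
  refine eq_top_of_rB_mem fun i hi => ?_
  rcases Nat.lt_or_ge i (n - 1) with h1 | h1
  · exact h i h1
  · obtain rfl : i = n - 1 := by omega
    have h2 : ρB n = prefixProd (fun i => rB n (i + 1)) (n - 1) * rB n (n - 1 + 1) := by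
      have : ∀ k, k = n - 1 + 1 → prefixProd (fun i => rB n (i + 1)) k =
          prefixProd (fun i => rB n (i + 1)) (n - 1) * rB n (n - 1 + 1) := by
        rintro k rfl; rfl
      rw [ρB_eq_prefixProd, this n (by omega)]
    have h3 := K.mul_mem (K.inv_mem (prefixProd_mem (K := K) h)) hρ
    rwa [h2, inv_mul_cancel_left] at h3

theorem ρB_mul_rB (hn : 2 ≤ n) {i : ℕ} (hi : i + 1 < n - 1) :
    ρB n * rB n (i + 1) = rB n (i + 1 + 1) * ρB n := by
  rw [ρB_eq_prefixProd]; exact (isArtinBSeq_rB hn).prefixProd_mul hi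

theorem ρB_pow_mem_center (hn : 2 ≤ n) : ρB n ^ n ∈ Subgroup.center (ArtinB n) := by
  have : Subgroup.centralizer {ρB n ^ n} = ⊤ := by
    refine ArtinB.eq_top_of_mem hn (fun i hi => ?_) ?_
    · rw [Subgroup.mem_centralizer_singleton_iff, ρB_eq_prefixProd]
      exact ((isArtinBSeq_rB hn).prefixProd_pow_commute hn hi).eq.symm
    · rw [Subgroup.mem_centralizer_singleton_iff]
      exact (Commute.self_pow _ _).eq
  rw [Subgroup.mem_center_iff]
  intro g
  have hg : g ∈ Subgroup.centralizer {ρB n ^ n} := this ▸ Subgroup.mem_top g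
  exact Subgroup.mem_centralizer_singleton_iff.1 hg

theorem tB_eq_rB {i : ℕ} (h0 : 0 < i) (hi : i < n) : tB n i = rB n i := by
  rw [tB, Nat.mod_eq_of_lt hi, if_neg (by omega)]

theorem tB_zero : tB n 0 = ρB n * rB n (n - 1) * (ρB n)⁻¹ := by
  simp [tB]

theorem isConj_tB (hn : 2 ≤ n) {i : ℕ} (hi : i < n) : IsConj (tB n 1) (tB n i) := by
  have h1 : ∀ j, 0 < j → j < n → IsConj (tB n 1) (tB n j) := by
    intro j hj hjn
    rw [tB_eq_rB one_pos (by omega), tB_eq_rB hj hjn]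
    have := (isArtinBSeq_rB hn).isBraidSeq.isConj (i := 0) (j := j - 1) (by omega) (by omega)
    rwa [Nat.sub_add_cancel hj] at this
  rcases Nat.eq_zero_or_pos i with rfl | h0
  · refine (h1 (n - 1) (by omega) (by omega)).trans ?_
    rw [tB_zero, tB_eq_rB (by omega) (by omega)]
    exact isConj_iff.2 ⟨_, rfl⟩
  · exact h1 i h0 hi

/-- The subgroup of `A[Bₙ]` generated by `t_0, …, t_{n-1}`. -/
def tSubgroup (n : ℕ) : Subgroup (ArtinB n) := Subgroup.closure {x | ∃ i < n, x = tB n i}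

theorem tB_mem_tSubgroup {i : ℕ} (hi : i < n) : tB n i ∈ tSubgroup n :=
  Subgroup.subset_closure ⟨i, hi, rfl⟩

theorem ρB_mul_tB (hn : 2 ≤ n) {i : ℕ} (hi : i < n) :
    ρB n * tB n i * (ρB n)⁻¹ = tB n ((i + 1) % n) := by
  rcases Nat.eq_zero_or_pos i with rfl | h0
  · have h := (isArtinBSeq_rB hn).prefixProd_sq_mul hn
    rw [← ρB_eq_prefixProd] at h
    rw [Nat.mod_eq_of_lt (by omega), zero_add, tB_zero, tB_eq_rB one_pos (by omega)]
    rw [show n - 2 + 1 = n - 1 by omega, zero_add, ← eq_mul_inv_iff_mul_eq] at h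
    rw [mul_inv_eq_iff_eq_mul, ← mul_assoc, ← mul_assoc, mul_inv_eq_iff_eq_mul, ← pow_two, h,
      inv_mul_cancel_right, pow_two, mul_assoc]
  · rcases Nat.lt_or_ge (i + 1) n with h1 | h1
    · rw [Nat.mod_eq_of_lt h1, tB_eq_rB h0 hi, tB_eq_rB (by omega) h1, mul_inv_eq_iff_eq_mul]
      have := ρB_mul_rB hn (i := i - 1) (by omega)
      rwa [Nat.sub_add_cancel h0] at this
    · obtain rfl : i = n - 1 := by omega
      rw [Nat.sub_add_cancel (by omega), Nat.mod_self, tB_zero, tB_eq_rB h0 hi]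

theorem tSubgroup_normal (hn : 2 ≤ n) : (tSubgroup n).Normal := by
  have hmap : Subgroup.map (MulAut.conj (ρB n)).toMonoidHom (tSubgroup n) = tSubgroup n := by
    rw [tSubgroup, MonoidHom.map_closure]
    congr 1
    ext x
    constructor
    · rintro ⟨_, ⟨i, hi, rfl⟩, rfl⟩
      exact ⟨(i + 1) % n, Nat.mod_lt _ (by omega), ρB_mul_tB hn hi⟩
    · rintro ⟨i, hi, rfl⟩
      refine ⟨_, ⟨(i + (n - 1)) % n, Nat.mod_lt _ (by omega), rfl⟩, ?_⟩
      have := ρB_mul_tB hn (Nat.mod_lt (i + (n - 1)) (show 0 < n by omega))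
      rw [Nat.mod_add_mod, show i + (n - 1) + 1 = i + n by omega, Nat.add_mod_right,
        Nat.mod_eq_of_lt hi] at this
      exact this
  rw [← Subgroup.normalizer_eq_top_iff]
  refine ArtinB.eq_top_of_mem hn (fun i hi => ?_) ?_
  · refine Subgroup.le_normalizer ?_
    rw [← tB_eq_rB (by omega) (by omega)]
    exact tB_mem_tSubgroup (by omega)
  · rw [Subgroup.mem_normalizer_iff]
    intro h
    constructor
    · intro hh
      rw [← hmap]; exact ⟨h, hh, rfl⟩
    · intro hh
      rw [← hmap] at hh
      obtain ⟨y, hy, hyh⟩ := hh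
      have : y = h := (MulAut.conj (ρB n)).injective hyh
      exact this ▸ hy

theorem exists_mem_tSubgroup_mul_zpow (hn : 2 ≤ n) (g : ArtinB n) :
    ∃ h ∈ tSubgroup n, ∃ k : ℤ, h * ρB n ^ k = g := by
  have := tSubgroup_normal hn
  have htop : tSubgroup n ⊔ Subgroup.zpowers (ρB n) = ⊤ := by
    refine ArtinB.eq_top_of_mem hn (fun i hi => ?_)
      (Subgroup.mem_sup_right (Subgroup.mem_zpowers _))
    rw [← tB_eq_rB (by omega) (by omega)]
    exact Subgroup.mem_sup_left (tB_mem_tSubgroup (by omega))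
  have hg : g ∈ tSubgroup n ⊔ Subgroup.zpowers (ρB n) := htop ▸ Subgroup.mem_top g
  obtain ⟨h, hh, _, ⟨k, rfl⟩, hk⟩ := Subgroup.mem_sup_of_normal_left.1 hg
  exact ⟨h, hh, k, hk⟩

end ArtinB

/-- Triples of pairwise linking numbers, a triple invariant and a permutation, multiplied by
a quadratic cocycle. -/
@[ext]
structure LinkData where
  lk : ℕ → ℕ → ℤ
  tri : ℕ → ℕ → ℕ → ℤ
  perm : Equiv.Perm ℕ

namespace LinkData

/-- The determinant with rows `(1, 1, 1)`, `(f pq, f qr, f rp)`, `(g pq, g qr, g rp)`. -/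
def bracket (f g : ℕ → ℕ → ℤ) (p q r : ℕ) : ℤ :=
  (f q r * g r p - f r p * g q r) - (f p q * g r p - f r p * g p q) +
    (f p q * g q r - f q r * g p q)

instance : Mul LinkData where
  mul x y :=
    { lk := fun a b => x.lk a b + y.lk (x.perm.symm a) (x.perm.symm b)
      tri := fun p q r => x.tri p q r + y.tri (x.perm.symm p) (x.perm.symm q) (x.perm.symm r) +
        3 * bracket x.lk (fun a b => y.lk (x.perm.symm a) (x.perm.symm b)) p q r
      perm := x.perm * y.perm }

instance : One LinkData where
  one := { lk := fun _ _ => 0, tri := fun _ _ _ => 0, perm := 1 }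

instance : Inv LinkData where
  inv x :=
    { lk := fun a b => -x.lk (x.perm a) (x.perm b)
      tri := fun p q r => -x.tri (x.perm p) (x.perm q) (x.perm r)
      perm := x.perm⁻¹ }

@[simp] theorem mul_lk (x y : LinkData) (a b : ℕ) :
    (x * y).lk a b = x.lk a b + y.lk (x.perm.symm a) (x.perm.symm b) := rfl

@[simp] theorem mul_tri (x y : LinkData) (p q r : ℕ) :
    (x * y).tri p q r = x.tri p q r + y.tri (x.perm.symm p) (x.perm.symm q) (x.perm.symm r) +
        3 * bracket x.lk (fun a b => y.lk (x.perm.symm a) (x.perm.symm b)) p q r := rfl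

@[simp] theorem mul_perm (x y : LinkData) : (x * y).perm = x.perm * y.perm := rfl

@[simp] theorem one_lk (a b : ℕ) : (1 : LinkData).lk a b = 0 := rfl

@[simp] theorem one_tri (p q r : ℕ) : (1 : LinkData).tri p q r = 0 := rfl

@[simp] theorem one_perm : (1 : LinkData).perm = 1 := rfl

@[simp] theorem inv_lk (x : LinkData) (a b : ℕ) : x⁻¹.lk a b = -x.lk (x.perm a) (x.perm b) := rfl

@[simp] theorem inv_tri (x : LinkData) (p q r : ℕ) :
    x⁻¹.tri p q r = -x.tri (x.perm p) (x.perm q) (x.perm r) := rfl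

@[simp] theorem inv_perm (x : LinkData) : x⁻¹.perm = x.perm⁻¹ := rfl

theorem one_perm_symm (a : ℕ) : (1 : Equiv.Perm ℕ).symm a = a := rfl

theorem mul_perm_symm (σ τ : Equiv.Perm ℕ) (a : ℕ) : (σ * τ).symm a = τ.symm (σ.symm a) := rfl

instance : Group LinkData where
  mul_assoc x y z := by
    ext a b
    · simp [mul_perm_symm, add_assoc]
    · simp only [mul_tri, mul_lk, mul_perm, mul_perm_symm, bracket]
      ring
    · simp
  one_mul x := by
    ext a b
    · simp [one_perm_symm]
    · simp [bracket, one_perm_symm]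
    · simp
  mul_one x := by
    ext a b
    · simp
    · simp [bracket]
    · simp
  inv_mul_cancel x := by
    ext a b
    · simp [Equiv.Perm.inv_def]
    · simp only [mul_tri, inv_tri, inv_lk, inv_perm, bracket]
      simp only [Equiv.Perm.inv_def, Equiv.symm_symm, one_tri]
      ring
    · simp

/-- Indicator of a point. -/
def ind (i a : ℕ) : ℤ := if a = i then 1 else 0

/-- The position of a point relative to the interval `[i, i + 1]`. -/
def side (i a : ℕ) : ℤ := if i + 1 < a then 1 else if a < i then -1 else 0

/-- The image of the `i`-th standard generator of the braid group. -/
def gen (i : ℕ) : LinkData where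
  lk a b := ind i a * ind (i + 1) b + ind (i + 1) a * ind i b
  tri p q r := (ind i p * ind (i + 1) q - ind (i + 1) p * ind i q) * side i r +
    (ind i q * ind (i + 1) r - ind (i + 1) q * ind i r) * side i p +
    (ind i r * ind (i + 1) p - ind (i + 1) r * ind i p) * side i q
  perm := Equiv.swap i (i + 1)

theorem swap_braid {X : Type*} [DecidableEq X] {a b c : X} (hab : a ≠ b) (hbc : b ≠ c)
    (hac : a ≠ c) :
    Equiv.swap a b * Equiv.swap b c * Equiv.swap a b =
      Equiv.swap b c * Equiv.swap a b * Equiv.swap b c := by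
  rw [Equiv.swap_mul_swap_mul_swap hab hac, Equiv.swap_comm a b, Equiv.swap_comm b c,
    Equiv.swap_mul_swap_mul_swap hbc.symm hac.symm, Equiv.swap_comm]

/-- The position of a point relative to the interval `[i, i + 2]`. -/
def side₂ (i a : ℕ) : ℤ := if i + 2 < a then 1 else if a < i then -1 else 0

theorem side_eq (i a : ℕ) : side i a = side₂ i a + ind (i + 2) a := by
  unfold side side₂ ind; grind

theorem side_succ_eq (i a : ℕ) : side (i + 1) a = side₂ i a - ind i a := by
  unfold side side₂ ind; grind

theorem ind_swap (i j k a : ℕ) : ind i (Equiv.swap j k a) = ind (Equiv.swap j k i) a := by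
  unfold ind
  simp only [Equiv.swap_apply_eq_iff]

theorem swap_left (i : ℕ) : Equiv.swap i (i + 1) i = i + 1 := Equiv.swap_apply_left _ _

theorem swap_right (i : ℕ) : Equiv.swap i (i + 1) (i + 1) = i := Equiv.swap_apply_right _ _

theorem swap_other {i j : ℕ} (h1 : j ≠ i) (h2 : j ≠ i + 1) : Equiv.swap i (i + 1) j = j :=
  Equiv.swap_apply_of_ne_of_ne h1 h2

theorem side₂_swap (i a : ℕ) : side₂ i (Equiv.swap i (i + 1) a) = side₂ i a := by
  rw [Equiv.swap_apply_def]; unfold side₂; grind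

theorem side₂_swap_succ (i a : ℕ) : side₂ i (Equiv.swap (i + 1) (i + 2) a) = side₂ i a := by
  rw [Equiv.swap_apply_def]; unfold side₂; grind

theorem side_swap {i j : ℕ} (h : i + 2 ≤ j ∨ j + 2 ≤ i) (a : ℕ) :
    side i (Equiv.swap j (j + 1) a) = side i a := by
  rw [Equiv.swap_apply_def]; unfold side; grind

/-- The value `1` at `i` and `0` elsewhere on five points. -/
def pointMass (i k : Fin 5) : ℤ := if k = i then 1 else 0

theorem exists_pointMass (i a : ℕ) : ∃ k : Fin 5, ind i a = pointMass 0 k ∧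
    ind (i + 1) a = pointMass 1 k ∧ ind (i + 2) a = pointMass 2 k ∧
    side₂ i a = pointMass 3 k - pointMass 4 k := by
  unfold ind side₂
  rcases lt_trichotomy a i with h | h | h
  · exact ⟨4, by grind [pointMass]⟩
  · exact ⟨0, by grind [pointMass]⟩
  rcases lt_trichotomy a (i + 1) with h1 | h1 | h1
  · omega
  · exact ⟨1, by grind [pointMass]⟩
  rcases lt_trichotomy a (i + 2) with h2 | h2 | h2
  · omega
  · exact ⟨2, by grind [pointMass]⟩
  · exact ⟨3, by grind [pointMass]⟩

theorem gen_braid (i : ℕ) : gen i * gen (i + 1) * gen i = gen (i + 1) * gen i * gen (i + 1) := by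
  have e1 := swap_left i
  have e2 := swap_right i
  have e3 : Equiv.swap i (i + 1) (i + 2) = i + 2 := swap_other (by omega) (by omega)
  have e4 : Equiv.swap (i + 1) (i + 2) i = i := swap_other (by omega) (by omega)
  have e5 : Equiv.swap (i + 1) (i + 2) (i + 1) = i + 2 := swap_left _
  have e6 : Equiv.swap (i + 1) (i + 2) (i + 2) = i + 1 := swap_right _
  ext a b c
  · simp only [mul_lk, mul_perm, mul_perm_symm, gen, Equiv.symm_swap, ind_swap, e1, e2, e3, e4, e5,
      e6, show i + 1 + 1 = i + 2 from rfl]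
    obtain ⟨p, hp0, hp1, hp2, -⟩ := exists_pointMass i a
    obtain ⟨q, hq0, hq1, hq2, -⟩ := exists_pointMass i b
    rw [hp0, hp1, hp2, hq0, hq1, hq2]
    ring
  · simp only [mul_tri, mul_lk, mul_perm, mul_perm_symm, gen, bracket, Equiv.symm_swap, side_eq i,
      side_succ_eq i, ind_swap, side₂_swap, side₂_swap_succ, e1, e2, e3, e4, e5, e6,
      show i + 1 + 1 = i + 2 from rfl]
    obtain ⟨p, hp0, hp1, hp2, hp3⟩ := exists_pointMass i a
    obtain ⟨q, hq0, hq1, hq2, hq3⟩ := exists_pointMass i b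
    obtain ⟨r, hr0, hr1, hr2, hr3⟩ := exists_pointMass i c
    simp only [hp0, hp1, hp2, hp3, hq0, hq1, hq2, hq3, hr0, hr1, hr2, hr3]
    clear hp0 hp1 hp2 hp3 hq0 hq1 hq2 hq3 hr0 hr1 hr2 hr3
    revert p q r
    decide +kernel
  · simp only [mul_perm, gen]
    exact DFunLike.congr_fun (swap_braid (by omega) (by omega) (by omega)) a

theorem gen_lk_comm (i a b : ℕ) : (gen i).lk a b = (gen i).lk b a := by
  simp only [gen]; ring

theorem gen_lk_mul_gen_lk {i j : ℕ} (h : i + 2 ≤ j) (a b c : ℕ) :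
    (gen i).lk a b * (gen j).lk b c = 0 := by
  simp only [gen, ind]; grind

theorem gen_comm {i j : ℕ} (h : i + 2 ≤ j) : Commute (gen i) (gen j) := by
  have e1 : Equiv.swap i (i + 1) j = j := swap_other (by omega) (by omega)
  have e2 : Equiv.swap i (i + 1) (j + 1) = j + 1 := swap_other (by omega) (by omega)
  have e3 : Equiv.swap j (j + 1) i = i := swap_other (by omega) (by omega)
  have e4 : Equiv.swap j (j + 1) (i + 1) = i + 1 := swap_other (by omega) (by omega)
  have hlk1 : ∀ a b, (gen j).lk (Equiv.swap i (i + 1) a) (Equiv.swap i (i + 1) b) =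
      (gen j).lk a b := fun a b => by simp only [gen, ind_swap, e1, e2]
  have hlk2 : ∀ a b, (gen i).lk (Equiv.swap j (j + 1) a) (Equiv.swap j (j + 1) b) =
      (gen i).lk a b := fun a b => by simp only [gen, ind_swap, e3, e4]
  have hp : ∀ k, (gen k).perm.symm = Equiv.swap k (k + 1) := fun k => Equiv.symm_swap _ _
  rw [Commute, SemiconjBy]
  ext a b c
  · rw [mul_lk, mul_lk, hp, hp, hlk1, hlk2, add_comm]
  · rw [mul_tri, mul_tri, hp, hp]
    simp only [hlk1, hlk2]
    have h1 := gen_lk_mul_gen_lk h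
    have h2 := gen_lk_comm i
    have h3 := gen_lk_comm j
    have hb : bracket (gen i).lk (gen j).lk a b c = 0 ∧
        bracket (gen j).lk (gen i).lk a b c = 0 := by
      unfold bracket
      have := h1 b c a; have := h1 c a b; have := h1 a b c
      have := h1 a c b; have := h1 b a c; have := h1 c b a
      rw [h2 a c, h3 c b] at *
      grind
    rw [hb.1, hb.2]
    have ht1 : (gen j).tri (Equiv.swap i (i + 1) a) (Equiv.swap i (i + 1) b)
        (Equiv.swap i (i + 1) c) = (gen j).tri a b c := by
      simp only [gen, ind_swap, e1, e2, side_swap (Or.inr h)]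
    have ht2 : (gen i).tri (Equiv.swap j (j + 1) a) (Equiv.swap j (j + 1) b)
        (Equiv.swap j (j + 1) c) = (gen i).tri a b c := by
      simp only [gen, ind_swap, e3, e4, side_swap (Or.inl h)]
    rw [ht1, ht2]; ring
  · have hd : Equiv.Perm.Disjoint (gen i).perm (gen j).perm := by
      intro x
      simp only [gen]
      by_cases hx : x = i ∨ x = i + 1
      · right; exact swap_other (by omega) (by omega)
      · left; exact swap_other (by omega) (by omega)
    exact DFunLike.congr_fun hd.commute.eq a

end LinkData

theorem ArtinB.induction {n : ℕ} {p : ArtinB n → Prop} (h1 : p 1)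
    (hmul : ∀ x y, p x → p y → p (x * y)) (hinv : ∀ x, p x → p x⁻¹)
    (hgen : ∀ i < n, p (rB n (i + 1))) (g : ArtinB n) : p g := by
  let K : Subgroup (ArtinB n) :=
    { carrier := {x | p x}
      one_mem' := h1
      mul_mem' := fun {x y} hx hy => hmul x y hx hy
      inv_mem' := fun {x} hx => hinv x hx }
  have hK : K = ⊤ := ArtinB.eq_top_of_rB_mem hgen
  exact (hK ▸ Subgroup.mem_top g : g ∈ K)

theorem IsArtinBSeq.of_comm {G : Type*} [CommGroup G] (n : ℕ) (hn : 2 ≤ n) (u v : G) :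
    IsArtinBSeq n fun i => if i + 1 < n then u else v where
  isBraidSeq :=
    { braid := fun i hi => by simp only [show i + 1 < n by omega, show i + 1 + 1 < n by omega]
      comm := fun _ _ _ _ => Commute.all _ _ }
  comm_last _ _ := Commute.all _ _
  four := by
    simp only [show n - 2 + 1 < n by omega, show ¬ (n - 1 + 1 < n) by omega, if_true, if_false,
      mul_assoc]
    simp only [mul_comm u, mul_assoc]

/-- The braid group homomorphism attached to `LinkData.gen`, restricted to the braids whose last
strand is pure. -/
theorem LinkData.isArtinBSeq {n : ℕ} (hn : 2 ≤ n) :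
    IsArtinBSeq n fun i => if i + 1 < n then LinkData.gen i else LinkData.gen i ^ 2 where
  isBraidSeq :=
    { braid := fun i hi => by
        simp only [show i + 1 < n by omega, show i + 1 + 1 < n by omega, if_true]
        exact LinkData.gen_braid i
      comm := fun i j hij hj => by
        simp only [show i + 1 < n by omega, show j + 1 < n by omega, if_true]
        exact LinkData.gen_comm hij }
  comm_last i hi := by
    simp only [show i + 1 < n by omega, show ¬ (n - 1 + 1 < n) by omega, if_true, if_false]
    exact (LinkData.gen_comm (by omega)).pow_right 2
  four := by
    simp only [show n - 2 + 1 < n by omega, show ¬ (n - 1 + 1 < n) by omega, if_true, if_false]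
    have h := LinkData.gen_braid (n - 2)
    rw [show n - 2 + 1 = n - 1 by omega] at h
    generalize LinkData.gen (n - 2) = a at h ⊢
    generalize LinkData.gen (n - 1) = b at h ⊢
    calc a * b ^ 2 * a * b ^ 2 = a * b * (b * a * b) * b := by rw [pow_two]; simp only [mul_assoc]
      _ = a * b * (a * b * a) * b := by rw [h]
      _ = (a * b * a) * (b * a * b) := by simp only [mul_assoc]
      _ = (b * a * b) * (a * b * a) := by rw [h]
      _ = b * (a * b * a) * b * a := by simp only [mul_assoc]
      _ = b ^ 2 * a * b ^ 2 * a := by rw [h, pow_two]; simp only [mul_assoc]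

/-- The permutation of the `n` free strands. -/
theorem isArtinBSeq_swap {n : ℕ} (hn : 2 ≤ n) :
    IsArtinBSeq n fun i => if h : i + 1 < n then
      Equiv.swap (⟨i, by omega⟩ : Fin n) ⟨i + 1, h⟩ else 1 where
  isBraidSeq :=
    { braid := fun i hi => by
        simp only [show i + 1 < n by omega, show i + 1 + 1 < n by omega, dite_true]
        exact LinkData.swap_braid (by rw [Ne, Fin.mk.injEq]; omega)
          (by rw [Ne, Fin.mk.injEq]; omega) (by rw [Ne, Fin.mk.injEq]; omega)
      comm := fun i j hij hj => by
        simp only [show i + 1 < n by omega, show j + 1 < n by omega, dite_true]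
        refine Equiv.Perm.Disjoint.commute fun x => ?_
        by_cases hx : (x : ℕ) = i ∨ (x : ℕ) = i + 1
        · right
          exact Equiv.swap_apply_of_ne_of_ne (by rw [Ne, Fin.ext_iff]; simp; omega)
            (by rw [Ne, Fin.ext_iff]; simp; omega)
        · left
          exact Equiv.swap_apply_of_ne_of_ne (by rw [Ne, Fin.ext_iff]; simp; omega)
            (by rw [Ne, Fin.ext_iff]; simp; omega) }
  comm_last i hi := by
    simp only [show ¬ (n - 1 + 1 < n) by omega, dite_false]
    exact Commute.one_right _
  four := by simp [show ¬ (n - 1 + 1 < n) by omega]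

namespace ArtinB

variable {n : ℕ} (hn : 2 ≤ n)

/-- The homomorphism recording linking numbers. -/
def link : ArtinB n →* LinkData := ArtinB.lift n _ (LinkData.isArtinBSeq hn)

/-- The permutation of the `n` free strands. -/
def perm : ArtinB n →* Equiv.Perm (Fin n) := ArtinB.lift n _ (isArtinBSeq_swap hn)

/-- The exponent sum, with weight `u` on `r_1, …, r_{n-1}` and `v` on `r_n`. -/
def weight (u v : ℤ) : ArtinB n →* Multiplicative ℤ :=
  ArtinB.lift n _ (IsArtinBSeq.of_comm n hn (Multiplicative.ofAdd u) (Multiplicative.ofAdd v))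

theorem link_rB {i : ℕ} (hi : i + 1 < n) : link hn (rB n (i + 1)) = LinkData.gen i := by
  rw [link, ArtinB.lift_rB _ (by omega), if_pos hi]

theorem link_rB_last : link hn (rB n n) = LinkData.gen (n - 1) ^ 2 := by
  obtain ⟨m, rfl⟩ : ∃ m, n = m + 1 := ⟨n - 1, by omega⟩
  rw [link, ArtinB.lift_rB _ (by omega), if_neg (by omega), Nat.add_sub_cancel]

theorem perm_rB {i : ℕ} (hi : i + 1 < n) :
    perm hn (rB n (i + 1)) = Equiv.swap ⟨i, by omega⟩ ⟨i + 1, hi⟩ := by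
  rw [perm, ArtinB.lift_rB _ (by omega), dif_pos hi]

theorem perm_rB_last : perm hn (rB n n) = 1 := by
  obtain ⟨m, rfl⟩ : ∃ m, n = m + 1 := ⟨n - 1, by omega⟩
  rw [perm, ArtinB.lift_rB _ (by omega), dif_neg (by omega)]

theorem weight_rB (u v : ℤ) {i : ℕ} (hi : i + 1 < n) :
    weight hn u v (rB n (i + 1)) = Multiplicative.ofAdd u := by
  rw [weight, ArtinB.lift_rB _ (by omega), if_pos hi]

theorem weight_rB_last (u v : ℤ) : weight hn u v (rB n n) = Multiplicative.ofAdd v := by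
  obtain ⟨m, rfl⟩ : ∃ m, n = m + 1 := ⟨n - 1, by omega⟩
  rw [weight, ArtinB.lift_rB _ (by omega), if_neg (by omega)]

theorem perm_surjective : Function.Surjective (perm hn) := by
  obtain ⟨m, rfl⟩ : ∃ m, n = m + 1 := ⟨n - 1, by omega⟩
  have h : Submonoid.closure (Set.range fun i : Fin m => Equiv.swap i.castSucc i.succ) ≤
      (perm hn).range.toSubmonoid := by
    rw [Submonoid.closure_le]
    rintro _ ⟨i, rfl⟩
    exact ⟨_, perm_rB hn (i := i) (by omega)⟩
  rw [Equiv.Perm.mclosure_swap_castSucc_succ] at h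
  exact fun x => h (Submonoid.mem_top x)

theorem induction_last {p : ArtinB n → Prop} (h1 : p 1)
    (hmul : ∀ x y, p x → p y → p (x * y)) (hinv : ∀ x, p x → p x⁻¹)
    (hgen : ∀ i, i + 1 < n → p (rB n (i + 1))) (hlast : p (rB n n)) (g : ArtinB n) : p g := by
  refine ArtinB.induction h1 hmul hinv (fun i hi => ?_) g
  rcases Nat.lt_or_ge (i + 1) n with h | h
  · exact hgen i h
  · rwa [show i + 1 = n by omega]

theorem gen_sq_perm (i : ℕ) : (LinkData.gen i ^ 2).perm = 1 := by
  rw [pow_two, LinkData.mul_perm]; exact Equiv.swap_mul_self _ _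

theorem link_perm (g : ArtinB n) :
    (link hn g).perm = (perm hn g).viaEmbedding Fin.valEmbedding := by
  have hS : ∀ σ : Equiv.Perm (Fin n), σ.viaEmbedding Fin.valEmbedding =
    Equiv.Perm.viaEmbeddingHom Fin.valEmbedding σ := fun _ => rfl
  induction g using ArtinB.induction_last with
  | h1 => simp [hS]
  | hmul x y hx hy => simp only [map_mul, LinkData.mul_perm, hx, hy, hS]
  | hinv x hx => simp only [map_inv, LinkData.inv_perm, hx, hS]
  | hgen i hi =>
    rw [link_rB hn hi, perm_rB hn hi]
    ext a
    by_cases ha : a < n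
    · have h1 := Equiv.Perm.viaEmbedding_apply
        (Equiv.swap (⟨i, by omega⟩ : Fin n) ⟨i + 1, hi⟩) Fin.valEmbedding ⟨a, ha⟩
      simp only [Fin.valEmbedding_apply] at h1
      rw [h1]
      simp only [LinkData.gen, Equiv.swap_apply_def, Fin.ext_iff]
      split_ifs <;> simp
    · rw [Equiv.Perm.viaEmbedding_apply_of_notMem]
      · exact LinkData.swap_other (by omega) (by omega)
      · rintro ⟨b, rfl⟩; exact ha b.2
  | hlast => rw [link_rB_last, perm_rB_last, hS, map_one, gen_sq_perm]

theorem link_perm_apply (g : ArtinB n) (a : Fin n) :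
    (link hn g).perm a = (perm hn g a : Fin n) := by
  rw [link_perm]
  exact Equiv.Perm.viaEmbedding_apply _ Fin.valEmbedding a

theorem link_perm_symm_apply (g : ArtinB n) (a : Fin n) :
    (link hn g).perm.symm a = ((perm hn g).symm a : Fin n) := by
  rw [Equiv.symm_apply_eq, link_perm_apply, Equiv.apply_symm_apply]

theorem link_perm_last (g : ArtinB n) : (link hn g).perm n = n := by
  rw [link_perm]
  refine Equiv.Perm.viaEmbedding_apply_of_notMem _ _ _ ?_
  rintro ⟨b, hb⟩
  exact b.2.ne hb

theorem link_perm_symm_last (g : ArtinB n) : (link hn g).perm.symm n = n := by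
  rw [Equiv.symm_apply_eq, link_perm_last]

theorem link_perm_eq_one {g : ArtinB n} (hg : perm hn g = 1) : (link hn g).perm = 1 := by
  rw [link_perm, hg]; exact map_one (Equiv.Perm.viaEmbeddingHom _)

theorem exists_link_perm_symm {a b : ℕ} (ha : a < n) (hb : b < n) :
    ∃ g : ArtinB n, (link hn g).perm.symm = Equiv.swap a b := by
  obtain ⟨g, hg⟩ := perm_surjective hn (Equiv.swap ⟨a, ha⟩ ⟨b, hb⟩)
  refine ⟨g, ?_⟩
  rw [link_perm, hg]
  ext x
  rw [Equiv.symm_apply_eq]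
  by_cases hx : x < n
  · have h1 := Equiv.Perm.viaEmbedding_apply
      (Equiv.swap (⟨a, ha⟩ : Fin n) ⟨b, hb⟩) Fin.valEmbedding (Equiv.swap ⟨a, ha⟩ ⟨b, hb⟩ ⟨x, hx⟩)
    simp only [Fin.valEmbedding_apply, Equiv.swap_apply_self] at h1
    rw [show (Equiv.swap a b x) = (Equiv.swap (⟨a, ha⟩ : Fin n) ⟨b, hb⟩ ⟨x, hx⟩ : Fin n) by
      simp only [Equiv.swap_apply_def, Fin.ext_iff]; split_ifs <;> simp, h1]
  · rw [Equiv.swap_apply_of_ne_of_ne (by omega) (by omega),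
      Equiv.Perm.viaEmbedding_apply_of_notMem]
    rintro ⟨b, rfl⟩; exact hx b.2

theorem link_lk_comm (g : ArtinB n) : ∀ a b, (link hn g).lk a b = (link hn g).lk b a := by
  induction g using ArtinB.induction_last with
  | h1 => simp
  | hmul x y hx hy =>
    intro a b
    rw [map_mul, LinkData.mul_lk, LinkData.mul_lk, hx, hy]
  | hinv x hx =>
    intro a b
    rw [map_inv, LinkData.inv_lk, LinkData.inv_lk, hx]
  | hgen i hi => rw [link_rB hn hi]; exact LinkData.gen_lk_comm i
  | hlast =>
    intro a b
    rw [link_rB_last, pow_two, LinkData.mul_lk, LinkData.mul_lk, LinkData.gen_lk_comm _ a b,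
      LinkData.gen_lk_comm _ ((LinkData.gen (n - 1)).perm.symm a)]

theorem link_lk_self (g : ArtinB n) : ∀ a, (link hn g).lk a a = 0 := by
  have hgen : ∀ i a, (LinkData.gen i).lk a a = 0 := by
    intro i a
    simp only [LinkData.gen, LinkData.ind]; grind
  induction g using ArtinB.induction_last with
  | h1 => simp
  | hmul x y hx hy => intro a; rw [map_mul, LinkData.mul_lk, hx, hy, add_zero]
  | hinv x hx => intro a; rw [map_inv, LinkData.inv_lk, hx, neg_zero]
  | hgen i hi => rw [link_rB hn hi]; exact hgen i
  | hlast => intro a; rw [link_rB_last, pow_two, LinkData.mul_lk, hgen, hgen, add_zero]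

theorem link_rB_last_lk (a b : ℕ) : (link hn (rB n n)).lk a b =
    2 * (LinkData.ind (n - 1) a * LinkData.ind n b +
      LinkData.ind n a * LinkData.ind (n - 1) b) := by
  rw [link_rB_last, pow_two, LinkData.mul_lk]
  have h : (LinkData.gen (n - 1)).perm.symm = Equiv.swap (n - 1) (n - 1 + 1) := Equiv.symm_swap _ _
  rw [h]
  simp only [LinkData.gen, LinkData.ind_swap, show n - 1 + 1 = n by omega,
    Equiv.swap_apply_left, Equiv.swap_apply_right]
  ring

theorem even_link_lk_last (g : ArtinB n) : ∀ a : Fin n, Even ((link hn g).lk a n) := by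
  induction g using ArtinB.induction_last with
  | h1 => simp
  | hmul x y hx hy =>
    intro a
    rw [map_mul, LinkData.mul_lk, link_perm_symm_apply, link_perm_symm_last]
    exact (hx a).add (hy _)
  | hinv x hx =>
    intro a
    rw [map_inv, LinkData.inv_lk, link_perm_apply, link_perm_last]
    exact (hx _).neg
  | hgen i hi =>
    intro a
    rw [link_rB hn hi]
    simp [LinkData.gen, LinkData.ind, show n ≠ i by omega, show n ≠ i + 1 by omega]
  | hlast => intro a; rw [link_rB_last_lk]; exact even_two_mul _

theorem two_mul_weight (u v : ℤ) (g : ArtinB n) :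
    2 * (weight hn u v g).toAdd = u * ∑ a : Fin n, ∑ b : Fin n, (link hn g).lk a b +
      v * ∑ a : Fin n, (link hn g).lk a n := by
  induction g using ArtinB.induction_last with
  | h1 => simp
  | hmul x y hx hy =>
    simp only [map_mul, LinkData.mul_lk, link_perm_symm_apply, link_perm_symm_last, toAdd_mul,
      Finset.sum_add_distrib]
    have h1 := Equiv.sum_comp (perm hn x).symm fun a : Fin n => (link hn y).lk a n
    have h2 := Equiv.sum_comp (perm hn x).symm fun a : Fin n => ∑ b : Fin n, (link hn y).lk a b
    have h3 : ∀ a : Fin n, ∑ b : Fin n, (link hn y).lk ((perm hn x).symm a : Fin n)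
        ((perm hn x).symm b : Fin n) =
        ∑ b : Fin n, (link hn y).lk ((perm hn x).symm a : Fin n) b := fun a =>
      Equiv.sum_comp (perm hn x).symm fun b : Fin n => (link hn y).lk _ b
    simp only [h1, h3, h2]
    linear_combination hx + hy
  | hinv x hx =>
    simp only [map_inv, LinkData.inv_lk, link_perm_apply, link_perm_last, toAdd_inv,
      Finset.sum_neg_distrib]
    have h1 := Equiv.sum_comp (perm hn x) fun a : Fin n => (link hn x).lk a n
    have h2 := Equiv.sum_comp (perm hn x) fun a : Fin n => ∑ b : Fin n, (link hn x).lk a b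
    have h3 : ∀ a : Fin n, ∑ b : Fin n, (link hn x).lk (perm hn x a : Fin n)
        (perm hn x b : Fin n) = ∑ b : Fin n, (link hn x).lk (perm hn x a : Fin n) b := fun a =>
      Equiv.sum_comp (perm hn x) fun b : Fin n => (link hn x).lk _ b
    simp only [h1, h3, h2]
    linear_combination -hx
  | hgen i hi =>
    have hs : ∀ j, j < n → ∑ a : Fin n, LinkData.ind j a = 1 := by
      intro j hj
      rw [Finset.sum_eq_single ⟨j, hj⟩] <;> simp [LinkData.ind, Fin.ext_iff]
    rw [link_rB hn hi, weight_rB hn u v hi]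
    have h0 : ∀ a, (LinkData.gen i).lk a n = 0 := fun a => by
      simp [LinkData.gen, LinkData.ind, show n ≠ i by omega, show n ≠ i + 1 by omega]
    simp only [h0]
    simp only [LinkData.gen, Finset.sum_add_distrib, ← Finset.mul_sum, hs i (by omega),
      hs (i + 1) hi]
    simp only [← Finset.sum_mul, hs i (by omega), hs (i + 1) hi, toAdd_ofAdd]
    simp
    ring
  | hlast =>
    have hs : ∑ a : Fin n, LinkData.ind (n - 1) a = 1 := by
      rw [Finset.sum_eq_single ⟨n - 1, by omega⟩] <;> simp [LinkData.ind, Fin.ext_iff]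
    have h0 : ∀ a : Fin n, LinkData.ind n a = 0 := fun a => if_neg a.2.ne
    have h1 : LinkData.ind n n = 1 := if_pos rfl
    have h2 : LinkData.ind (n - 1) n = 0 := if_neg (by omega)
    rw [weight_rB_last]
    simp only [link_rB_last_lk, h0, h1, h2, mul_zero, zero_mul, mul_one, add_zero,
      ← Finset.mul_sum, hs]
    simp
    ring

theorem two_mul_weight_last (g : ArtinB n) :
    2 * (weight hn 0 1 g).toAdd = ∑ a : Fin n, (link hn g).lk a n := by
  rw [two_mul_weight]; ring

theorem weight_eq (u v : ℤ) (g : ArtinB n) : (weight hn u v g).toAdd =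
    u * (weight hn 1 0 g).toAdd + v * (weight hn 0 1 g).toAdd := by
  have h1 := two_mul_weight hn u v g
  have h2 := two_mul_weight hn 1 0 g
  have h3 := two_mul_weight hn 0 1 g
  have : 2 * (weight hn u v g).toAdd = 2 * (u * (weight hn 1 0 g).toAdd +
      v * (weight hn 0 1 g).toAdd) := by
    linear_combination h1 - u * h2 - v * h3
  omega

theorem sign_perm (g : ArtinB n) :
    Equiv.Perm.sign (perm hn g) = (-1) ^ (weight hn 1 0 g).toAdd := by
  induction g using ArtinB.induction_last with
  | h1 => simp
  | hmul x y hx hy => rw [map_mul, map_mul, map_mul, toAdd_mul, zpow_add, hx, hy]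
  | hinv x hx => rw [map_inv, map_inv, map_inv, toAdd_inv, zpow_neg, hx]
  | hgen i hi => rw [perm_rB hn hi, weight_rB hn _ _ hi, Equiv.Perm.sign_swap (by simp)]; simp
  | hlast => rw [perm_rB_last, weight_rB_last]; simp

theorem weight_ρB (u v : ℤ) : (weight hn u v (ρB n)).toAdd = (n - 1) * u + v := by
  have h : ∀ k < n, (weight hn u v (prefixProd (fun i => rB n (i + 1)) k)).toAdd = k * u := by
    intro k
    induction k with
    | zero => simp [prefixProd]
    | succ k ih =>
      intro hk
      rw [prefixProd, map_mul, toAdd_mul, ih (by omega), weight_rB hn u v hk]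
      push_cast
      simp
      ring
  obtain ⟨m, rfl⟩ : ∃ m, n = m + 1 := ⟨n - 1, by omega⟩
  rw [ρB_eq_prefixProd, prefixProd, map_mul, toAdd_mul, h m (by omega), weight_rB_last]
  push_cast
  simp

end ArtinB

namespace ArtinB

variable {n : ℕ}

theorem perm_eq_one_of_mem_center (hn : 3 ≤ n) {z : ArtinB n}
    (hz : z ∈ Subgroup.center (ArtinB n)) : perm (by omega) z = 1 := by
  by_contra hne
  obtain ⟨a, ha⟩ : ∃ a, perm (by omega) z a ≠ a := by
    by_contra! h
    exact hne (Equiv.ext h)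
  obtain ⟨b, hb⟩ : ∃ b, b ∉ ({a, perm (by omega) z a} : Finset (Fin n)) := by
    by_contra! h
    have h1 : (Finset.univ : Finset (Fin n)).card ≤ _ :=
      Finset.card_le_card fun x _ => h x
    have h2 := Finset.card_le_two (a := a) (b := perm (by omega) z a)
    rw [Finset.card_fin] at h1
    omega
  simp only [Finset.mem_insert, Finset.mem_singleton, not_or] at hb
  obtain ⟨g, hg⟩ := perm_surjective (by omega) (Equiv.swap (perm (by omega) z a) b)
  have h := congrArg (perm (by omega)) (Subgroup.mem_center_iff.1 hz g)
  rw [map_mul, map_mul, hg] at h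
  have h2 := DFunLike.congr_fun h a
  rw [Equiv.Perm.mul_apply, Equiv.Perm.mul_apply, Equiv.swap_apply_left,
    Equiv.swap_apply_of_ne_of_ne ha.symm (Ne.symm hb.1)] at h2
  exact hb.2 h2

theorem link_mul_comm_of_mem_center (hn : 2 ≤ n) {z : ArtinB n}
    (hz : z ∈ Subgroup.center (ArtinB n))
    (g : ArtinB n) : link hn g * link hn z = link hn z * link hn g := by
  rw [← map_mul, ← map_mul, Subgroup.mem_center_iff.1 hz g]

/-- The pairwise linking numbers of a central element all coincide. -/
theorem exists_link_lk_eq_of_mem_center (hn : 3 ≤ n) {z : ArtinB n}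
    (hz : z ∈ Subgroup.center (ArtinB n)) :
    ∃ p : ℤ, ∀ a ≤ n, ∀ b ≤ n, a ≠ b → (link (by omega) z).lk a b = p := by
  have hn2 : 2 ≤ n := by omega
  have hp : (link hn2 z).perm = 1 := link_perm_eq_one hn2 (perm_eq_one_of_mem_center hn hz)
  have hcomm := link_mul_comm_of_mem_center hn2 hz
  have hsym := link_lk_comm hn2 z
  have hinv : ∀ g a b, (link hn2 z).lk ((link hn2 g).perm.symm a) ((link hn2 g).perm.symm b) =
      (link hn2 z).lk a b := by
    intro g a b
    have h := congrArg (fun x => LinkData.lk x a b) (hcomm g)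
    simp only [LinkData.mul_lk, hp, LinkData.one_perm_symm] at h
    omega
  have hswap : ∀ c < n, ∀ d < n, ∀ a b, (link hn2 z).lk (Equiv.swap c d a) (Equiv.swap c d b) =
      (link hn2 z).lk a b := by
    intro c hc d hd a b
    obtain ⟨g, hg⟩ := exists_link_perm_symm hn2 hc hd
    have := hinv g a b
    rwa [hg] at this
  have htri : ∀ j < n - 1, (link hn2 z).lk n j = (link hn2 z).lk j (n - 1) := by
    intro j hj
    have h := congrArg (fun x => LinkData.tri x j (n - 1) n) (hcomm (rB n n))
    have h1 : (link hn2 (rB n n)).perm = 1 := link_perm_eq_one hn2 (perm_rB_last hn2)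
    simp only [LinkData.mul_tri, hp, h1, LinkData.one_perm_symm, LinkData.bracket, link_rB_last_lk,
      LinkData.ind] at h
    simp only [show j ≠ n - 1 by omega, show j ≠ n by omega, show n ≠ n - 1 by omega,
      show n - 1 ≠ n by omega, if_true, if_false] at h
    linarith
  have hlast : ∀ a < n, (link hn2 z).lk a n = (link hn2 z).lk (n - 1) n := by
    intro a ha
    have h := hswap a ha (n - 1) (by omega) a n
    rw [Equiv.swap_apply_left, Equiv.swap_apply_of_ne_of_ne (by omega) (by omega)] at h
    exact h.symm
  have hfree : ∀ a < n, ∀ b < n, a ≠ b → (link hn2 z).lk a b = (link hn2 z).lk (n - 1) n := by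
    intro a ha b hb hab
    by_cases ha' : a = n - 1
    · rw [hsym, ha', ← htri b (by omega), hsym, hlast b hb]
    · have h := hswap b hb (n - 1) (by omega) a b
      rw [Equiv.swap_apply_left, Equiv.swap_apply_of_ne_of_ne hab ha'] at h
      rw [← h, ← htri a (by omega), hsym, hlast a ha]
  refine ⟨(link hn2 z).lk (n - 1) n, fun a ha b hb hab => ?_⟩
  rcases ha.lt_or_eq with ha' | rfl
  · rcases hb.lt_or_eq with hb' | rfl
    · exact hfree a ha' b hb' hab
    · exact hlast a ha'
  · rw [hsym]; exact hlast b (by omega)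

theorem dvd_weight_last_of_mem_center (hn : 3 ≤ n) {z : ArtinB n}
    (hz : z ∈ Subgroup.center (ArtinB n)) :
    (n : ℤ) ∣ (weight (by omega) 0 1 z).toAdd := by
  obtain ⟨p, hp⟩ := exists_link_lk_eq_of_mem_center hn hz
  have h := two_mul_weight_last (by omega) z
  rw [Finset.sum_congr rfl fun (a : Fin n) _ => hp a a.2.le n le_rfl a.2.ne] at h
  have he := even_link_lk_last (by omega) z ⟨0, by omega⟩
  rw [hp _ (by simp) _ le_rfl (by simp; omega)] at he
  obtain ⟨q, rfl⟩ := he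
  refine ⟨q, ?_⟩
  simp at h
  linarith

theorem weight_eq_zero_of_mem_center (hn : 3 ≤ n) {z : ArtinB n}
    (hz : z ∈ Subgroup.center (ArtinB n)) : weight (by omega) 1 (1 - n) z = 1 := by
  obtain ⟨p, hp⟩ := exists_link_lk_eq_of_mem_center hn hz
  have h := two_mul_weight (by omega) 1 (1 - n) z
  have h1 : ∀ a : Fin n, ∑ b : Fin n, (link (by omega) z).lk a b = (n - 1) * p := by
    intro a
    rw [← Finset.add_sum_erase _ _ (Finset.mem_univ a), link_lk_self, zero_add,
      Finset.sum_congr rfl fun (b : Fin n) hb =>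
        hp a a.2.le b b.2.le fun h => Finset.ne_of_mem_erase hb (Fin.ext h.symm)]
    simp [Finset.card_erase_of_mem, Nat.cast_sub (show 1 ≤ n by omega)]
  rw [Finset.sum_congr rfl fun (a : Fin n) _ => hp a a.2.le n le_rfl a.2.ne,
    Finset.sum_congr rfl fun (a : Fin n) _ => h1 a] at h
  simp at h
  apply Multiplicative.toAdd.injective
  rw [toAdd_one]
  linarith

theorem link_conj_lk (hn : 2 ≤ n) {u : ArtinB n} (hu : perm hn u = 1) (h : ArtinB n) (a b : ℕ) :
    (link hn (h * u * h⁻¹)).lk a b =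
      (link hn u).lk ((link hn h).perm.symm a) ((link hn h).perm.symm b) := by
  have h1 := link_perm_eq_one hn hu
  simp only [map_mul, map_inv, LinkData.mul_lk, LinkData.inv_lk, LinkData.mul_perm, h1, mul_one,
    Equiv.apply_symm_apply]
  ring

theorem link_mul_lk (hn : 2 ≤ n) {u : ArtinB n} (hu : perm hn u = 1) (v : ArtinB n) (a b : ℕ) :
    (link hn (u * v)).lk a b = (link hn u).lk a b + (link hn v).lk a b := by
  rw [map_mul, LinkData.mul_lk, link_perm_eq_one hn hu]; rfl

theorem bracket_eq_zero (hn : 3 ≤ n) {u v : ArtinB n} (hu : perm (by omega) u = 1)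
    (hv : perm (by omega) v = 1) (huv : u * v * (v * u)⁻¹ ∈ Subgroup.center (ArtinB n))
    {p q r : ℕ} (hp : p < n) (hq : q < n) (hpr : p ≠ r) (hqr : q ≠ r) :
    LinkData.bracket (link (by omega) u).lk (link (by omega) v).lk p q r = 0 := by
  have hn2 : 2 ≤ n := by omega
  obtain ⟨z, hz, hzuv⟩ : ∃ z ∈ Subgroup.center (ArtinB n), u * v = z * (v * u) :=
    ⟨_, huv, by group⟩
  have hzp := link_perm_eq_one hn2 (perm_eq_one_of_mem_center hn hz)
  have hup := link_perm_eq_one hn2 hu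
  have hvp := link_perm_eq_one hn2 hv
  have hlink : link hn2 u * link hn2 v = link hn2 z * (link hn2 v * link hn2 u) := by
    rw [← map_mul, ← map_mul, ← map_mul, hzuv]
  have hlk : ∀ a b, (link hn2 z).lk a b = 0 := by
    intro a b
    have h := congrArg (fun x => LinkData.lk x a b) hlink
    simp only [LinkData.mul_lk, hup, hvp, hzp, LinkData.one_perm_symm] at h
    omega
  have htri : ∀ a b c, (link hn2 z).tri a b c =
      6 * LinkData.bracket (link hn2 u).lk (link hn2 v).lk a b c := by
    intro a b c
    have h := congrArg (fun x => LinkData.tri x a b c) hlink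
    simp only [LinkData.mul_tri, LinkData.mul_lk, hup, hvp, hzp, LinkData.one_perm_symm,
      LinkData.bracket, hlk] at h
    simp only [LinkData.bracket]
    linarith
  obtain ⟨g, hg⟩ := exists_link_perm_symm hn2 hp hq
  have h := congrArg (fun x => LinkData.tri x p q r) (link_mul_comm_of_mem_center hn2 hz g)
  simp only [LinkData.mul_tri, hzp, hg, LinkData.one_perm_symm, Equiv.swap_apply_left,
    Equiv.swap_apply_right, Equiv.swap_apply_of_ne_of_ne hpr.symm hqr.symm, LinkData.bracket,
    hlk, htri] at h
  simp only [LinkData.bracket]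
  rw [link_lk_comm hn2 u q p, link_lk_comm hn2 u p r, link_lk_comm hn2 u r q,
    link_lk_comm hn2 v q p, link_lk_comm hn2 v p r, link_lk_comm hn2 v r q] at h
  linarith

end ArtinB

namespace ArtinB

variable {n : ℕ}

theorem mem_center_of_commute_πB {u v : ArtinB n} (h : Commute (πB n u) (πB n v)) :
    u * v * (v * u)⁻¹ ∈ Subgroup.center (ArtinB n) := by
  rw [← QuotientGroup.eq_one_iff]
  change πB n (u * v * (v * u)⁻¹) = 1
  rw [map_mul, map_inv, map_mul, map_mul, h.eq, mul_inv_cancel]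

/-- Linking numbers of a pure element are preserved, up to a global constant, by any element
commuting with it modulo the center. -/
theorem exists_link_lk_symm_eq_add (hn : 3 ≤ n) {u h : ArtinB n} (hu : perm (by omega) u = 1)
    (hc : Commute (πB n h) (πB n u)) :
    ∃ p : ℤ, ∀ a ≤ n, ∀ b ≤ n, a ≠ b →
      (link (by omega) u).lk ((link (by omega) h).perm.symm a)
        ((link (by omega) h).perm.symm b) = (link (by omega) u).lk a b + p := by
  obtain ⟨p, hp⟩ := exists_link_lk_eq_of_mem_center hn (mem_center_of_commute_πB hc)
  refine ⟨p, fun a ha b hb hab => ?_⟩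
  have hz := perm_eq_one_of_mem_center hn (mem_center_of_commute_πB hc)
  have hconj : h * u * h⁻¹ = h * u * (u * h)⁻¹ * u := by group
  rw [← link_conj_lk _ hu, ← hp a ha b hb hab, add_comm, ← link_mul_lk _ hz, hconj]

theorem four_mul_weight_of_const (hn : 2 ≤ n) {g : ArtinB n} {γ : ℤ}
    (h : ∀ a : Fin n, (link hn (g * g)).lk a n = γ) :
    4 * (weight hn 0 1 g).toAdd = n * γ := by
  have h1 := two_mul_weight_last hn (g * g)
  rw [Finset.sum_congr rfl fun a _ => h a, map_mul, toAdd_mul] at h1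
  simp at h1
  linarith

theorem dvd_weight_of_swap (hn : 5 ≤ n) {l : ℕ → ArtinB n}
    (hl : IsBraidSeq (n - 1) fun i => πB n (l i)) {x : ℕ → Fin n}
    (hx : ∀ y, ∃ i < n, x i = y) (hinj : ∀ i < n, ∀ j < n, x i = x j → i = j)
    (hperm : ∀ i < n - 1, perm (by omega) (l i) = Equiv.swap (x i) (x (i + 1))) :
    (n : ℤ) ∣ (weight (by omega) 0 1 (l 0)).toAdd := by
  have hn2 : 2 ≤ n := by omega
  set u := l 0 * l 0 with hu
  have hu1 : perm hn2 u = 1 := by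
    rw [hu, map_mul, hperm 0 (by omega), Equiv.swap_mul_self]
  have hlt : ∀ i, (x i : ℕ) ≤ n := fun i => (x i).2.le
  have hne : ∀ i < n, ∀ j < n, i ≠ j → (x i : ℕ) ≠ x j := fun i hi j hj hij h =>
    hij (hinj i hi j hj (Fin.ext h))
  have hneL : ∀ i, (x i : ℕ) ≠ n := fun i => (x i).2.ne
  have hL := link_perm_symm_last hn2
  have hsymm : ∀ k < n - 1, ∀ j, (link hn2 (l k)).perm.symm (x j) =
      (Equiv.swap (x k) (x (k + 1)) (x j) : Fin n) := by
    intro k hk j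
    rw [link_perm_symm_apply, hperm k hk, Equiv.symm_swap]
  have hleft : ∀ k < n - 1, (link hn2 (l k)).perm.symm (x k) = x (k + 1) := by
    intro k hk
    rw [hsymm k hk, Equiv.swap_apply_left]
  have hright : ∀ k < n - 1, (link hn2 (l k)).perm.symm (x (k + 1)) = x k := by
    intro k hk
    rw [hsymm k hk, Equiv.swap_apply_right]
  have hfix : ∀ k < n - 1, ∀ j < n, j ≠ k → j ≠ k + 1 →
      (link hn2 (l k)).perm.symm (x j) = x j := by
    intro k hk j hj h1 h2
    rw [hsymm k hk, Equiv.swap_apply_of_ne_of_ne (fun h => h1 (hinj j hj k (by omega) h))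
      (fun h => h2 (hinj j hj (k + 1) (by omega) h))]
  have hFsymm := link_lk_comm hn2 u
  have hinv : ∀ k < n - 1, k ≠ 1 → ∀ a ≤ n, ∀ b ≤ n, a ≠ b →
      (link hn2 u).lk ((link hn2 (l k)).perm.symm a) ((link hn2 (l k)).perm.symm b) =
        (link hn2 u).lk a b := by
    intro k hk hk1
    have hc : Commute (πB n (l k)) (πB n u) := by
      have : Commute (πB n (l k)) (πB n (l 0)) := by
        rcases Nat.eq_zero_or_pos k with rfl | h0
        · exact Commute.refl _
        · exact (hl.comm 0 k (by omega) hk).symm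
      rw [hu, map_mul]
      exact this.mul_right this
    obtain ⟨p, hp⟩ := exists_link_lk_symm_eq_add (by omega) hu1 hc
    obtain ⟨j, hj, hjk, hjk'⟩ : ∃ j < n, j ≠ k ∧ j ≠ k + 1 := by
      rcases Nat.eq_zero_or_pos k with rfl | h0
      · exact ⟨3, by omega, by omega, by omega⟩
      · exact ⟨0, by omega, by omega, by omega⟩
    have h := hp (x j) (hlt j) n le_rfl (hneL j)
    rw [hfix k hk j hj hjk hjk', hL] at h
    obtain rfl : p = 0 := by omega
    intro a ha b hb hab
    rw [hp a ha b hb hab, add_zero]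
  have hγ : ∀ i, 2 ≤ i → i < n → (link hn2 u).lk (x i) n = (link hn2 u).lk (x 2) n := by
    intro i hi
    induction i, hi using Nat.le_induction with
    | base => exact fun _ => rfl
    | succ k hk ih =>
      intro hk'
      have h := hinv k (by omega) (by omega) (x k) (hlt k) n le_rfl (hneL k)
      rw [hleft k (by omega), hL] at h
      rw [h, ih (by omega)]
  have hβ : (link hn2 u).lk (x 1) n = (link hn2 u).lk (x 0) n := by
    have h := hinv 0 (by omega) (by omega) (x 0) (hlt 0) n le_rfl (hneL 0)
    rwa [hleft 0 (by omega), hL] at h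
  have hδ₁ : (link hn2 u).lk (x 0) (x 3) = (link hn2 u).lk (x 0) (x 2) := by
    have h := hinv 2 (by omega) (by omega) (x 0) (hlt 0) (x 2) (hlt 2)
      (hne 0 (by omega) 2 (by omega) (by omega))
    rwa [hleft 2 (by omega), hfix 2 (by omega) 0 (by omega) (by omega) (by omega)] at h
  have hδ₂ : (link hn2 u).lk (x 0) (x 4) = (link hn2 u).lk (x 0) (x 2) := by
    have h := hinv 3 (by omega) (by omega) (x 0) (hlt 0) (x 3) (hlt 3)
      (hne 0 (by omega) 3 (by omega) (by omega))
    rwa [hleft 3 (by omega), hfix 3 (by omega) 0 (by omega) (by omega) (by omega), hδ₁] at h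
  set s := l 1 * l 0 * l 2 * l 1 with hs
  have hsapply : ∀ a, (link hn2 s).perm.symm a = (link hn2 (l 1)).perm.symm
      ((link hn2 (l 2)).perm.symm ((link hn2 (l 0)).perm.symm ((link hn2 (l 1)).perm.symm a))) := by
    intro a
    simp only [hs, map_mul, LinkData.mul_perm, LinkData.mul_perm_symm]
  have hs0 : (link hn2 s).perm.symm (x 0) = x 2 := by
    rw [hsapply, hfix 1 (by omega) 0 (by omega) (by omega) (by omega), hleft 0 (by omega),
      hfix 2 (by omega) (0 + 1) (by omega) (by omega) (by omega), hleft 1 (by omega)]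
  have hs2 : (link hn2 s).perm.symm (x 2) = x 0 := by
    rw [hsapply, hright 1 (by omega), hright 0 (by omega),
      hfix 2 (by omega) 0 (by omega) (by omega) (by omega),
      hfix 1 (by omega) 0 (by omega) (by omega) (by omega)]
  have hs4 : (link hn2 s).perm.symm (x 4) = x 4 := by
    rw [hsapply, hfix 1 (by omega) 4 (by omega) (by omega) (by omega),
      hfix 0 (by omega) 4 (by omega) (by omega) (by omega),
      hfix 2 (by omega) 4 (by omega) (by omega) (by omega),
      hfix 1 (by omega) 4 (by omega) (by omega) (by omega)]
  have hv1 : perm hn2 (s * u * s⁻¹) = 1 := by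
    rw [map_mul, map_mul, hu1, mul_one, map_inv, mul_inv_cancel]
  have hconj : πB n (s * l 0 * s⁻¹) = πB n (l 2) := by
    rw [map_mul, map_inv, mul_inv_eq_iff_eq_mul, map_mul]
    simp only [hs, map_mul]
    have h01 := hl.braid 0 (by omega)
    have h12 := hl.braid 1 (by omega)
    have h02 := (hl.comm 0 2 (by omega) (by omega)).eq
    simp only [zero_add, Nat.reduceAdd] at h01 h12 h02
    generalize πB n (l 0) = c₀ at *
    generalize πB n (l 1) = c₁ at *
    generalize πB n (l 2) = c₂ at *
    calc c₁ * c₀ * c₂ * c₁ * c₀ = c₁ * (c₀ * c₂) * c₁ * c₀ := by simp only [mul_assoc]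
      _ = c₁ * c₂ * (c₀ * c₁ * c₀) := by rw [h02]; simp only [mul_assoc]
      _ = (c₁ * c₂ * c₁) * c₀ * c₁ := by rw [h01]; simp only [mul_assoc]
      _ = c₂ * c₁ * (c₂ * c₀) * c₁ := by rw [h12]; simp only [mul_assoc]
      _ = c₂ * (c₁ * c₀ * c₂ * c₁) := by rw [← h02]; simp only [mul_assoc]
  have hcomm : Commute (πB n u) (πB n (s * u * s⁻¹)) := by
    have h1 : s * u * s⁻¹ = (s * l 0 * s⁻¹) * (s * l 0 * s⁻¹) := by rw [hu]; group
    have h2 := hl.comm 0 2 (by omega) (by omega)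
    rw [h1, map_mul _ (s * l 0 * s⁻¹), hconj, hu, map_mul]
    exact (h2.mul_left h2).mul_right (h2.mul_left h2)
  have hdet := fun {p q r : ℕ} => bracket_eq_zero (p := p) (q := q) (r := r) (by omega) hu1 hv1
    (mem_center_of_commute_πB hcomm)
  have hd₁ := hdet (x 0).2 (x 2).2 (hne 0 (by omega) 4 (by omega) (by omega))
    (hne 2 (by omega) 4 (by omega) (by omega))
  have hd₂ := hdet (x 0).2 (x 2).2 (hneL 0) (hneL 2)
  have hd₃ := hdet (x 0).2 (x 4).2 (hneL 0) (hneL 4)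
  simp only [LinkData.bracket, link_conj_lk hn2 hu1, hs0, hs2, hs4, hL] at hd₁ hd₂ hd₃
  rw [hFsymm (x 4) (x 0), hFsymm (x 2) (x 0), hFsymm (x 4) (x 2), hδ₂] at hd₁
  rw [hFsymm n (x 0), hFsymm (x 2) (x 0), hFsymm n (x 2)] at hd₂
  rw [hFsymm n (x 0), hFsymm n (x 2), hδ₂, hγ 4 (by omega) (by omega)] at hd₃
  have hε : (link hn2 u).lk (x 2) (x 4) = (link hn2 u).lk (x 0) (x 2) := by
    refine sub_eq_zero.1 (pow_eq_zero_iff two_ne_zero |>.1 ?_)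
    linear_combination hd₁
  rw [hε] at hd₃
  have hβγ : (link hn2 u).lk (x 0) n = (link hn2 u).lk (x 2) n := by
    generalize (link hn2 u).lk (x 0) n = β at *
    generalize (link hn2 u).lk (x 2) n = γ at *
    generalize (link hn2 u).lk (x 0) (x 2) = δ at *
    by_contra hne'
    have h1 : (γ - β) * (γ + β - 2 * δ) = 0 := by linear_combination hd₂
    have h2 : (γ - β) * (γ - δ) = 0 := by linear_combination hd₃
    rcases mul_eq_zero.1 h1 with h1 | h1
    · omega
    rcases mul_eq_zero.1 h2 with h2 | h2
    · omega
    · omega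
  have hall : ∀ a : Fin n, (link hn2 (l 0 * l 0)).lk a n = (link hn2 u).lk (x 2) n := by
    intro a
    obtain ⟨i, hi, rfl⟩ := hx a
    match i, hi with
    | 0, _ => exact hβγ
    | 1, _ => exact hβ.trans hβγ
    | i + 2, hi => exact hγ (i + 2) (by omega) hi
  have hfin := four_mul_weight_of_const hn2 hall
  have h2 : (link hn2 u).lk (x 2) n = 2 * (link hn2 (l 0)).lk (x 2) n := by
    rw [hu, map_mul, LinkData.mul_lk, hL,
      hfix 0 (by omega) 2 (by omega) (by omega) (by omega), two_mul]
  obtain ⟨w, hw⟩ := even_link_lk_last hn2 (l 0) (x 2)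
  rw [h2, hw] at hfin
  exact ⟨w, by linarith⟩

end ArtinB

namespace ArtinB

theorem dvd_weight_of_exotic (hn : 2 ≤ 6) {l : ℕ → ArtinB 6}
    (hl : IsBraidSeq (6 - 1) fun i => πB 6 (l i))
    (h : (perm hn (l 0)).IsExotic (perm hn (l 2 * l 3))) :
    6 ∣ (weight hn 0 1 (l 0)).toAdd ∨ Even (weight hn 1 (1 - 6) (l 0)).toAdd := by
  obtain ⟨-, hc, hfree, hd, -, x, hx⟩ := h
  set u := l 0 * l 0 with hu
  have hu1 : perm hn u = 1 := by rw [hu, map_mul, hc]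
  have hinvc : ∀ a : Fin 6, (link hn u).lk (perm hn (l 0) a : Fin 6) 6 = (link hn u).lk a 6 := by
    intro a
    have h1 := link_conj_lk hn hu1 (l 0) (perm hn (l 0) a : Fin 6) 6
    rw [link_perm_symm_apply, Equiv.symm_apply_apply, link_perm_symm_last, hu] at h1
    rw [← h1, hu]
    simp only [mul_assoc, mul_inv_cancel, mul_one]
  have hinvd : ∀ a : Fin 6, (link hn u).lk (perm hn (l 2 * l 3) a : Fin 6) 6 =
      (link hn u).lk a 6 := by
    have hcomm : Commute (πB 6 (l 2 * l 3)) (πB 6 u) := by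
      have h1 := ((hl.comm 0 2 (by omega) (by omega)).mul_right
        (hl.comm 0 3 (by omega) (by omega))).symm
      rw [map_mul, hu, map_mul]
      exact h1.mul_right h1
    obtain ⟨p, hp⟩ := exists_link_lk_symm_eq_add (by omega) hu1 hcomm
    have h1 : ∀ a : Fin 6, (link hn u).lk a 6 =
        (link hn u).lk (perm hn (l 2 * l 3) a : Fin 6) 6 + p := by
      intro a
      have h2 := hp (perm hn (l 2 * l 3) a : Fin 6) (Fin.is_lt _).le 6 le_rfl (Fin.is_lt _).ne
      rwa [link_perm_symm_apply, Equiv.symm_apply_apply, link_perm_symm_last] at h2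
    have hp0 : p = 0 := by
      have h2 := h1 x
      rw [h1 (perm hn (l 2 * l 3) x), h1 (perm hn (l 2 * l 3) (perm hn (l 2 * l 3) x))] at h2
      have h3 : perm hn (l 2 * l 3) (perm hn (l 2 * l 3) (perm hn (l 2 * l 3) x)) = x :=
        DFunLike.congr_fun hd x
      rw [h3] at h2
      omega
    intro a
    rw [h1 a, hp0, add_zero]
  have hall : ∀ a : Fin 6, (link hn (l 0 * l 0)).lk a 6 = (link hn u).lk x 6 := by
    intro a
    have := hx a
    simp only [List.mem_cons, List.not_mem_nil, or_false] at this
    rcases this with rfl | rfl | rfl | rfl | rfl | rfl <;> simp only [← hu, hinvc, hinvd]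
  have h4 := four_mul_weight_of_const hn hall
  obtain ⟨w, hw⟩ := even_link_lk_last hn (l 0) x
  obtain ⟨w', hw'⟩ := even_link_lk_last hn (l 0) ((perm hn (l 0)).symm x)
  have h5 : (link hn u).lk x 6 = 2 * (w + w') := by
    rw [hu, map_mul, LinkData.mul_lk, link_perm_symm_apply, link_perm_symm_last, hw, hw']
    ring
  rw [h5] at h4
  have hsign : Equiv.Perm.sign (perm hn (l 0)) = -1 := by
    rw [Equiv.Perm.sign_of_pow_two_eq_one (by rw [pow_two, hc])]
    have : Fintype.card (Function.fixedPoints (perm hn (l 0))) = 0 :=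
      Fintype.card_eq_zero_iff.2 ⟨fun y => hfree y y.2⟩
    rw [this]
    rfl
  rw [sign_perm] at hsign
  have hodd : Odd (weight hn 1 0 (l 0)).toAdd := by
    rw [← Int.not_even_iff_odd]
    intro he
    rw [he.neg_one_zpow] at hsign
    exact absurd hsign (by decide)
  have hτ := weight_eq hn 1 (1 - 6) (l 0)
  obtain ⟨k, hk⟩ := hodd
  rcases Int.even_or_odd (w + w') with ⟨m, hm⟩ | ⟨m, hm⟩
  · left
    exact ⟨m, by push_cast at h4; linarith⟩
  · right
    exact ⟨k - 15 * m - 7, by push_cast at h4; linarith⟩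

end ArtinB

namespace ArtinB

variable {n : ℕ}

theorem coordinates_or_exotic (hn : 5 ≤ n) {f : ArtinB n →* Equiv.Perm (Fin n)}
    (hf : Function.Surjective f) :
    (∃ x : ℕ → Fin n, (∀ y, ∃ i < n, x i = y) ∧ (∀ i < n, ∀ j < n, x i = x j → i = j) ∧
      ∀ i < n - 1, f (rB n (i + 1)) = Equiv.swap (x i) (x (i + 1))) ∨
    (n = 6 ∧ Equiv.Perm.IsExotic (f (rB n 1)) (f (rB n 3) * f (rB n 4))) := by
  have hn2 : 2 ≤ n := by omega
  have hbraid : IsBraidSeq (n - 1) fun i => f (rB n (i + 1)) :=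
    (isArtinBSeq_rB hn2).isBraidSeq.map f
  have hr : ∀ i, i + 1 < n - 1 → f (ρB n) * f (rB n (i + 1)) = f (rB n (i + 1 + 1)) * f (ρB n) := by
    intro i hi
    rw [← map_mul, ρB_mul_rB hn2 hi, map_mul]
  have hgen : ∀ K : Subgroup (Equiv.Perm (Fin n)), (∀ i < n - 1, f (rB n (i + 1)) ∈ K) →
      f (ρB n) ∈ K → ∀ σ, σ ∈ K := by
    intro K h1 h2 σ
    obtain ⟨g, rfl⟩ := hf σ
    have : K.comap f = ⊤ := ArtinB.eq_top_of_mem hn2 h1 h2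
    exact (this ▸ Subgroup.mem_top g : g ∈ K.comap f)
  have h01 : f (rB n (0 + 1)) ≠ f (rB n (1 + 1)) := by
    intro h01
    have hall : ∀ j < n - 1, f (rB n (j + 1)) = f (rB n (0 + 1)) := fun j hj =>
      hbraid.eq_of_eq_succ (i := 0) (by omega) hj h01
    have hρ : Commute (f (ρB n)) (f (rB n (0 + 1))) := by
      have h := hr 0 (by omega)
      rwa [hall (0 + 1) (by omega)] at h
    have hcenter : ∀ σ, Commute (f (rB n (0 + 1))) σ := fun σ =>
      (Subgroup.mem_centralizer_singleton_iff.1 <| hgen (Subgroup.centralizer {f (rB n (0 + 1))})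
        (fun i hi => by rw [hall i hi]; exact Subgroup.mem_centralizer_singleton_iff.2 rfl)
        (Subgroup.mem_centralizer_singleton_iff.2 hρ.eq) σ).symm
    have hcenter' : ∀ σ, Commute (f (ρB n)) σ := fun σ =>
      (Subgroup.mem_centralizer_singleton_iff.1 <| hgen (Subgroup.centralizer {f (ρB n)})
        (fun i hi => by
          rw [hall i hi]; exact Subgroup.mem_centralizer_singleton_iff.2 hρ.symm.eq)
        (Subgroup.mem_centralizer_singleton_iff.2 rfl) σ).symm
    have hab : ∀ σ τ : Equiv.Perm (Fin n), σ * τ = τ * σ := fun σ τ =>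
      Subgroup.mem_centralizer_singleton_iff.1 <| hgen (Subgroup.centralizer {τ})
        (fun i hi => by
          rw [hall i hi]; exact Subgroup.mem_centralizer_singleton_iff.2 (hcenter τ).eq)
        (Subgroup.mem_centralizer_singleton_iff.2 (hcenter' τ).eq) σ
    have h := DFunLike.congr_fun (hab (Equiv.swap ⟨0, by omega⟩ ⟨1, by omega⟩)
      (Equiv.swap ⟨1, by omega⟩ ⟨2, by omega⟩)) ⟨0, by omega⟩
    simp [Equiv.swap_apply_def] at h
  have htr : ∀ p : Fin n → Prop, (∃ x, p x) → (∀ x, p x → p (f (ρB n) x)) →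
      (∀ i < n - 1, ∀ x, p x → p (f (rB n (i + 1)) x)) → ∀ x, p x := by
    rintro p ⟨y, hy⟩ h1 h2 x
    let K : Subgroup (Equiv.Perm (Fin n)) :=
      { carrier := {σ | ∀ x, p (σ x) ↔ p x}
        one_mem' := fun _ => Iff.rfl
        mul_mem' := fun {σ τ} hσ hτ x => (hσ (τ x)).trans (hτ x)
        inv_mem' := fun {σ} hσ x => by
          rw [← hσ, Equiv.Perm.coe_inv, Equiv.apply_symm_apply] }
    have hK : ∀ σ ∈ K, ∀ x, p (σ x) ↔ p x := fun σ h => h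
    have h3 := hK _ (hgen K (fun i hi x => (Equiv.Perm.mem_iff_of_imp (h2 i hi) x))
      (fun x => Equiv.Perm.mem_iff_of_imp h1 x) (Equiv.swap y x)) y
    rw [Equiv.swap_apply_left] at h3
    exact h3.2 hy
  rcases hbraid.isSwap_or_isExotic hn (Fintype.card_fin n) hr h01 htr with h | h
  · exact Or.inl (hbraid.exists_coordinates hn (Fintype.card_fin n) hr h01 htr h)
  · exact Or.inr h

/-- The permutation of the `n` free strands, on the quotient by the center. -/
def permBar (hn : 3 ≤ n) : AbarB n →* Equiv.Perm (Fin n) :=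
  QuotientGroup.lift _ (perm (by omega)) fun _ hz => perm_eq_one_of_mem_center hn hz

/-- The exponent sum sending `t̄_i` to `1` and `ρ̄` to `0`. -/
def weightBar (hn : 3 ≤ n) : AbarB n →* Multiplicative ℤ :=
  QuotientGroup.lift _ (weight (by omega) 1 (1 - n)) fun _ hz => weight_eq_zero_of_mem_center hn hz

theorem weightBar_πB (hn : 3 ≤ n) (g : ArtinB n) :
    weightBar hn (πB n g) = weight (by omega) 1 (1 - n) g := rfl

theorem closure_tbar : Subgroup.closure {x | ∃ i < n, x = tbar n i} =
    (tSubgroup n).map (πB n) := by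
  rw [tSubgroup, MonoidHom.map_closure]
  congr 1
  ext x
  constructor
  · rintro ⟨i, hi, rfl⟩; exact ⟨_, ⟨i, hi, rfl⟩, rfl⟩
  · rintro ⟨_, ⟨i, hi, rfl⟩, rfl⟩; exact ⟨i, hi, rfl⟩

theorem weight_tB_one (hn : 2 ≤ n) (u v : ℤ) :
    weight hn u v (tB n 1) = Multiplicative.ofAdd u := by
  rw [tB_eq_rB one_pos (by omega)]
  exact weight_rB hn u v (i := 0) (by omega)

theorem weight_eq_one_of_mem_tSubgroup (hn : 2 ≤ n) {g : ArtinB n} (hg : g ∈ tSubgroup n) :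
    weight hn 0 1 g = 1 := by
  have : tSubgroup n ≤ (weight hn 0 1).ker := by
    rw [tSubgroup, Subgroup.closure_le]
    rintro _ ⟨i, hi, rfl⟩
    have h := (weight hn 0 1).map_isConj (isConj_tB hn hi)
    rw [isConj_iff_eq, weight_tB_one] at h
    exact h.symm
  exact this hg

theorem πB_mem_closure_iff (hn : 3 ≤ n) (g : ArtinB n) :
    πB n g ∈ Subgroup.closure {x | ∃ i < n, x = tbar n i} ↔
      (n : ℤ) ∣ (weight (by omega) 0 1 g).toAdd := by
  rw [closure_tbar]
  have hn2 : 2 ≤ n := by omega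
  constructor
  · rintro ⟨h, hh, hgh⟩
    have hz : h⁻¹ * g ∈ Subgroup.center (ArtinB n) := QuotientGroup.eq.1 hgh
    have h1 := dvd_weight_last_of_mem_center hn hz
    rwa [map_mul, map_inv, weight_eq_one_of_mem_tSubgroup hn2 hh, inv_one, one_mul] at h1
  · obtain ⟨h, hh, k, rfl⟩ := exists_mem_tSubgroup_mul_zpow hn2 g
    rw [map_mul, weight_eq_one_of_mem_tSubgroup hn2 hh, one_mul, map_zpow, toAdd_zpow, weight_ρB]
    rintro ⟨m, hm⟩
    have hk : k = n * m := by simpa using hm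
    refine ⟨h, hh, QuotientGroup.eq.2 ?_⟩
    rw [inv_mul_cancel_left, hk, zpow_mul, zpow_natCast]
    exact Subgroup.zpow_mem _ (ρB_pow_mem_center hn2) m

theorem dvd_weight_of_mulAut (hn : 5 ≤ n) (φ : MulAut (AbarB n)) {g : ArtinB n}
    (hg : πB n g = φ (tbar n 1)) : (n : ℤ) ∣ (weight (by omega) 0 1 g).toAdd := by
  have hn2 : 2 ≤ n := by omega
  have hn3 : 3 ≤ n := by omega
  have hπ : Function.Surjective (πB n) := QuotientGroup.mk'_surjective _
  have hφπ : Function.Surjective (φ.toMonoidHom.comp (πB n)) := φ.surjective.comp hπ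
  let f : ArtinB n →* Equiv.Perm (Fin n) := (permBar hn3).comp (φ.toMonoidHom.comp (πB n))
  have hf : Function.Surjective f := by
    intro σ
    obtain ⟨w, hw⟩ := perm_surjective hn2 σ
    obtain ⟨v, hv⟩ := hφπ (πB n w)
    exact ⟨v, (congrArg (permBar hn3) hv).trans hw⟩
  choose l' hl' using fun i => hπ (φ (πB n (rB n (i + 1))))
  rw [tbar, tB_eq_rB one_pos (by omega)] at hg
  obtain ⟨l, hl, rfl⟩ : ∃ l : ℕ → ArtinB n, (∀ i, πB n (l i) = φ (πB n (rB n (i + 1)))) ∧ l 0 = g :=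
    ⟨fun i => if i = 0 then g else l' i, fun i => by
      by_cases hi : i = 0
      · simp [hi, hg]
      · simp [hi, hl'], by simp⟩
  have hperm : ∀ i, perm hn2 (l i) = f (rB n (i + 1)) := fun i => congrArg (permBar hn3) (hl i)
  have hbraid : IsBraidSeq (n - 1) fun i => πB n (l i) := by
    simp only [hl]
    exact ((isArtinBSeq_rB hn2).isBraidSeq.map (πB n)).map φ.toMonoidHom
  rcases coordinates_or_exotic hn hf with ⟨x, hx, hinj, hc⟩ | ⟨rfl, hex⟩
  · exact dvd_weight_of_swap hn hbraid hx hinj fun i hi => by rw [hperm, hc i hi]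
  · rcases dvd_weight_of_exotic hn2 hbraid (by rwa [map_mul, hperm, hperm, hperm]) with h | h
    · exact h
    · exfalso
      let τ : ArtinB 6 →* Multiplicative ℤ :=
        (weightBar hn3).comp (φ.toMonoidHom.comp (πB 6))
      have hτ : ∀ a, Even (τ a).toAdd := by
        intro a
        let K : Subgroup (ArtinB 6) :=
          { carrier := {a | Even (τ a).toAdd}
            one_mem' := by simp
            mul_mem' := fun {a b} ha hb => by
              simp only [Set.mem_ofPred_eq, map_mul, toAdd_mul] at *
              exact ha.add hb
            inv_mem' := fun {a} ha => by
              simp only [Set.mem_ofPred_eq, map_inv, toAdd_inv] at *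
              exact ha.neg }
        have hK : K = ⊤ := by
          refine ArtinB.eq_top_of_mem hn2 (fun i hi => ?_) ?_
          · have h1 := τ.map_isConj
              ((isArtinBSeq_rB hn2).isBraidSeq.isConj (i := 0) (j := i) (by omega) hi)
            rw [isConj_iff_eq] at h1
            change Even (τ (rB 6 (i + 1))).toAdd
            rw [← h1]
            have h2 : τ (rB 6 (0 + 1)) = weight hn2 1 (1 - 6) (l 0) :=
              congrArg (weightBar hn3) (hl 0).symm
            rwa [h2]
          · change Even (τ (ρB 6)).toAdd
            have h1 : τ (ρB 6 ^ 6) = 1 := by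
              have : πB 6 (ρB 6 ^ 6) = 1 :=
                (QuotientGroup.eq_one_iff _).2 (ρB_pow_mem_center hn2)
              change weightBar hn3 (φ (πB 6 (ρB 6 ^ 6))) = 1
              rw [this, map_one, map_one]
            have h2 := congrArg Multiplicative.toAdd h1
            rw [map_pow, toAdd_pow, toAdd_one] at h2
            have h3 : (τ (ρB 6)).toAdd = 0 := by simpa using h2
            rw [h3]
            exact Even.zero
        exact (hK ▸ Subgroup.mem_top a : a ∈ K)
      obtain ⟨v, hv⟩ := hφπ (πB 6 (rB 6 (0 + 1)))
      have h1 : τ v = weight hn2 1 (1 - 6) (rB 6 (0 + 1)) := congrArg (weightBar hn3) hv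
      have h2 := hτ v
      rw [h1, weight_rB hn2 _ _ (by omega), toAdd_ofAdd] at h2
      exact absurd h2 (by decide)

theorem map_closure_tbar_le (hn : 5 ≤ n) (φ : MulAut (AbarB n)) :
    Subgroup.map φ.toMonoidHom (Subgroup.closure {x | ∃ i < n, x = tbar n i}) ≤
      Subgroup.closure {x | ∃ i < n, x = tbar n i} := by
  rw [MonoidHom.map_closure, Subgroup.closure_le]
  rintro _ ⟨_, ⟨i, hi, rfl⟩, rfl⟩
  obtain ⟨g, hg⟩ := QuotientGroup.mk'_surjective (Subgroup.center (ArtinB n)) (φ (tbar n 1))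
  obtain ⟨g', hg'⟩ := QuotientGroup.mk'_surjective (Subgroup.center (ArtinB n)) (φ (tbar n i))
  have hconj : IsConj (φ (tbar n 1)) (φ (tbar n i)) :=
    φ.toMonoidHom.map_isConj ((πB n).map_isConj (isConj_tB (by omega) hi))
  have := tSubgroup_normal (n := n) (by omega)
  have hnormal : (Subgroup.closure {x | ∃ i < n, x = tbar n i}).Normal := by
    rw [closure_tbar]
    exact this.map _ (QuotientGroup.mk'_surjective _)
  have h1 : φ (tbar n 1) ∈ Subgroup.closure {x | ∃ i < n, x = tbar n i} := by
    rw [← hg]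
    exact (πB_mem_closure_iff (by omega) g).2 (dvd_weight_of_mulAut hn φ hg)
  obtain ⟨c, hc⟩ := isConj_iff.1 hconj
  change φ (tbar n i) ∈ Subgroup.closure {x | ∃ i < n, x = tbar n i}
  rw [← hc]
  exact hnormal.conj_mem _ h1 c

end ArtinB

/-- the subgroup of `Ā = A[Bₙ]/Z(A[Bₙ])` generated by
`t̄_0, …, t̄_{n-1}` is characteristic but not fully characteristic, for `n ≥ 5`. -/
theorem tilde_A_characteristic_not_fully (n : ℕ) (hn : 5 ≤ n) :
    (∀ φ : MulAut (AbarB n),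
      Subgroup.map φ.toMonoidHom (Subgroup.closure {x | ∃ i < n, x = tbar n i}) =
        Subgroup.closure {x | ∃ i < n, x = tbar n i}) ∧
    ∃ ψ : AbarB n →* AbarB n,
      ¬ Subgroup.map ψ (Subgroup.closure {x | ∃ i < n, x = tbar n i}) ≤
        Subgroup.closure {x | ∃ i < n, x = tbar n i} := by
  refine ⟨fun φ => le_antisymm (ArtinB.map_closure_tbar_le hn φ) fun x hx => ?_, ?_⟩
  · exact ⟨φ⁻¹ x, ArtinB.map_closure_tbar_le hn φ⁻¹ ⟨x, hx, rfl⟩, φ.apply_symm_apply x⟩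
  · refine ⟨(zpowersHom _ (ρbar n)).comp (ArtinB.weightBar (by omega)), fun h => ?_⟩
    have h1 := h ⟨tbar n 1, Subgroup.subset_closure ⟨1, by omega, rfl⟩, rfl⟩
    have h2 : ArtinB.weightBar (by omega) (tbar n 1) = Multiplicative.ofAdd 1 := by
      rw [tbar, ArtinB.weightBar_πB, ArtinB.weight_tB_one]
    rw [MonoidHom.comp_apply, h2, zpowersHom_apply, toAdd_ofAdd, zpow_one, ρbar,
      ArtinB.πB_mem_closure_iff (by omega), ArtinB.weight_ρB, mul_zero, zero_add] at h1
    have := Int.le_of_dvd one_pos h1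
    omega
end
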